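/- arXiv:2311.05116 — 6 statements merged into one kernel-verified Lean document; each statement's English description precedes it below -/
import Mathlib

section
/- Let N ≥ 1, d ≥ 1 and k ≥ 1 be integers and let f_1, …, f_k be real polynomials in N variables, each of total degree at most d. Then the common zero set V = {x ∈ ℝ^N : f_1(x) = ⋯ = f_k(x) = 0}, equipped with the subspace topology from ℝ^N, has at most d·(2d−1)^{N−1} connected components. -/
open MvPolynomial in
lemma pomt_interp {N B : ℕ} (z : Fin (B+1) → (Fin N → ℝ)) (hz : Function.Injective z)
    (y : Fin (B+1) → ℝ) : ∃ w ∈ restrictTotalDegree (Fin N) ℝ B, ∀ j, eval (z j) w = y j := by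
  classical
  have hc : ∀ i j, ∃ l : MvPolynomial (Fin N) ℝ, l.totalDegree ≤ 1 ∧ eval (z i) l = 0 ∧
      (i ≠ j → eval (z j) l ≠ 0) := fun i j => by
    by_cases h : i = j
    · exact ⟨0, by simp, by simp, fun h' => absurd h h'⟩
    · have : ∃ c, z i c ≠ z j c := by
        by_contra! h'
        exact h (hz (funext h'))
      obtain ⟨c, hc⟩ := this
      refine ⟨X c - C (z i c), (totalDegree_sub_C_le _ _).trans (by simp), by simp, fun _ => ?_⟩
      simpa [sub_eq_zero] using hc.symm
  choose l hl1 hl2 hl3 using hc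
  let Lp : Fin (B+1) → MvPolynomial (Fin N) ℝ := fun j => ∏ i ∈ Finset.univ.erase j, l i j
  have hL0 : ∀ i j, i ≠ j → eval (z i) (Lp j) = 0 := fun i j h => by
    simp only [Lp, map_prod]
    exact Finset.prod_eq_zero (i := i) (by simp [h]) (hl2 i j)
  have hL1 : ∀ j, eval (z j) (Lp j) ≠ 0 := fun j => by
    simp only [Lp, map_prod]
    exact Finset.prod_ne_zero_iff.2 fun i hi => hl3 i j (by simpa using hi)
  have hdeg : ∀ j, Lp j ∈ restrictTotalDegree (Fin N) ℝ B := fun j => by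
    rw [mem_restrictTotalDegree]
    refine (totalDegree_finsetProd _ _).trans ?_
    exact (Finset.sum_le_card_nsmul _ _ 1 fun i _ => hl1 i j).trans (by simp)
  refine ⟨∑ j, (y j / eval (z j) (Lp j)) • Lp j,
    Submodule.sum_mem _ fun j _ => Submodule.smul_mem _ _ (hdeg j), fun j => ?_⟩
  rw [map_sum, Finset.sum_eq_single j]
  · simp [smul_eval, hL1 j]
  · intro i _ h
    simp [smul_eval, hL0 j i h.symm]
  · simp

open MvPolynomial in
lemma pomt_bezout {N : ℕ} (e : Fin N → ℕ) (f : Fin N → MvPolynomial (Fin N) ℝ)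
    (hf : ∀ i, (f i).totalDegree ≤ e i) :
    {ε : ℝ | ∃ z : Fin ((∏ i, e i) + 1) → (Fin N → ℝ), Function.Injective z ∧
      ∀ j i, ε * z j i ^ e i + eval (z j) (f i) = 0}.Finite := by
  classical
  set B := ∏ i, e i with hB
  let Am : (Fin N →₀ ℕ) → MvPolynomial (Fin N) ℝ := fun a =>
    if h : ∃ i, e i ≤ a i then
      monomial (a - Finsupp.single h.choose (e h.choose)) 1 * f h.choose else 0
  let A : MvPolynomial (Fin N) ℝ →ₗ[ℝ] MvPolynomial (Fin N) ℝ :=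
    (basisMonomials (Fin N) ℝ).constr ℝ Am
  have hA : ∀ a, A (monomial a 1) = Am a := fun a => by
    have := (basisMonomials (Fin N) ℝ).constr_basis ℝ Am a
    simpa using this
  let W := restrictTotalDegree (Fin N) ℝ B
  have hAm : ∀ a : Fin N →₀ ℕ, (a.degree ≤ B) → Am a ∈ W := fun a ha => by
    simp only [Am]
    split_ifs with h
    · have h1 := h.choose_spec
      set i := h.choose
      rw [mem_restrictTotalDegree]
      refine (totalDegree_mul _ _).trans ?_
      have h2 : Finsupp.single i (e i) ≤ a := by simpa using h1
      have h3 := congrArg Finsupp.degree (tsub_add_cancel_of_le h2)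
      rw [map_add, Finsupp.degree_single] at h3
      have h4 := hf i
      have h5 : (monomial (a - Finsupp.single i (e i)) (1:ℝ)).totalDegree ≤
        (a - Finsupp.single i (e i)).degree := by
        rw [totalDegree_monomial _ one_ne_zero]; rfl
      omega
    · exact W.zero_mem
  have hrep : ∀ w : MvPolynomial (Fin N) ℝ, w = ∑ a ∈ w.support, coeff a w • monomial a 1 := by
    intro w
    conv_lhs => rw [as_sum w]
    simp [smul_monomial]
  have hAW : ∀ w ∈ W, A w ∈ W := fun w hw => by
    rw [mem_restrictTotalDegree] at hw
    rw [hrep w, map_sum]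
    refine Submodule.sum_mem _ fun a ha => ?_
    rw [map_smul, hA]
    exact W.smul_mem _ (hAm a ((le_totalDegree ha).trans hw))
  let A' : Module.End ℝ W := A.restrict hAW
  refine ((Module.End.finite_hasEigenvalue A').image (fun x => -x)).subset ?_
  rintro ε ⟨z, hz, hzero⟩
  refine ⟨-ε, ?_, by simp⟩
  by_contra hne
  have hinj : Function.Injective (A' + ε • (1 : Module.End ℝ W)) := by
    rw [← LinearMap.ker_eq_bot, LinearMap.ker_eq_bot']
    intro w hw
    by_contra hw0
    refine hne (Module.End.hasEigenvalue_of_hasEigenvector (x := w) ⟨?_, hw0⟩)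
    rw [Module.End.mem_eigenspace_iff]
    simp only [LinearMap.add_apply, LinearMap.smul_apply, Module.End.one_apply] at hw
    rw [neg_smul]; exact eq_neg_of_add_eq_zero_left hw
  have hsurj := LinearMap.surjective_of_injective hinj
  let ev : MvPolynomial (Fin N) ℝ →ₗ[ℝ] (Fin (B+1) → ℝ) :=
    LinearMap.pi fun j => (aeval (z j)).toLinearMap
  have hev : ∀ p j, ev p j = eval (z j) p := fun p j => by simp [ev, aeval_eq_eval]
  let box : Finset (Fin N → ℕ) := Fintype.piFinset fun i => Finset.range (e i)
  let S : Finset (Fin (B+1) → ℝ) :=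
    box.image fun a => ev (monomial (Finsupp.equivFunOnFinite.symm a) 1)
  have hS : S.card ≤ B := Finset.card_image_le.trans (by simp [box, hB])
  have key : ∀ a, ev (A (monomial a 1) + ε • monomial a 1) ∈ Submodule.span ℝ (S : Set _) := by
    intro a
    rw [hA]
    simp only [Am]
    split_ifs with h
    · have h1 := h.choose_spec
      set i := h.choose
      have h2 : Finsupp.single i (e i) ≤ a := by simpa using h1
      have h3 : (monomial a (1:ℝ)) = monomial (a - Finsupp.single i (e i)) 1 * X i ^ e i := by
        rw [X_pow_eq_monomial, monomial_mul, tsub_add_cancel_of_le h2, one_mul]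
      have : ev (monomial (a - Finsupp.single i (e i)) 1 * f i + ε • monomial a 1) = 0 := by
        ext j
        rw [hev, h3, map_add, smul_eval, map_mul, map_mul, map_pow, eval_X]
        have := hzero j i
        simp only [Pi.zero_apply]
        linear_combination (eval (z j) (monomial (a - Finsupp.single i (e i)) 1)) * this
      rw [this]; exact Submodule.zero_mem _
    · rw [zero_add, map_smul]
      refine Submodule.smul_mem _ _ (Submodule.subset_span ?_)
      push Not at h
      refine Finset.mem_coe.2 (Finset.mem_image.2 ⟨a, ?_, ?_⟩)
      · simpa [box] using h
      · congr 2; ext; simp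
  have hspan : Submodule.span ℝ (S : Set (Fin (B+1) → ℝ)) = ⊤ := by
    rw [eq_top_iff]
    intro y _
    obtain ⟨w, hw, hwy⟩ := pomt_interp z hz y
    obtain ⟨v, hv⟩ := hsurj ⟨w, hw⟩
    have hv' : A v + ε • (v : MvPolynomial (Fin N) ℝ) = w := congrArg Subtype.val hv
    have : y = ev w := by ext j; rw [hev, hwy]
    rw [this, ← hv']
    have : A v + ε • (v : MvPolynomial (Fin N) ℝ) =
        ∑ a ∈ v.1.support, coeff a v.1 • (A (monomial a 1) + ε • monomial a 1) := by
      conv_lhs => rw [hrep v.1]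
      rw [map_sum, Finset.smul_sum, ← Finset.sum_add_distrib]
      refine Finset.sum_congr rfl fun a _ => ?_
      rw [map_smul, smul_add, smul_comm]
    rw [this, map_sum]
    refine Submodule.sum_mem _ fun a _ => ?_
    rw [map_smul]
    exact Submodule.smul_mem _ _ (key a)
  have h1 := finrank_span_finset_le_card (R := ℝ) S
  rw [Set.finrank, hspan, finrank_top, Module.finrank_fin_fun] at h1
  omega
open MvPolynomial in
lemma pomt_pderiv_deg {N m : ℕ} (p : MvPolynomial (Fin N) ℝ) (i : Fin N)
    (h : p.totalDegree ≤ m + 1) : (pderiv i p).totalDegree ≤ m := by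
  rw [← mem_restrictTotalDegree, as_sum p, map_sum]
  refine Submodule.sum_mem _ fun s hs => ?_
  have h1 := (le_totalDegree hs).trans h
  rw [pderiv_monomial, mem_restrictTotalDegree]
  by_cases h0 : s i = 0
  · simp [h0]
  · refine (totalDegree_monomial_le _ _).trans ?_
    have h2 : Finsupp.single i 1 ≤ s := by simpa using Nat.one_le_iff_ne_zero.2 h0
    have h3 := congrArg Finsupp.degree (tsub_add_cancel_of_le h2)
    rw [map_add, Finsupp.degree_single] at h3
    change Finsupp.degree s ≤ _ at h1
    change Finsupp.degree _ ≤ _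
    omega

open MvPolynomial in
lemma pomt_hasDerivAt {N : ℕ} (G : MvPolynomial (Fin N) ℝ) (z v : Fin N → ℝ) :
    HasDerivAt (fun t : ℝ => eval (z + t • v) G) (∑ i, v i * eval z (pderiv i G)) 0 := by
  induction G using MvPolynomial.induction_on with
  | C a => simpa using hasDerivAt_const (0:ℝ) a
  | add p q hp hq => 
    simp only [map_add, mul_add, Finset.sum_add_distrib]
    exact hp.add hq
  | mul_X p j hp =>
    have h1 : HasDerivAt (fun t : ℝ => z j + t * v j) (v j) 0 := by
      simpa using ((hasDerivAt_id (0:ℝ)).mul_const (v j)).const_add (z j)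
    have h2 := hp.mul h1
    simp only [map_mul, eval_X, Pi.add_apply, Pi.smul_apply, smul_eq_mul]
    refine HasDerivAt.congr_deriv (f := fun t : ℝ => eval (z + t • v) p * (z j + t * v j)) h2 ?_
    symm
    simp only [Derivation.leibniz, pderiv_X, smul_eq_mul, map_add, map_mul, eval_X, zero_smul,
      add_zero, zero_mul, mul_add, Finset.sum_add_distrib]
    rw [Finset.sum_eq_single j, Finset.sum_mul, add_comm]
    · congr 1
      · exact Finset.sum_congr rfl fun i _ => by ring
      · simp; ring
    · intro b _ hb; simp [Pi.single_apply, hb.symm]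
    · simp

lemma pomt_iInter {X : Type*} [TopologicalSpace X] [T2Space X] (K : ℕ → Set X)
    (hanti : Antitone K) (hc : ∀ n, IsCompact (K n)) (hp : ∀ n, IsPreconnected (K n)) :
    IsPreconnected (⋂ n, K n) := by
  rw [isPreconnected_closed_iff]
  intro t t' ht ht' hcov ⟨a, ha, hat⟩ ⟨b, hb, hbt⟩
  by_contra hne
  have hK : IsCompact (⋂ n, K n) := 
    (hc 0).of_isClosed_subset (isClosed_iInter fun n => (hc n).isClosed) (Set.iInter_subset _ 0)
  obtain ⟨u, v, hu, hv, hKu, hKv, huv⟩ := SeparatedNhds.of_isCompact_isCompact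
    (hK.inter_right ht) (hK.inter_right ht') (by
      rw [Set.disjoint_iff]
      rintro x ⟨⟨h1, h2⟩, h3, h4⟩
      exact hne ⟨x, h1, h2, h4⟩)
  obtain ⟨n, hn⟩ := exists_subset_nhds_of_isCompact (U := u ∪ v)
    (directed_of_isDirected_le fun i j h => hanti h) hc (by
      intro x hx
      refine (hu.union hv).mem_nhds ?_
      rcases hcov hx with h | h
      · exact Or.inl (hKu ⟨hx, h⟩)
      · exact Or.inr (hKv ⟨hx, h⟩))
  obtain ⟨x, _, h1, h2⟩ := hp n u v hu hv hn ⟨a, Set.mem_iInter.1 ha n, hKu ⟨ha, hat⟩⟩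
    ⟨b, Set.mem_iInter.1 hb n, hKv ⟨hb, hbt⟩⟩
  exact Set.disjoint_left.1 huv h1 h2

lemma pomt_comp_closed {X : Type*} [TopologicalSpace X] {S : Set X} (hS : IsClosed S) (x : X) :
    IsClosed (connectedComponentIn S x) := by
  by_cases h : x ∈ S
  · rw [connectedComponentIn_eq_image h]
    exact hS.isClosedEmbedding_subtypeVal.isClosedMap _ isClosed_connectedComponent
  · rw [connectedComponentIn_eq_empty h]; exact isClosed_empty

lemma pomt_sep {X : Type*} [TopologicalSpace X] [T2Space X] (K : ℕ → Set X)
    (hanti : Antitone K) (hc : ∀ n, IsCompact (K n)) (V : Set X) (hV : ⋂ n, K n ⊆ V) (p q : X)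
    (hpK : ∀ n, p ∈ K n)
    (h : ∀ n, q ∈ connectedComponentIn (K n) p) : q ∈ connectedComponentIn V p := by
  have := pomt_iInter (fun n => connectedComponentIn (K n) p)
    (fun i j hij => connectedComponentIn_mono _ (hanti hij))
    (fun n => (hc n).of_isClosed_subset (pomt_comp_closed (hc n).isClosed p)
      (connectedComponentIn_subset _ _))
    (fun n => isPreconnected_connectedComponentIn)
  refine this.subset_connectedComponentIn (x := p)
    (Set.mem_iInter.2 fun n => mem_connectedComponentIn (hpK n)) ?_ (Set.mem_iInter.2 h)
  exact (Set.iInter_mono fun n => connectedComponentIn_subset _ _).trans hV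

open MvPolynomial Filter Topology in
lemma pomt_move {N : ℕ} (G : MvPolynomial (Fin N) ℝ) (p z v : Fin N → ℝ)
    (hz : z ∈ connectedComponentIn {x | eval x G ≤ 0} p)
    (hv : ∀ᶠ t in 𝓝[>] (0:ℝ), eval (z + t • v) G ≤ 0) :
    ∃ t > (0:ℝ), z + t • v ∈ connectedComponentIn {x | eval x G ≤ 0} p := by
  obtain ⟨b, hb, hb'⟩ := (mem_nhdsGT_iff_exists_Ioc_subset).1 hv
  have hb0 : (0:ℝ) < b := hb
  refine ⟨b, hb0, ?_⟩
  have hpre : IsPreconnected ((fun t : ℝ => z + t • v) '' Set.Icc 0 b) :=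
    isPreconnected_Icc.image _ (by fun_prop)
  have hz' := connectedComponentIn_eq hz
  rw [hz']
  refine hpre.subset_connectedComponentIn ⟨0, by simp [hb0.le], by simp⟩ ?_ ⟨b, by simp [hb0.le], rfl⟩
  rintro _ ⟨t, ht, rfl⟩
  rcases ht.1.eq_or_lt with h | h
  · subst h; simpa using connectedComponentIn_subset _ _ hz
  · exact hb' ⟨h, ht.2⟩

open MvPolynomial Filter Topology in
lemma pomt_crit {N : ℕ} (G : MvPolynomial (Fin N) ℝ) (p : Fin N → ℝ) (i₀ : Fin N) (s : ℝ)
    (hs : s ≠ 0) (hc : IsCompact {x | eval x G ≤ 0}) (hp : eval p G < 0) :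
    ∃ z ∈ connectedComponentIn {x | eval x G ≤ 0} p, s * p i₀ < s * z i₀ ∧ eval z G = 0 ∧
      ∀ i, i ≠ i₀ → eval z (pderiv i G) = 0 := by
  have hcont : Continuous fun x => eval x G := MvPolynomial.continuous_eval G
  have hpC : p ∈ connectedComponentIn {x | eval x G ≤ 0} p := mem_connectedComponentIn hp.le
  have hCc : IsCompact (connectedComponentIn {x | eval x G ≤ 0} p) :=
    hc.of_isClosed_subset (pomt_comp_closed hc.isClosed p) (connectedComponentIn_subset _ _)
  obtain ⟨z, hz, hmax⟩ := hCc.exists_isMaxOn ⟨p, hpC⟩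
    (f := fun x : Fin N → ℝ => s * x i₀) (by fun_prop)
  have hzS : eval z G ≤ 0 := connectedComponentIn_subset {x | eval x G ≤ 0} p hz
  have hmove : ∀ w ∈ connectedComponentIn {x | eval x G ≤ 0} p, eval w G < 0 →
      ∃ w' ∈ connectedComponentIn {x | eval x G ≤ 0} p, s * w i₀ < s * w' i₀ := by
    intro w hw hw0
    obtain ⟨t, ht, h⟩ := pomt_move G p w (Pi.single i₀ s) hw (by
      have hct : ContinuousAt (fun t : ℝ => eval (w + t • (Pi.single i₀ s : Fin N → ℝ)) G) 0 := by
        apply Continuous.continuousAt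
        exact hcont.comp (by fun_prop)
      have := hct.tendsto.eventually_lt_const (u := 0) (by simpa using hw0)
      exact (this.filter_mono nhdsWithin_le_nhds).mono fun _ h => h.le)
    refine ⟨_, h, ?_⟩
    have : 0 < t * (s * s) := mul_pos ht (mul_self_pos.2 hs)
    simp
    nlinarith
  obtain ⟨w, hw, hpw⟩ := hmove p hpC hp
  refine ⟨z, hz, hpw.trans_le (hmax hw), ?_, ?_⟩
  · by_contra hne
    obtain ⟨w, hw, hzw⟩ := hmove z hz
      (lt_of_le_of_ne hzS hne)
    exact absurd (hmax hw) (not_le.2 hzw)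
  · intro i hi
    by_contra hne
    by_cases hz0 : eval z G = 0
    swap
    · obtain ⟨w, hw, hzw⟩ := hmove z hz
        (lt_of_le_of_ne hzS hz0)
      exact absurd (hmax hw) (not_le.2 hzw)
    set g := eval z (pderiv i G)
    set g0 := eval z (pderiv i₀ G)
    let v : Fin N → ℝ := Pi.single i₀ s + Pi.single i (-(1 + s * g0) / g)
    have hd := pomt_hasDerivAt G z v
    have hsum : ∑ j, v j * eval z (pderiv j G) = -1 := by
      simp only [v, Pi.add_apply, add_mul, Finset.sum_add_distrib, Pi.single_apply, ite_mul,
        zero_mul, Finset.sum_ite_eq', Finset.mem_univ, if_true]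
      change s * g0 + -(1 + s * g0) / g * g = -1
      field_simp
      ring
    rw [hsum] at hd
    obtain ⟨t, ht, h⟩ := pomt_move G p z v hz (by
      have h1 := hd.tendsto_slope
      have h2 := (h1.mono_left (nhdsGT_le_nhdsNE 0)).eventually_lt_const (u := 0) (by norm_num)
      filter_upwards [h2, self_mem_nhdsWithin] with t h3 (h4 : 0 < t)
      rw [slope_def_field] at h3
      simp only [zero_smul, add_zero, hz0, sub_zero] at h3
      by_contra! h5
      exact absurd h3 (not_lt.2 (div_pos h5 h4).le))
    have h6 := hmax h
    have : 0 < t * (s * s) := mul_pos ht (mul_self_pos.2 hs)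
    simp [v, hi.symm] at h6
    nlinarith

open MvPolynomial in
lemma pomt_main {n d k m : ℕ} (hd : 1 ≤ d) (f : Fin k → MvPolynomial (Fin (n+1)) ℝ)
    (hdeg : ∀ i, (f i).totalDegree ≤ d) (V : Set (Fin (n+1) → ℝ))
    (hV : V = {x | ∀ i, eval x (f i) = 0})
    (p : Fin m → (Fin (n+1) → ℝ)) (hpV : ∀ j, p j ∈ V)
    (hsep : ∀ i j, i ≠ j → p j ∉ connectedComponentIn V (p i)) :
    m ≤ d * (2 * d - 1) ^ n := by
  classical
  obtain ⟨c, rfl⟩ : ∃ c, d = c + 1 := ⟨d - 1, by omega⟩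
  set D := 2 * c + 1 with hD
  have hD2 : 2 * (c + 1) - 1 = D := by omega
  have hDe : Even (D + 1) := ⟨c + 1, by omega⟩
  rw [hD2]
  let F : MvPolynomial (Fin (n+1)) ℝ := ∑ i, f i ^ 2
  let P : MvPolynomial (Fin (n+1)) ℝ := ∑ i, X i ^ (D + 1)
  have hFe : ∀ x, eval x F = ∑ i, (eval x (f i)) ^ 2 := fun x => by simp [F]
  have hPe : ∀ x, eval x P = ∑ i, (x i) ^ (D + 1) := fun x => by simp [P]
  have hF0 : ∀ x, 0 ≤ eval x F := fun x => by
    rw [hFe]; exact Finset.sum_nonneg fun i _ => sq_nonneg _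
  have hP0 : ∀ x, 0 ≤ eval x P := fun x => by
    rw [hPe]; exact Finset.sum_nonneg fun i _ => hDe.pow_nonneg _
  have hFd : F.totalDegree ≤ D + 1 := by
    refine totalDegree_finsetSum_le fun i _ => ?_
    refine (totalDegree_pow _ _).trans ?_
    have := hdeg i
    omega
  have hFV : ∀ x, eval x F ≤ 0 ↔ x ∈ V := fun x => by
    rw [hV, Set.mem_ofPred_eq]
    constructor
    · intro h i
      have h1 : eval x F = 0 := le_antisymm h (hF0 x)
      rw [hFe, Finset.sum_eq_zero_iff_of_nonneg fun i _ => sq_nonneg _] at h1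
      exact pow_eq_zero_iff (two_ne_zero) |>.1 (h1 i (Finset.mem_univ _))
    · intro h
      rw [hFe]; simp [h]
  let R : ℝ := 1 + ∑ j, eval (p j) P
  have hR : ∀ j, eval (p j) P < R := fun j => by
    have := Finset.single_le_sum (f := fun j => eval (p j) P) (fun i _ => hP0 (p i))
      (Finset.mem_univ j)
    simp only [R]
    linarith
  have hR0 : 0 < R := by
    have := Finset.sum_nonneg (s := Finset.univ) (f := fun j => eval (p j) P)
      (fun i _ => hP0 (p i))
    simp only [R]
    linarith
  let K : ℕ → Set (Fin (n+1) → ℝ) := fun l => {x | eval x F ≤ 1 / ((l:ℝ) + 1) ∧ eval x P ≤ 2 * R}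
  have hKanti : Antitone K := by
    intro a b hab x hx
    refine ⟨hx.1.trans ?_, hx.2⟩
    exact one_div_le_one_div_of_le (by positivity) (by gcongr)
  have hKc : ∀ l, IsCompact (K l) := by
    intro l
    refine (isCompact_Icc (a := fun _ : Fin (n+1) => -(1 + 2 * R))
      (b := fun _ => 1 + 2 * R)).of_isClosed_subset ?_ ?_
    · exact (isClosed_le (MvPolynomial.continuous_eval F) continuous_const).inter
        (isClosed_le (MvPolynomial.continuous_eval P) continuous_const)
    · rintro x ⟨_, hx⟩
      have : ∀ i, |x i| ≤ 1 + 2 * R := fun i => by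
        by_cases h1 : |x i| ≤ 1
        · linarith
        · have h2 : |x i| ≤ |x i| ^ (D + 1) := le_self_pow₀ (le_of_not_ge h1) (by omega)
          rw [hDe.pow_abs] at h2
          have h3 := Finset.single_le_sum (f := fun i => x i ^ (D + 1))
            (fun i _ => hDe.pow_nonneg _) (Finset.mem_univ i)
          rw [hPe] at hx
          linarith
      exact ⟨fun i => (abs_le.1 (this i)).1, fun i => (abs_le.1 (this i)).2⟩
  have hKV : ⋂ l, K l ⊆ V := by
    intro x hx
    rw [← hFV]
    refine ge_of_tendsto' (tendsto_one_div_add_atTop_nhds_zero_nat (𝕜 := ℝ)) fun l => ?_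
    exact (Set.mem_iInter.1 hx l).1
  have hpK : ∀ j l, p j ∈ K l := fun j l =>
    ⟨((hFV _).2 (hpV j)).trans (by positivity), by linarith [hR j]⟩
  have hex : ∀ q : Fin m × Fin m, ∃ l, q.1 ≠ q.2 →
      p q.2 ∉ connectedComponentIn (K l) (p q.1) := by
    intro q
    by_contra! h
    exact hsep q.1 q.2 (h 0).1
      (pomt_sep K hKanti hKc V hKV _ _ (hpK _) fun l => (h l).2)
  choose L hL using hex
  set l := Finset.univ.sup L
  have hl : ∀ i j, i ≠ j → p j ∉ connectedComponentIn (K l) (p i) := fun i j hij h =>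
    hL (i, j) hij (connectedComponentIn_mono _ (hKanti (Finset.le_sup (Finset.mem_univ (i, j)))) h)
  set δ : ℝ := 1 / ((l:ℝ) + 1)
  have hδ : 0 < δ := by positivity
  let e : Fin (n+1) → ℕ := Fin.cons (D + 1) (fun _ => D)
  let a : ℝ := 1 / ((D:ℝ) + 1)
  have ha : a * ((D:ℝ) + 1) = 1 := by simp only [a]; field_simp
  let g : Fin (n+1) → MvPolynomial (Fin (n+1)) ℝ :=
    Fin.cons (F - C δ - ∑ i : Fin n, C a * (X i.succ * pderiv i.succ F))
      (fun i => C a * pderiv i.succ F)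
  have hpd : ∀ i, (pderiv i F).totalDegree ≤ D := fun i => pomt_pderiv_deg F i hFd
  have hg : ∀ i, (g i).totalDegree ≤ e i := by
    intro i
    refine Fin.cases ?_ (fun i => ?_) i
    · simp only [g, e, Fin.cons_zero]
      refine (totalDegree_sub _ _).trans (max_le ((totalDegree_sub_C_le _ _).trans hFd) ?_)
      refine totalDegree_finsetSum_le fun i _ => ?_
      refine (totalDegree_mul _ _).trans ?_
      rw [totalDegree_C, zero_add]
      refine (totalDegree_mul _ _).trans ?_
      rw [totalDegree_X]
      have := hpd i.succ
      omega
    · simp only [g, e, Fin.cons_succ]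
      refine (totalDegree_mul _ _).trans ?_
      rw [totalDegree_C, zero_add]
      exact hpd _
  have hfin := pomt_bezout e g hg
  obtain ⟨ε, ⟨hε1, hε2⟩, hbad⟩ := ((Set.Ioo_infinite (a := δ / (2 * R)) (b := δ / R) (by
    apply div_lt_div_of_pos_left hδ hR0; linarith)).sdiff hfin).nonempty
  have hε : 0 < ε := lt_trans (by positivity) hε1
  rw [div_lt_iff₀ (by positivity)] at hε1
  rw [lt_div_iff₀ hR0] at hε2
  let G : MvPolynomial (Fin (n+1)) ℝ := F + C ε * P - C δ
  have hGe : ∀ x, eval x G = eval x F + ε * eval x P - δ := fun x => by simp [G]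
  have hGd : ∀ x i, eval x (pderiv i G) =
      eval x (pderiv i F) + ε * (((D:ℝ) + 1) * x i ^ D) := fun x i => by
    have : pderiv i P = C ((D:ℝ) + 1) * X i ^ D := by
      simp only [P, map_sum]
      rw [Finset.sum_eq_single i]
      · simp [pderiv_pow]
      · intro b _ hb
        simp [pderiv_pow, pderiv_X_of_ne hb]
      · simp
    simp only [G, map_sub, map_add, pderiv_C_mul, pderiv_C, this]
    simp
  have hSK : {x | eval x G ≤ 0} ⊆ K l := by
    intro x hx
    simp only [Set.mem_ofPred_eq, hGe] at hx
    have h1 := hF0 x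
    have h2 := mul_nonneg hε.le (hP0 x)
    refine ⟨by linarith, ?_⟩
    have h3 : ε * eval x P ≤ ε * (2 * R) := by linarith
    exact le_of_mul_le_mul_left h3 hε
  have hSc : IsCompact {x | eval x G ≤ 0} :=
    (hKc l).of_isClosed_subset
      (isClosed_le (MvPolynomial.continuous_eval G) continuous_const) hSK
  have hpG : ∀ j, eval (p j) G < 0 := fun j => by
    rw [hGe]
    have h1 := (hFV _).2 (hpV j)
    have h2 := mul_lt_mul_of_pos_left (hR j) hε
    linarith
  have hcr : ∀ q : Fin m × Bool, ∃ z ∈ connectedComponentIn {x | eval x G ≤ 0} (p q.1),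
      (if q.2 then (1:ℝ) else -1) * p q.1 0 < (if q.2 then (1:ℝ) else -1) * z 0 ∧
      eval z G = 0 ∧ ∀ i, i ≠ 0 → eval z (pderiv i G) = 0 := fun q =>
    pomt_crit G (p q.1) 0 _ (by split_ifs <;> norm_num) hSc (hpG _)
  choose z hz1 hz2 hz3 hz4 using hcr
  have hzinj : Function.Injective z := by
    rintro ⟨j, b⟩ ⟨j', b'⟩ h
    have hj : j = j' := by
      by_contra hne
      have h1 := connectedComponentIn_eq (hz1 (j, b))
      have h2 := connectedComponentIn_eq (hz1 (j', b'))
      rw [h, ← h2] at h1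
      refine hl j j' hne (connectedComponentIn_mono _ hSK ?_)
      change connectedComponentIn _ (p j) = connectedComponentIn _ (p j') at h1
      rw [h1]
      exact mem_connectedComponentIn (hpG j').le
    subst hj
    have h1 := hz2 (j, b)
    have h2 := hz2 (j, b')
    rw [h] at h1
    cases b <;> cases b' <;> simp at h1 h2 ⊢ <;> linarith
  by_contra! hm
  have he : ∏ i, e i = (D + 1) * D ^ n := by simp [e, Fin.prod_univ_succ]
  have hcard : (∏ i, e i) + 1 ≤ Fintype.card (Fin m × Bool) := by
    rw [he, Fintype.card_prod, Fintype.card_fin, Fintype.card_bool]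
    have : (D + 1) * D ^ n = ((c + 1) * D ^ n) * 2 := by rw [hD]; ring
    omega
  obtain ⟨φ⟩ := Function.Embedding.nonempty_of_card_le
    (α := Fin ((∏ i, e i) + 1)) (β := Fin m × Bool) (by simpa using hcard)
  have hsucc : ∀ q (i : Fin n), eval (z q) (pderiv i.succ F) + ε * (((D:ℝ) + 1) * z q i.succ ^ D) = 0 :=
    fun q i => by rw [← hGd]; exact hz4 q _ (Fin.succ_ne_zero i)
  refine hbad ⟨fun t => z (φ t), hzinj.comp φ.injective, fun t i => ?_⟩
  refine Fin.cases ?_ (fun i => ?_) i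
  · simp only [g, e, Fin.cons_zero]
    have h1 := hz3 (φ t)
    rw [hGe, hPe, Fin.sum_univ_succ] at h1
    have h2 : ∑ i : Fin n, a * (z (φ t) i.succ * eval (z (φ t)) (pderiv i.succ F)) =
        - (ε * ∑ i : Fin n, z (φ t) i.succ ^ (D + 1)) := by
      rw [Finset.mul_sum, ← Finset.sum_neg_distrib]
      refine Finset.sum_congr rfl fun i _ => ?_
      linear_combination a * z (φ t) i.succ * hsucc (φ t) i - ε * z (φ t) i.succ ^ (D + 1) * ha
    simp only [map_sub, map_sum, map_mul, eval_C, eval_X]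
    rw [h2]
    linear_combination h1
  · simp only [g, e, Fin.cons_succ, map_mul, eval_C]
    linear_combination a * hsucc (φ t) i - ε * z (φ t) i.succ ^ D * ha

/-- Petrovskii–Oleinik–Milnor–Thom bound: the common zero set in `ℝ^N` of `k` real
polynomials of total degree at most `d` has at most `d * (2d-1)^(N-1)` connected
components (in the Euclidean subspace topology). -/
theorem pomt_bound (N d k : ℕ) (hN : 1 ≤ N) (hd : 1 ≤ d) (hk : 1 ≤ k)
    (f : Fin k → MvPolynomial (Fin N) ℝ)
    (hdeg : ∀ i, (f i).totalDegree ≤ d) :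
    Finite (ConnectedComponents
      ↥{x : EuclideanSpace ℝ (Fin N) | ∀ i, MvPolynomial.eval x (f i) = 0}) ∧
    Nat.card (ConnectedComponents
      ↥{x : EuclideanSpace ℝ (Fin N) | ∀ i, MvPolynomial.eval x (f i) = 0})
      ≤ d * (2 * d - 1) ^ (N - 1) := by
  classical
  obtain ⟨n, rfl⟩ : ∃ n, N = n + 1 := ⟨N - 1, by omega⟩
  rw [Nat.add_sub_cancel]
  set VE := {x : EuclideanSpace ℝ (Fin (n+1)) | ∀ i, MvPolynomial.eval x (f i) = 0} with hVE
  have key : ∀ m (c : Fin m → ConnectedComponents VE), Function.Injective c →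
      m ≤ d * (2 * d - 1) ^ n := by
    intro m c hc
    choose q hq using fun j => ConnectedComponents.surjective_coe (c j)
    refine pomt_main hd f hdeg _ rfl (fun j => (q j).1.ofLp) (fun j => (q j).2) ?_
    intro i j hij hmem
    have h1 : (q j).1 ∈ connectedComponentIn VE (q i).1 := by
      have hcont : Continuous (WithLp.toLp 2 : (Fin (n+1) → ℝ) → EuclideanSpace ℝ (Fin (n+1))) :=
        PiLp.continuous_toLp 2 _
      have himg := (isPreconnected_connectedComponentIn
        (x := (q i).1.ofLp) (F := {x | ∀ i, MvPolynomial.eval x (f i) = 0})).image _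
          hcont.continuousOn
      refine himg.subset_connectedComponentIn
        ⟨_, mem_connectedComponentIn (q i).2, rfl⟩ ?_ ⟨_, hmem, rfl⟩
      rintro _ ⟨x, hx, rfl⟩
      exact connectedComponentIn_subset {x | ∀ i, MvPolynomial.eval x (f i) = 0} _ hx
    rw [connectedComponentIn_eq_image (q i).2] at h1
    obtain ⟨w, hw, hwq⟩ := h1
    have hw' : w = q j := Subtype.ext hwq
    rw [hw'] at hw
    apply hij
    apply hc
    rw [← hq i, ← hq j]
    exact (ConnectedComponents.coe_eq_coe'.2 hw).symm
  have hfin : Finite (ConnectedComponents VE) := by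
    by_contra hinf
    rw [not_finite_iff_infinite] at hinf
    have := key (d * (2 * d - 1) ^ n + 1) (fun j => Infinite.natEmbedding _ j.1)
      (fun a b h => Fin.ext ((Infinite.natEmbedding _).injective h))
    omega
  exact ⟨hfin, key _ (Finite.equivFin _).symm (Finite.equivFin _).symm.injective⟩
end

section
/- Let N ≥ 1 and d ≥ 2 be integers, let V ⊆ ℝ^N be the common zero set of a finite family of real polynomials in N variables of total degree at most d, and let c > 0. Then for every affine subspace L ⊆ ℝ^N, the set V ∩ {x ∈ ℝ^N : ‖x‖ ≤ c} ∩ L, equipped with the subspace topology, has at most (2d)^{N+1} connected components. -/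
open MvPolynomial

lemma aux_interp {σ ι : Type*} [Fintype ι] [DecidableEq ι] (p : ι → σ → ℝ)
    (hp : Function.Injective p) (a : ι) :
    ∃ q : MvPolynomial σ ℝ, ∀ b, eval (p b) q = if b = a then 1 else 0 := by
  have h : ∀ b, ∃ q : MvPolynomial σ ℝ, eval (p a) q = 1 ∧ (b ≠ a → eval (p b) q = 0) := by
    intro b
    by_cases hb : b = a
    · exact ⟨1, by simp, fun h => absurd hb h⟩
    · obtain ⟨i, hi⟩ := Function.ne_iff.1 (fun h => hb (hp h).symm : p a ≠ p b)
      have : p a i - p b i ≠ 0 := sub_ne_zero.2 hi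
      exact ⟨C (p a i - p b i)⁻¹ * (X i - C (p b i)), by simp [this], by simp⟩
  choose q h1 h2 using h
  refine ⟨∏ b, q b, fun b => ?_⟩
  rw [map_prod]
  split_ifs with hb
  · subst hb; simp [h1]
  · exact Finset.prod_eq_zero (Finset.mem_univ b) (h2 b hb)

lemma aux_bezout {σ ι : Type*} [Fintype σ] [DecidableEq σ] [Fintype ι]
    (p : ι → σ → ℝ) (hp : Function.Injective p) (D : ℕ) (r : σ → MvPolynomial σ ℝ)
    (hr : ∀ i, (r i).totalDegree < D) (h : ∀ a i, (p a i) ^ D = eval (p a) (r i)) :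
    Fintype.card ι ≤ D ^ Fintype.card σ := by
  classical
  let v : (σ → Fin D) → (ι → ℝ) := fun m a => ∏ i, (p a i) ^ (m i : ℕ)
  let M := Submodule.span ℝ (Set.range v)
  have key : ∀ n : ℕ, ∀ q : MvPolynomial σ ℝ, q.totalDegree < n →
      (fun a => eval (p a) q) ∈ M := by
    intro n
    induction n with
    | zero => intro q hq; omega
    | succ n ih =>
      intro q hq
      have : (fun a => eval (p a) q)
          = ∑ s ∈ q.support, (q.coeff s) • (fun a => ∏ i, (p a i) ^ (s i)) := by
        ext a
        rw [eval_eq']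
        simp [Finset.sum_apply]
      rw [this]
      refine Submodule.sum_mem _ fun s hs => Submodule.smul_mem _ _ ?_
      have hsd : s.degree ≤ n := by
        have := le_totalDegree hs
        rw [Finsupp.degree_eq_sum]
        rw [Finsupp.sum_fintype _ _ (by simp)] at this
        omega
      by_cases hall : ∀ i, s i < D
      · exact Submodule.subset_span ⟨fun i => ⟨s i, hall i⟩, rfl⟩
      · push Not at hall
        obtain ⟨i, hi⟩ := hall
        obtain ⟨t, ht⟩ : ∃ t, s = Finsupp.single i D + t :=
          ⟨s - Finsupp.single i D, by
            rw [add_tsub_cancel_of_le]; simpa using hi⟩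
        have e : (fun a => ∏ j, (p a j) ^ (s j)) = 
            (fun a => eval (p a) (r i * monomial t 1)) := by
          ext a
          rw [map_mul, ← h, eval_monomial, ht]
          simp only [Finsupp.add_apply, pow_add, Finset.prod_mul_distrib, one_mul]
          congr 1
          · rw [Finset.prod_eq_single i] <;> simp +contextual [eq_comm]
          · rw [Finsupp.prod_fintype]; simp
        rw [e]
        apply ih
        have h1 := totalDegree_mul (r i) (monomial t (1:ℝ))
        have h2 : (monomial t (1:ℝ)).totalDegree ≤ t.degree := totalDegree_monomial_le t 1
        have h3 : s.degree = D + t.degree := by rw [ht]; simp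
        have := hr i
        omega
  have htop : M = ⊤ := by
    rw [eq_top_iff]
    intro w _
    have : w = ∑ a, w a • (fun b => if b = a then (1:ℝ) else 0) := by
      ext b; simp
    rw [this]
    refine Submodule.sum_mem _ fun a _ => Submodule.smul_mem _ _ ?_
    obtain ⟨q, hq⟩ := aux_interp p hp a
    have := key _ q (Nat.lt_succ_self _)
    simpa only [hq] using this
  have h1 : Module.finrank ℝ M ≤ Fintype.card (σ → Fin D) := finrank_range_le_card v
  rw [htop, finrank_top] at h1
  simpa using h1

lemma aux_deriv {σ : Type*} [DecidableEq σ] (p : σ → ℝ) (i : σ) (g : MvPolynomial σ ℝ) :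
    HasDerivAt (fun t => eval (Function.update p i t) g) (eval p (pderiv i g)) (p i) := by
  induction g using MvPolynomial.induction_on with
  | C a => simpa using hasDerivAt_const _ _
  | add f g hf hg => simpa only [map_add] using hf.fun_add hg
  | mul_X f j hf =>
    have hX : HasDerivAt (fun t => Function.update p i t j) (eval p (pderiv i (X j))) (p i) := by
      by_cases hj : j = i
      · subst hj; simpa using hasDerivAt_id' _
      · simpa [hj, pderiv_X_of_ne hj] using hasDerivAt_const (p i) (p j)
    have := hf.fun_mul hX
    simp only [map_mul, eval_X, pderiv_mul, map_add]
    simpa only [Function.update_eq_self] using this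

lemma aux_localmin {σ : Type*} [Finite σ] (p : σ → ℝ) (i : σ) (g : MvPolynomial σ ℝ)
    (h : IsLocalMin (fun x => eval x g) p) : eval p (pderiv i g) = 0 := by
  classical
  have hc : Continuous (fun t : ℝ => Function.update p i t) := by fun_prop
  have h' : IsLocalMin (fun t => eval (Function.update p i t) g) (p i) := by
    have := hc.tendsto (p i)
    rw [Function.update_eq_self] at this
    have h2 := this.eventually h
    unfold IsLocalMin IsMinFilter
    simpa using h2
  exact h'.hasDerivAt_eq_zero (aux_deriv p i g)

lemma aux_pderiv_deg {σ : Type*} (i : σ) (g : MvPolynomial σ ℝ) (D : ℕ) (hD : 0 < D)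
    (h : g.totalDegree ≤ D) : (pderiv i g).totalDegree < D := by
  classical
  rw [totalDegree, Finset.sup_lt_iff (by simpa using hD)]
  intro m hm
  rw [mem_support_iff, coeff_pderiv] at hm
  have h1 : m + Finsupp.single i 1 ∈ g.support := by
    rw [mem_support_iff]; intro h0; simp [h0] at hm
  have := le_totalDegree h1
  rw [Finsupp.sum_add_index' (by simp) (by simp), Finsupp.sum_single_index rfl] at this
  omega

open Topology Filter in
lemma aux_min {E : Type*} [TopologicalSpace E] (F h : E → ℝ) (hF : Continuous F)
    (hh : Continuous h) (K U : Set E) (hK : IsCompact K) (hU : IsOpen U) (hUK : U ⊆ K)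
    (k : E) (hk : k ∈ U) (hk0 : F k = 0) (hpos : ∀ x ∈ K \ U, 0 < F x) :
    ∀ᶠ ε in 𝓝[>] (0:ℝ), ∃ p ∈ U, IsLocalMin (fun x => F x + ε * h x) p := by
  obtain ⟨δ, hδ, hδF⟩ : ∃ δ > 0, ∀ x ∈ K \ U, δ ≤ F x := by
    by_cases hne : (K \ U).Nonempty
    · obtain ⟨x, hx, hm⟩ := (hK.diff hU).exists_isMinOn hne hF.continuousOn
      exact ⟨F x, hpos x hx, fun y hy => hm hy⟩
    · exact ⟨1, one_pos, fun x hx => absurd ⟨x, hx⟩ hne⟩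
  obtain ⟨B, hB⟩ := hK.exists_bound_of_continuousOn hh.continuousOn
  have hB0 : 0 ≤ B := (norm_nonneg _).trans (hB k (hUK hk))
  have : ∀ᶠ ε in 𝓝[>] (0:ℝ), ε < δ / (2 * B + 1) :=
    (eventually_lt_nhds (by positivity)).filter_mono nhdsWithin_le_nhds
  filter_upwards [this, self_mem_nhdsWithin] with ε h1 h2
  have h2 : 0 < ε := h2
  rw [lt_div_iff₀ (by positivity)] at h1
  have hb : ∀ x ∈ K, |ε * h x| ≤ ε * B := by
    intro x hx
    rw [abs_mul, abs_of_pos h2]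
    exact mul_le_mul_of_nonneg_left (hB x hx) h2.le
  obtain ⟨p, hp, hm⟩ := hK.exists_isMinOn ⟨k, hUK hk⟩
    (f := fun x => F x + ε * h x) (by fun_prop)
  have hpU : p ∈ U := by
    by_contra hn
    have a1 := hδF p ⟨hp, hn⟩
    have a2 : F p + ε * h p ≤ F k + ε * h k := hm (hUK hk)
    have a3 := abs_le.1 (hb p hp)
    have a4 := abs_le.1 (hb k (hUK hk))
    nlinarith
  exact ⟨p, hpU, hm.isLocalMin (mem_of_superset (hU.mem_nhds hpU) hUK)⟩

open Topology Filter Metric in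
lemma aux_main {σ ι : Type*} [Fintype σ] [Fintype ι] (F : MvPolynomial σ ℝ) (D : ℕ)
    (hD : 0 < D) (hF : F.totalDegree ≤ D) (hnn : ∀ x, 0 ≤ eval x F)
    (hcomp : IsCompact {x | eval x F = 0}) (K : ι → Set (σ → ℝ))
    (hdis : ∀ a b, a ≠ b → Disjoint (K a) (K b)) (hne : ∀ a, (K a).Nonempty)
    (hsub : ∀ a, K a ⊆ {x | eval x F = 0})
    (hcl : ∀ a, IsClosed (K a)) (hcl' : ∀ a, IsClosed ({x | eval x F = 0} \ K a)) :
    Fintype.card ι ≤ D ^ Fintype.card σ := by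
  classical
  have hKc : ∀ a, IsCompact (K a) := fun a => hcomp.of_isClosed_subset (hcl a) (hsub a)
  have := fun a => (Set.disjoint_sdiff_right : Disjoint (K a) ({x | eval x F = 0} \ K a)).exists_cthickenings
    (hKc a) (hcl' a)
  choose δ hδ hδd using this
  let H : MvPolynomial σ ℝ := ∑ i, X i ^ (D + 1)
  have hmin : ∀ a, ∀ᶠ ε in 𝓝[>] (0:ℝ), ∃ p ∈ thickening (δ a) (K a),
      IsLocalMin (fun x => eval x F + ε * eval x H) p := by
    intro a
    obtain ⟨k, hk⟩ := hne a
    refine aux_min _ _ (MvPolynomial.continuous_eval F) (MvPolynomial.continuous_eval H)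
      (cthickening (δ a) (K a)) _ (hKc a).cthickening isOpen_thickening
      (thickening_subset_cthickening _ _) k (self_subset_thickening (hδ a) _ hk)
      (hsub a hk) ?_
    rintro x ⟨hx, hx'⟩
    refine lt_of_le_of_ne (hnn x) fun h0 => ?_
    by_cases hxK : x ∈ K a
    · exact hx' (self_subset_thickening (hδ a) _ hxK)
    · exact Set.disjoint_left.1 (hδd a) hx (self_subset_cthickening _ ⟨h0.symm, hxK⟩)
  obtain ⟨ε, hε, hε0⟩ := ((eventually_all.2 hmin).and self_mem_nhdsWithin).exists
  have hε0 : 0 < ε := hε0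
  choose p hp hpm using hε
  have hdd : ∀ a b, a ≠ b → δ a ≤ δ b → p a ≠ p b := by
    intro a b hab hle heq
    refine Set.disjoint_left.1 (hδd b) (thickening_subset_cthickening _ _ (hp b)) ?_
    rw [← heq]
    refine cthickening_mono hle _ (cthickening_subset_of_subset _ ?_
      (thickening_subset_cthickening _ _ (hp a)))
    exact fun x hx => ⟨hsub a hx, Set.disjoint_left.1 (hdis a b hab) hx⟩
  have hinj : Function.Injective p := by
    intro a b hab
    by_contra hne
    rcases le_total (δ a) (δ b) with h | h
    · exact hdd a b hne h hab
    · exact hdd b a (Ne.symm hne) h hab.symm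
  have hc : ε * (D + 1) ≠ 0 := by positivity
  refine aux_bezout p hinj D (fun i => C (-(ε * (D + 1))⁻¹) * pderiv i F) ?_ ?_
  · intro i
    refine lt_of_le_of_lt (totalDegree_mul _ _) ?_
    rw [totalDegree_C, zero_add]
    exact aux_pderiv_deg i F D hD hF
  · intro a i
    have h1 := aux_localmin (p a) i (F + C ε * H) (by simpa using hpm a)
    have h2 : eval (p a) (pderiv i H) = (D + 1) * (p a i) ^ D := by
      simp only [H, map_sum, pderiv_pow, pderiv_X]
      rw [Finset.sum_eq_single i]
      · simp
      · intro j _ hj; simp [hj.symm]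
      · simp
    rw [map_add, pderiv_C_mul, map_add, map_mul, eval_C, h2] at h1
    rw [map_mul, eval_C]
    field_simp
    linarith

lemma aux_clopen {Y : Type*} [TopologicalSpace Y] [CompactSpace Y] [T2Space Y]
    (S : Finset (ConnectedComponents Y)) :
    ∃ U : S → Set Y, (∀ a, IsClopen (U a)) ∧ (∀ a, (U a).Nonempty) ∧
      ∀ a b, a ≠ b → Disjoint (U a) (U b) := by
  have : ∀ a b : S, ∃ V : Set (ConnectedComponents Y), IsClopen V ∧ (a ≠ b → a.1 ∈ V ∧ b.1 ∉ V) := by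
    intro a b
    by_cases hab : a = b
    · exact ⟨∅, isClopen_empty, fun h => absurd hab h⟩
    · obtain ⟨V, hV, h1, h2⟩ := exists_isClopen_of_totally_separated
        (fun h => hab (Subtype.ext h) : a.1 ≠ b.1)
      exact ⟨V, hV, fun _ => ⟨h1, h2⟩⟩
  choose V hV hVm using this
  let W : S → Set (ConnectedComponents Y) := fun a => {z | ∀ b, b ≠ a → z ∈ V a b ∧ z ∉ V b a}
  have hW : ∀ a, W a = ⋂ b : S, ⋂ _ : b ≠ a, (V a b ∩ (V b a)ᶜ) := by
    intro a; ext z; simp [W]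
  refine ⟨fun a => (fun y : Y => (y : ConnectedComponents Y)) ⁻¹' W a, ?_, ?_, ?_⟩
  · intro a
    refine IsClopen.preimage ?_ ConnectedComponents.continuous_coe
    rw [hW]
    exact isClopen_iInter_of_finite fun b => isClopen_iInter_of_finite fun _ =>
      (hV a b).inter (hV b a).compl
  · intro a
    obtain ⟨y, hy⟩ := ConnectedComponents.surjective_coe a.1
    refine ⟨y, fun b hb => ?_⟩
    simp only [hy]
    exact ⟨(hVm a b hb.symm).1, (hVm b a hb).2⟩
  · intro a b hab
    rw [Set.disjoint_left]
    intro y h1 h2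
    exact (h2 a hab).2 (h1 b hab.symm).1

lemma aux_card {α : Type*} (B : ℕ) (h : ∀ S : Finset α, S.card ≤ B) :
    Finite α ∧ Nat.card α ≤ B := by
  have hf : Finite α := by
    by_contra hn
    rw [not_finite_iff_infinite] at hn
    obtain ⟨S, hS⟩ := Infinite.exists_subset_card_eq α (B + 1)
    have := h S
    omega
  refine ⟨hf, ?_⟩
  have := Fintype.ofFinite α
  rw [Nat.card_eq_fintype_card]
  exact h Finset.univ

lemma aux_linear {N : ℕ} (L : AffineSubspace ℝ (EuclideanSpace ℝ (Fin N)))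
    (hL : (L : Set (EuclideanSpace ℝ (Fin N))).Nonempty) :
    ∃ l : Fin N → MvPolynomial (Fin N) ℝ, (∀ j, (l j).totalDegree ≤ 1) ∧
      ∀ x : EuclideanSpace ℝ (Fin N), x ∈ L ↔ ∀ j, eval x (l j) = 0 := by
  obtain ⟨p, hp⟩ := hL
  let T : EuclideanSpace ℝ (Fin N) →ₗ[ℝ] EuclideanSpace ℝ (Fin N) :=
    LinearMap.id - (L.direction.starProjection : EuclideanSpace ℝ (Fin N) →ₗ[ℝ] EuclideanSpace ℝ (Fin N))
  have hT : ∀ x : EuclideanSpace ℝ (Fin N), ∀ j,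
      T x j = ∑ i, T (EuclideanSpace.single i 1) j * x i := by
    intro x j
    have hx : x = ∑ i, x i • EuclideanSpace.single i (1:ℝ) := by
      ext j
      simp [Pi.single_apply]
    conv_lhs => rw [hx]
    simp only [map_sum, map_smul]
    simp [mul_comm]
  refine ⟨fun j => ∑ i, C (T (EuclideanSpace.single i 1) j) * (X i - C (p i)), ?_, ?_⟩
  · intro j
    refine totalDegree_finsetSum_le fun i _ => ?_
    refine (totalDegree_mul _ _).trans ?_
    rw [totalDegree_C, zero_add]
    refine (totalDegree_sub_C_le _ _).trans ?_
    simp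
  · intro x
    have h1 : x ∈ L ↔ x - p ∈ L.direction :=
      (AffineSubspace.vsub_right_mem_direction_iff_mem hp x).symm
    rw [h1, ← Submodule.starProjection_eq_self_iff]
    have h2 : ∀ j, eval x (∑ i, C (T (EuclideanSpace.single i 1) j) * (X i - C (p i)))
        = T (x - p) j := by
      intro j
      rw [hT]
      simp
    simp only [h2]
    have h3 : T (x - p) = (x - p) - L.direction.starProjection (x - p) := rfl
    constructor
    · intro h j
      rw [h3, h]; simp
    · intro h
      have : T (x - p) = 0 := by ext j; simpa using h j
      rw [h3, sub_eq_zero] at this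
      exact this.symm

/-- The intersection of a real algebraic variety (the common zero set of a finite
family of polynomials of total degree at most `d`, with `d ≥ 2`) with a closed
Euclidean ball of radius `c > 0` and any affine subspace has at most
`(2d)^(N+1)` connected components. -/
theorem variety_ball_inter_affine_components (N d k : ℕ)
    (hN : 1 ≤ N) (hd : 2 ≤ d) (c : ℝ) (hc : 0 < c)
    (f : Fin k → MvPolynomial (Fin N) ℝ) (hdeg : ∀ i, (f i).totalDegree ≤ d)
    (L : AffineSubspace ℝ (EuclideanSpace ℝ (Fin N)))
    (hL : (L : Set (EuclideanSpace ℝ (Fin N))).Nonempty) :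
    Finite (ConnectedComponents
      ↥({x : EuclideanSpace ℝ (Fin N) | ∀ i, MvPolynomial.eval x (f i) = 0}
        ∩ Metric.closedBall (0 : EuclideanSpace ℝ (Fin N)) c
        ∩ (L : Set (EuclideanSpace ℝ (Fin N))))) ∧
    Nat.card (ConnectedComponents
      ↥({x : EuclideanSpace ℝ (Fin N) | ∀ i, MvPolynomial.eval x (f i) = 0}
        ∩ Metric.closedBall (0 : EuclideanSpace ℝ (Fin N)) c
        ∩ (L : Set (EuclideanSpace ℝ (Fin N)))))
      ≤ (2 * d) ^ (N + 1) := by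
  obtain ⟨l, hl1, hl2⟩ := aux_linear L hL
  set Y := ({x : EuclideanSpace ℝ (Fin N) | ∀ i, MvPolynomial.eval x (f i) = 0}
        ∩ Metric.closedBall (0 : EuclideanSpace ℝ (Fin N)) c
        ∩ (L : Set (EuclideanSpace ℝ (Fin N)))) with hY
  have hYc : IsCompact Y := by
    have h1 : IsClosed {x : EuclideanSpace ℝ (Fin N) | ∀ i, MvPolynomial.eval x (f i) = 0} := by
      rw [Set.ofPred_forall]
      refine isClosed_iInter fun i => isClosed_eq ?_ continuous_const
      exact (MvPolynomial.continuous_eval (f i)).comp (PiLp.continuous_ofLp 2 _)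
    have h2 : IsClosed (L : Set (EuclideanSpace ℝ (Fin N))) :=
      AffineSubspace.closed_of_finiteDimensional L
    exact ((isCompact_closedBall _ _).inter_left h1).inter_right h2
  have : CompactSpace Y := isCompact_iff_compactSpace.1 hYc
  let Q : MvPolynomial (Option (Fin N)) ℝ := ∑ i, X i ^ 2 - C (c ^ 2)
  let F : MvPolynomial (Option (Fin N)) ℝ :=
    ∑ i, (rename some (f i)) ^ 2 + ∑ j, (rename some (l j)) ^ 2 + Q ^ 2
  have hsq : ∀ q : MvPolynomial (Option (Fin N)) ℝ, q.totalDegree ≤ d →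
      (q ^ 2).totalDegree ≤ 2 * d := fun q hq =>
    (totalDegree_pow q 2).trans (Nat.mul_le_mul_left 2 hq)
  have hFdeg : F.totalDegree ≤ 2 * d := by
    refine (totalDegree_add _ _).trans (max_le ((totalDegree_add _ _).trans (max_le ?_ ?_)) ?_)
    · exact totalDegree_finsetSum_le fun i _ =>
        hsq _ ((totalDegree_rename_le _ _).trans (hdeg i))
    · exact totalDegree_finsetSum_le fun i _ =>
        hsq _ ((totalDegree_rename_le _ _).trans ((hl1 i).trans (by omega)))
    · refine hsq _ ((totalDegree_sub_C_le _ _).trans ?_)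
      refine totalDegree_finsetSum_le fun i _ => ?_
      rw [totalDegree_X_pow]; exact hd
  have hFe : ∀ x, eval x F = ∑ i, (eval (x ∘ some) (f i)) ^ 2
      + ∑ j, (eval (x ∘ some) (l j)) ^ 2 + (∑ i, x i ^ 2 - c ^ 2) ^ 2 := by
    intro x
    simp [F, Q, eval_rename]
  have hF0 : ∀ x, eval x F = 0 ↔ (∀ i, eval (x ∘ some) (f i) = 0) ∧
      (∀ j, eval (x ∘ some) (l j) = 0) ∧ ∑ i, x i ^ 2 = c ^ 2 := by
    intro x
    rw [hFe, add_eq_zero_iff_of_nonneg (by positivity) (by positivity),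
      add_eq_zero_iff_of_nonneg (by positivity) (by positivity),
      Finset.sum_eq_zero_iff_of_nonneg (fun _ _ => by positivity),
      Finset.sum_eq_zero_iff_of_nonneg (fun _ _ => by positivity)]
    simp [sub_eq_zero, and_assoc]
  have hcl : IsClosed {x | eval x F = 0} :=
    isClosed_eq (MvPolynomial.continuous_eval F) continuous_const
  have hcomp : IsCompact {x | eval x F = 0} := by
    refine (isCompact_closedBall (0 : Option (Fin N) → ℝ) c).of_isClosed_subset hcl ?_
    intro x hx
    have h := ((hF0 x).1 hx).2.2
    rw [mem_closedBall_zero_iff, pi_norm_le_iff_of_nonneg hc.le]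
    intro i
    rw [Real.norm_eq_abs]
    apply abs_le_of_sq_le_sq _ hc.le
    rw [← h]
    exact Finset.single_le_sum (f := fun i => x i ^ 2) (fun _ _ => sq_nonneg _) (Finset.mem_univ i)
  have hmem : ∀ x : {x | eval x F = 0}, WithLp.toLp 2 (x.1 ∘ some) ∈ Y := by
    rintro ⟨x, hx⟩
    obtain ⟨h1, h2, h3⟩ := (hF0 x).1 hx
    refine ⟨⟨h1, ?_⟩, (hl2 _).2 h2⟩
    rw [mem_closedBall_zero_iff]
    apply le_of_sq_le_sq _ hc.le
    rw [EuclideanSpace.norm_sq_eq, ← h3, Fintype.sum_option]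
    simp
    positivity
  let π : {x | eval x F = 0} → Y := fun x => ⟨WithLp.toLp 2 (x.1 ∘ some), hmem x⟩
  have hπ : Continuous π := by
    refine Continuous.subtype_mk ?_ _
    refine (PiLp.continuous_toLp 2 _).comp ?_
    exact continuous_pi fun i => (continuous_apply (some i)).comp continuous_subtype_val
  have hπs : Function.Surjective π := by
    rintro ⟨y, ⟨h1, h2⟩, h3⟩
    rw [mem_closedBall_zero_iff] at h2
    refine ⟨⟨fun o => o.elim (Real.sqrt (c ^ 2 - ‖y‖ ^ 2)) y, ?_⟩, ?_⟩
    · refine (hF0 _).2 ⟨h1, (hl2 y).1 h3, ?_⟩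
      rw [Fintype.sum_option]
      have : ‖y‖ ^ 2 ≤ c ^ 2 := pow_le_pow_left₀ (norm_nonneg _) h2 2
      simp only [Option.elim]
      rw [Real.sq_sqrt (by linarith), EuclideanSpace.norm_sq_eq]
      simp
    · rfl
  refine aux_card _ fun S => ?_
  obtain ⟨U, hU, hUne, hUd⟩ := aux_clopen S
  have := aux_main F (2 * d) (by omega) hFdeg (fun x => by rw [hFe]; positivity) hcomp
    (fun a => Subtype.val '' (π ⁻¹' U a)) ?_ ?_ ?_ ?_ ?_
  · simpa using this
  · intro a b hab
    exact Set.disjoint_image_of_injective Subtype.val_injective ((hUd a b hab).preimage π)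
  · intro a
    exact ((hUne a).preimage hπs).image _
  · rintro a _ ⟨x, _, rfl⟩
    exact x.2
  · intro a
    exact hcl.isClosedMap_subtype_val _ ((hU a).1.preimage hπ)
  · intro a
    have : {x | eval x F = 0} \ Subtype.val '' (π ⁻¹' U a) = Subtype.val '' (π ⁻¹' (U a)ᶜ) := by
      ext x
      constructor
      · rintro ⟨hx, h⟩
        exact ⟨⟨x, hx⟩, fun h' => h ⟨_, h', rfl⟩, rfl⟩
      · rintro ⟨y, hy, rfl⟩
        refine ⟨y.2, ?_⟩
        rintro ⟨z, hz, hzy⟩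
        rw [Subtype.ext hzy] at hz
        exact hy hz
    rw [this]
    exact hcl.isClosedMap_subtype_val _ ((hU a).compl.1.preimage hπ)
end

section
/- Let N ≥ 1 and d ≥ 2 be integers. Let U = {x ∈ ℝ^N : p_k(x) = 0 for all k, q_ℓ(x) ≤ 0 for ℓ = 1,…,b₁, r_t(x) < 0 for t = 1,…,b₂}, where all the polynomials p_k, q_ℓ, r_t are real polynomials in N variables of total degree at most d, and set b = b₁ + b₂. Then for every affine subspace L ⊆ ℝ^N, the set U ∩ L, equipped with the subspace topology, has at most (2d)^{N+b} connected components. -/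
section Aux

open MvPolynomial

theorem sac_sep {E : Type*} [TopologicalSpace E] [T2Space E] (K : ℕ → Set E)
    (hK : Antitone K) (hc : ∀ n, IsCompact (K n)) (x y : E) 
    (h : ∀ n, y ∈ connectedComponentIn (K n) x) :
    y ∈ connectedComponentIn (⋂ n, K n) x := by
  classical
  have hx : ∀ n, x ∈ K n := fun n => by
    rw [← connectedComponentIn_nonempty_iff]; exact ⟨y, h n⟩
  set C : ℕ → Set E := fun n => connectedComponentIn (K n) x with hC
  have hCcomp : ∀ n, IsCompact (C n) := by
    intro n
    have : CompactSpace (K n) := isCompact_iff_compactSpace.1 (hc n)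
    simp only [hC]
    rw [connectedComponentIn_eq_image (hx n)]
    exact (isClosed_connectedComponent.isCompact).image continuous_subtype_val
  have hCanti : Antitone C := fun m n hmn => connectedComponentIn_mono x (hK hmn)
  have hdir : Directed (· ⊇ ·) C := hCanti.directed_ge
  have hclosed : IsClosed (⋂ n, C n) := isClosed_iInter fun n => (hCcomp n).isClosed
  have hcpt : IsCompact (⋂ n, C n) := (hCcomp 0).of_isClosed_subset hclosed (Set.iInter_subset _ 0)
  have hpre : IsPreconnected (⋂ n, C n) := by
    rw [isPreconnected_iff_subset_of_fully_disjoint_closed hclosed]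
    intro u v hu hv huv hd
    have h1 : IsCompact ((⋂ n, C n) ∩ u) := hcpt.inter_right hu
    have h2 : IsCompact ((⋂ n, C n) ∩ v) := hcpt.inter_right hv
    obtain ⟨U, W, hU, hW, hsU, hsW, hUW⟩ := SeparatedNhds.of_isCompact_isCompact h1 h2
      (hd.mono Set.inter_subset_right Set.inter_subset_right)
    obtain ⟨n, hn⟩ := exists_subset_nhds_of_isCompact (V := C) (U := U ∪ W) hdir hCcomp (by
      intro z hz
      refine (hU.union hW).mem_nhds ?_
      rcases huv hz with hz' | hz'
      · exact Or.inl (hsU ⟨hz, hz'⟩)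
      · exact Or.inr (hsW ⟨hz, hz'⟩))
    have hp : IsPreconnected (C n) := isPreconnected_connectedComponentIn
    rcases isPreconnected_iff_subset_of_disjoint.1 hp U W hU hW hn (by
      rw [hUW.inter_eq]; simp) with hh | hh
    · left
      intro z hz
      rcases huv hz with hz' | hz'
      · exact hz'
      · exact (Set.disjoint_left.1 hUW (hh (Set.mem_iInter.1 hz n)) (hsW ⟨hz, hz'⟩)).elim
    · right
      intro z hz
      rcases huv hz with hz' | hz'
      · exact (Set.disjoint_left.1 hUW (hsU ⟨hz, hz'⟩) (hh (Set.mem_iInter.1 hz n))).elim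
      · exact hz'
  exact hpre.subset_connectedComponentIn
    (Set.mem_iInter.2 fun n => mem_connectedComponentIn (hx n))
    (Set.iInter_mono fun n => connectedComponentIn_subset _ _) (Set.mem_iInter.2 h)

theorem sac_interp {σ : Type*} (S : Finset (σ → ℝ)) (f : S → ℝ) :
    ∃ Q : MvPolynomial σ ℝ, ∀ s : S, eval s.1 Q = f s := by
  classical
  have h1 : ∀ s t : S, s ≠ t → ∃ Q : MvPolynomial σ ℝ, eval t.1 Q = 0 ∧ eval s.1 Q = 1 := by
    intro s t hst
    have : s.1 ≠ t.1 := fun h => hst (Subtype.ext h)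
    obtain ⟨j, hj⟩ := Function.ne_iff.1 this
    refine ⟨C (s.1 j - t.1 j)⁻¹ * (X j - C (t.1 j)), by simp, ?_⟩
    have : s.1 j - t.1 j ≠ 0 := sub_ne_zero.2 hj
    simp [this]
  choose! Q hQ0 hQ1 using h1
  refine ⟨∑ s : S, C (f s) * ∏ t ∈ Finset.univ.erase s, Q s t, fun s => ?_⟩
  rw [map_sum, Finset.sum_eq_single s]
  · rw [map_mul, eval_C, map_prod, Finset.prod_eq_one, mul_one]
    intro t ht
    exact hQ1 s t (Finset.ne_of_mem_erase ht).symm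
  · intro t _ hts
    rw [map_mul, map_prod, Finset.prod_eq_zero (i := s), mul_zero]
    · simp [hts.symm]
    · exact hQ0 t s hts
  · simp

theorem sac_bezout {σ : Type*} [Fintype σ] (D : ℕ) (c : ℝ) (hc : c ≠ 0)
    (H : σ → MvPolynomial σ ℝ) (hH : ∀ j, (H j).totalDegree < D)
    (S : Finset (σ → ℝ)) (hS : ∀ s ∈ S, ∀ j, c * s j ^ D + eval s (H j) = 0) :
    S.card ≤ D ^ Fintype.card σ := by
  classical
  let ev : MvPolynomial σ ℝ →ₗ[ℝ] (S → ℝ) := LinearMap.pi fun s => (aeval s.1).toLinearMap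
  have hev : ∀ Q s, ev Q s = eval s.1 Q := fun Q s => by simp [ev, aeval_eq_eval]
  let b : (σ → Fin D) → (S → ℝ) := fun a =>
    ev (monomial (Finsupp.equivFunOnFinite.symm fun j => (a j : ℕ)) 1)
  have key : ∀ n : ℕ, ∀ Q : MvPolynomial σ ℝ, Q.totalDegree < n →
      ev Q ∈ Submodule.span ℝ (Set.range b) := by
    intro n
    induction n with
    | zero => intro Q h; omega
    | succ n ih =>
      intro Q hQ
      rw [Q.as_sum, map_sum]
      refine Submodule.sum_mem _ fun a ha => ?_
      have hdeg : (a.sum fun _ e => e) ≤ n := (le_totalDegree ha).trans (by omega)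
      have : monomial a (coeff a Q) = (coeff a Q) • monomial a (1 : ℝ) := by
        rw [smul_monomial]; simp
      rw [this, map_smul]
      refine Submodule.smul_mem _ _ ?_
      by_cases hr : ∀ j, a j < D
      · refine Submodule.subset_span ⟨fun j => ⟨a j, hr j⟩, ?_⟩
        simp only [b]
        have : (Finsupp.equivFunOnFinite.symm fun j => a j) = a := by ext; simp
        rw [this]
      · push Not at hr
        obtain ⟨j, hj⟩ := hr
        have hle : Finsupp.single j D ≤ a := by
          intro i
          by_cases hij : j = i
          · subst hij; simpa using hj
          · simp [hij]
        set a' := a - Finsupp.single j D with ha'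
        have haa : a = a' + Finsupp.single j D := (tsub_add_cancel_of_le hle).symm
        have hd' : (a.sum fun _ e => e) = (a'.sum fun _ e => e) + D := by
          rw [haa, Finsupp.sum_add_index' (by simp) (by simp)]; simp
        have e1 : ev (monomial a 1) = ev (monomial a' 1 * (C (-c⁻¹) * H j)) := by
          funext s
          rw [hev, hev, haa]
          have h2 := hS s.1 s.2 j
          have h3 : s.1 j ^ D = -c⁻¹ * eval s.1 (H j) := by
            field_simp; linarith
          have h4 : monomial (a' + Finsupp.single j D) (1:ℝ)
              = monomial a' 1 * monomial (Finsupp.single j D) 1 := by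
            rw [monomial_mul, mul_one]
          rw [h4, map_mul, map_mul, map_mul, eval_C, ← h3]
          congr 1
          simp [eval_monomial]
        rw [e1]
        apply ih
        have t1 := totalDegree_mul (monomial a' (1:ℝ)) (C (-c⁻¹) * H j)
        have t2 := totalDegree_mul (C (-c⁻¹)) (H j)
        have t3 := hH j
        rw [totalDegree_C] at t2
        have t4 : (monomial a' (1:ℝ)).totalDegree = a'.sum fun _ e => e :=
          totalDegree_monomial _ one_ne_zero
        omega
  have htop : Submodule.span ℝ (Set.range b) = ⊤ := by
    rw [eq_top_iff]
    intro f _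
    obtain ⟨Q, hQ⟩ := sac_interp S f
    have : ev Q = f := funext fun s => by rw [hev, hQ]
    rw [← this]
    exact key _ Q (Nat.lt_succ_self _)
  have h := finrank_range_le_card (R := ℝ) b
  rw [Set.finrank, htop, finrank_top] at h
  simpa using h

theorem sac_hasDeriv {σ : Type*} [DecidableEq σ] (F : MvPolynomial σ ℝ) (y : σ → ℝ) (j : σ) :
    HasDerivAt (fun t => eval (Function.update y j t) F) (eval y (pderiv j F)) (y j) := by
  induction F using MvPolynomial.induction_on with
  | C a => simpa using hasDerivAt_const _ _
  | add p q hp hq =>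
    simp only [map_add]
    exact hp.add hq
  | mul_X p i hp =>
    have hX : HasDerivAt (fun t => Function.update y j t i) (eval y (pderiv j (X i))) (y j) := by
      by_cases h : i = j
      · subst h
        simp only [Function.update_self, pderiv_X_self, map_one]
        exact hasDerivAt_id _
      · simpa [h, pderiv_X_of_ne h] using hasDerivAt_const _ _
    have := hp.mul hX
    simp only [map_mul, eval_X]
    have e : eval y (pderiv j (p * X i)) = eval y (pderiv j p) * Function.update y j (y j) i +
        eval (Function.update y j (y j)) p * eval y (pderiv j (X i)) := by
      rw [pderiv_mul]; simp
    rw [e]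
    exact this

theorem sac_critical {σ : Type*} [Fintype σ] (F : MvPolynomial σ ℝ) (y : σ → ℝ) 
    (h : IsLocalMin (fun x => eval x F) y) (j : σ) : eval y (pderiv j F) = 0 := by
  classical
  have hc : Continuous fun t => Function.update y j t := by fun_prop
  have h' : IsLocalMin (fun t => eval (Function.update y j t) F) (y j) := by
    have := hc.tendsto (y j)
    rw [Function.update_eq_self] at this
    have h2 := this.eventually h
    simpa [IsLocalMin, IsMinFilter] using h2
  exact h'.hasDerivAt_eq_zero (sac_hasDeriv F y j)

theorem sac_deg_pderiv {σ : Type*} (F : MvPolynomial σ ℝ) (j : σ) (n : ℕ) (hn : 0 < n)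
    (h : F.totalDegree ≤ n) : (pderiv j F).totalDegree < n := by
  classical
  rw [totalDegree, Finset.sup_lt_iff (by simpa using hn)]
  intro m hm
  rw [mem_support_iff, coeff_pderiv] at hm
  have := le_totalDegree (p := F) (s := m + Finsupp.single j 1)
    (by rw [mem_support_iff]; exact left_ne_zero_of_mul hm)
  rw [Finsupp.sum_add_index' (by simp) (by simp)] at this
  simp at this
  omega

theorem sac_main {σ : Type*} [Fintype σ] (P : MvPolynomial σ ℝ) (d : ℕ) (hd : 1 ≤ d)
    (hdeg : P.totalDegree ≤ 2 * d) (hpos : ∀ x, 0 ≤ eval x P)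
    {ι : Type*} [Fintype ι] (x : ι → (σ → ℝ)) (hx : ∀ i, eval (x i) P = 0)
    (hsep : ∀ i j, i ≠ j → x j ∉ connectedComponentIn {z | eval z P = 0} (x i)) :
    Fintype.card ι ≤ (2 * d) ^ Fintype.card σ := by
  classical
  have hcont : ∀ Q : MvPolynomial σ ℝ, Continuous fun z => eval z Q := fun Q => Q.continuous_eval
  obtain ⟨R, hR⟩ : ∃ R : ℝ, ∀ i, ∑ j, x i j ^ 2 < R := by
    obtain ⟨R, hR⟩ := (Set.finite_range fun i => ∑ j, x i j ^ 2).bddAbove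
    exact ⟨R + 1, fun i => lt_of_le_of_lt (hR ⟨i, rfl⟩) (lt_add_one R)⟩
  let g : ℝ → MvPolynomial σ ℝ := fun ε => P + C ε * (∑ j, X j ^ 2 - C R)
  have hg : ∀ ε z, eval z (g ε) = eval z P + ε * (∑ j, z j ^ 2 - R) := by
    intro ε z; simp [g]
  let K : ℝ → Set (σ → ℝ) := fun ε => {z | eval z (g ε) ≤ 0}
  have hKle : ∀ ε, 0 < ε → ∀ z ∈ K ε, ∑ j, z j ^ 2 ≤ R := by
    intro ε hε z hz
    have h1 : eval z (g ε) ≤ 0 := hz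
    rw [hg] at h1
    have h2 := hpos z
    by_contra h3
    push Not at h3
    have := mul_pos hε (sub_pos.2 h3)
    linarith
  have hKc : ∀ ε, 0 < ε → IsCompact (K ε) := by
    intro ε hε
    refine Metric.isCompact_of_isClosed_isBounded (isClosed_le (hcont _) continuous_const) ?_
    refine (Metric.isBounded_closedBall (x := (0 : σ → ℝ)) (r := R + 1)).subset ?_
    intro z hz
    have h1 := hKle ε hε z hz
    have h0 : 0 ≤ R := le_trans (Finset.sum_nonneg fun j _ => sq_nonneg (z j)) h1
    rw [mem_closedBall_zero_iff, pi_norm_le_iff_of_nonneg (by linarith)]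
    intro j
    have h2 : z j ^ 2 ≤ R :=
      (Finset.single_le_sum (f := fun j => z j ^ 2) (fun j _ => sq_nonneg (z j))
        (Finset.mem_univ j)).trans h1
    rw [Real.norm_eq_abs, abs_le]
    constructor <;> nlinarith
  have hKmono : ∀ ε ε', 0 < ε → ε ≤ ε' → K ε ⊆ K ε' := by
    intro ε ε' hε hle z hz
    have h1 := hKle ε hε z hz
    have h2 : eval z (g ε) ≤ 0 := hz
    change eval z (g ε') ≤ 0
    rw [hg] at h2 ⊢
    nlinarith
  let u : ℕ → ℝ := fun n => 1 / ((n : ℝ) + 1)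
  have hu : ∀ n, 0 < u n := fun n => Nat.one_div_pos_of_nat
  have huanti : Antitone u := fun m n h => Nat.one_div_le_one_div h
  have hKanti : Antitone fun n => K (u n) := fun m n h => hKmono _ _ (hu n) (huanti h)
  have hinter : (⋂ n, K (u n)) ⊆ {z | eval z P = 0} := by
    intro z hz
    rw [Set.mem_iInter] at hz
    refine le_antisymm ?_ (hpos z)
    have ht : Filter.Tendsto (fun n => eval z P + u n * (∑ j, z j ^ 2 - R)) Filter.atTop
        (nhds (eval z P + 0 * (∑ j, z j ^ 2 - R))) :=
      ((tendsto_one_div_add_atTop_nhds_zero_nat (𝕜 := ℝ)).mul_const _).const_add _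
    rw [zero_mul, add_zero] at ht
    refine le_of_tendsto' ht fun n => ?_
    rw [← hg]; exact hz n
  have hev : ∀ i j, i ≠ j → ∃ n, x j ∉ connectedComponentIn (K (u n)) (x i) := by
    intro i j hij
    by_contra! hcon
    exact hsep i j hij (connectedComponentIn_mono _ hinter
      (sac_sep (fun n => K (u n)) hKanti (fun n => hKc _ (hu n)) _ _ hcon))
  choose! n hn using hev
  obtain ⟨M, hM⟩ : ∃ M, ∀ i j, n i j ≤ M := by
    obtain ⟨M, hM⟩ := (Set.finite_range fun p : ι × ι => n p.1 p.2).bddAbove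
    exact ⟨M, fun i j => hM ⟨(i, j), rfl⟩⟩
  obtain ⟨ε, hε, hsepε⟩ : ∃ ε : ℝ, 0 < ε ∧
      ∀ i j, i ≠ j → x j ∉ connectedComponentIn (K ε) (x i) :=
    ⟨u M, hu M, fun i j hij h => hn i j hij (connectedComponentIn_mono _ (hKanti (hM i j)) h)⟩
  have hxneg : ∀ i, eval (x i) (g ε) < 0 := by
    intro i
    rw [hg, hx, zero_add]
    exact mul_neg_of_pos_of_neg hε (by linarith [hR i])
  obtain ⟨c, hc, hcx⟩ : ∃ c : ℝ, 0 < c ∧ ∀ i, eval (x i) (g ε) ≤ -c := by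
    have hfin : (Set.range fun i => eval (x i) (g ε)).Finite := Set.finite_range _
    rcases isEmpty_or_nonempty ι with hι | hι
    · exact ⟨1, one_pos, fun i => (hι.false i).elim⟩
    · obtain ⟨i0, hi0⟩ := Finite.exists_max fun i => eval (x i) (g ε)
      exact ⟨-eval (x i0) (g ε), by linarith [hxneg i0], fun i => by linarith [hi0 i]⟩
  let T : MvPolynomial σ ℝ := ∑ j, X j ^ (2 * d + 1)
  obtain ⟨B, hB⟩ := (hKc ε hε).exists_bound_of_continuousOn (hcont T).continuousOn
  obtain ⟨η, hη, hηB⟩ : ∃ η : ℝ, 0 < η ∧ 2 * η * |B| < c := by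
    refine ⟨c / (2 * (|B| + 1)), by positivity, ?_⟩
    have : 0 ≤ |B| := abs_nonneg B
    rw [show 2 * (c / (2 * (|B| + 1))) * |B| = c * |B| / (|B| + 1) by field_simp,
      div_lt_iff₀ (by linarith)]
    nlinarith
  let F : MvPolynomial σ ℝ := g ε + C η * T
  have hF : ∀ z, eval z F = eval z (g ε) + η * eval z T := fun z => by simp [F]
  have hmin : ∀ i, ∃ y ∈ connectedComponentIn (K ε) (x i), IsLocalMin (fun z => eval z F) y := by
    intro i
    have hxi : x i ∈ K ε := (hxneg i).le
    have hcomp : IsCompact (connectedComponentIn (K ε) (x i)) := by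
      have : CompactSpace (K ε) := isCompact_iff_compactSpace.1 (hKc ε hε)
      rw [connectedComponentIn_eq_image hxi]
      exact (isClosed_connectedComponent.isCompact).image continuous_subtype_val
    obtain ⟨y, hy, hymin⟩ := hcomp.exists_isMinOn ⟨_, mem_connectedComponentIn hxi⟩
      (hcont F).continuousOn
    refine ⟨y, hy, ?_⟩
    have hyK : y ∈ K ε := connectedComponentIn_subset _ _ hy
    have hylt : eval y (g ε) < 0 := by
      have h1 : eval y F ≤ eval (x i) F := hymin (mem_connectedComponentIn hxi)
      rw [hF, hF] at h1
      have h2 := abs_le.1 ((hB y hyK).trans (le_abs_self B))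
      have h3 := abs_le.1 ((hB (x i) hxi).trans (le_abs_self B))
      have h4 := hcx i
      have h5 := mul_le_mul_of_nonneg_left h2.1 hη.le
      have h6 := mul_le_mul_of_nonneg_left h3.2 hη.le
      linarith
    have hnhds : K ε ∈ nhds y :=
      Filter.mem_of_superset ((isOpen_lt (hcont (g ε)) continuous_const).mem_nhds hylt)
        fun z (hz : eval z (g ε) < 0) => hz.le
    have hn2 := connectedComponentIn_mem_nhds hnhds
    rw [← connectedComponentIn_eq hy] at hn2
    exact hymin.isLocalMin hn2
  choose y hy hylm using hmin
  have hyinj : Function.Injective y := by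
    intro i j hij
    by_contra hne
    apply hsepε i j hne
    rw [connectedComponentIn_eq (hy i), hij, ← connectedComponentIn_eq (hy j)]
    exact mem_connectedComponentIn (hxneg j).le
  have hgdeg : (g ε).totalDegree ≤ 2 * d := by
    refine (totalDegree_add _ _).trans (max_le hdeg ?_)
    refine (totalDegree_mul _ _).trans ?_
    rw [totalDegree_C, zero_add]
    refine (totalDegree_sub_C_le _ _).trans ?_
    refine totalDegree_finsetSum_le fun j _ => ?_
    rw [totalDegree_X_pow]; omega
  have hbez := sac_bezout (2 * d) (η * (2 * d + 1 : ℕ)) (by positivity)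
    (fun j => pderiv j (g ε)) (fun j => sac_deg_pderiv _ j _ (by omega) hgdeg)
    (Finset.univ.image y) (by
      intro s hs j
      obtain ⟨i, -, rfl⟩ := Finset.mem_image.1 hs
      have h1 := sac_critical F (y i) (hylm i) j
      have h2 : pderiv j T = C ((2 * d + 1 : ℕ) : ℝ) * X j ^ (2 * d) := by
        simp only [T, map_sum]
        rw [Finset.sum_eq_single j]
        · rw [pderiv_pow, pderiv_X_self, mul_one, map_natCast, Nat.add_sub_cancel]
        · intro k _ hk
          rw [pderiv_pow, pderiv_X_of_ne hk, mul_zero]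
        · simp
      have h3 : eval (y i) (pderiv j F)
          = eval (y i) (pderiv j (g ε)) + η * ((2 * d + 1 : ℕ) * y i j ^ (2 * d)) := by
        simp only [F]
        rw [map_add, pderiv_C_mul, h2]
        simp
      rw [h3] at h1
      linarith)
  rw [Finset.card_image_of_injective _ hyinj, Finset.card_univ] at hbez
  exact hbez

theorem sac_core (N d : ℕ) (hd : 2 ≤ d) {κ α β : Type*} [Fintype κ] [Fintype α] [Fintype β]
    (p : κ → MvPolynomial (Fin N) ℝ)
    (q : α → MvPolynomial (Fin N) ℝ)
    (r : β → MvPolynomial (Fin N) ℝ)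
    (hp : ∀ i, (p i).totalDegree ≤ d)
    (hq : ∀ i, (q i).totalDegree ≤ d)
    (hr : ∀ i, (r i).totalDegree ≤ d)
    (U : Set (EuclideanSpace ℝ (Fin N)))
    (hU : ∀ x : EuclideanSpace ℝ (Fin N), x ∈ U ↔ 
          (∀ i, MvPolynomial.eval x (p i) = 0) ∧
          (∀ i, MvPolynomial.eval x (q i) ≤ 0) ∧
          (∀ i, MvPolynomial.eval x (r i) < 0))
    (S : Finset (ConnectedComponents U)) :
    S.card ≤ (2 * d) ^ (N + (Fintype.card α + Fintype.card β)) := by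
  classical
  have hrep : ∀ c : ConnectedComponents U, ∃ x : U, (x : ConnectedComponents U) = c :=
    ConnectedComponents.surjective_coe
  choose rep hrep using hrep
  let x : S → EuclideanSpace ℝ (Fin N) := fun c => (rep c.1).1
  have hxU : ∀ c, x c ∈ U := fun c => (rep c.1).2
  obtain ⟨ε, hε, hεr⟩ : ∃ ε : ℝ, 0 < ε ∧ ∀ c t, eval (x c) (r t) ≤ -ε := by
    rcases isEmpty_or_nonempty (S × β) with h | h
    · exact ⟨1, one_pos, fun c t => (h.false (c, t)).elim⟩
    · obtain ⟨i0, hi0⟩ := Finite.exists_max fun i : S × β => eval (x i.1) (r i.2)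
      exact ⟨-eval (x i0.1) (r i0.2), by linarith [((hU _).1 (hxU i0.1)).2.2 i0.2],
        fun c t => by linarith [hi0 (c, t)]⟩
  let σ := Fin N ⊕ (α ⊕ β)
  let P1 : κ → MvPolynomial σ ℝ := fun i => rename Sum.inl (p i)
  let P2 : α → MvPolynomial σ ℝ := fun i => rename Sum.inl (q i) + X (Sum.inr (Sum.inl i)) ^ 2
  let P3 : β → MvPolynomial σ ℝ := fun i =>
    rename Sum.inl (r i) + C ε + X (Sum.inr (Sum.inr i)) ^ 2
  let P : MvPolynomial σ ℝ := ∑ i, P1 i ^ 2 + ∑ i, P2 i ^ 2 + ∑ i, P3 i ^ 2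
  have hd1 : ∀ i, (P1 i).totalDegree ≤ d := fun i => (totalDegree_rename_le _ _).trans (hp i)
  have hd2 : ∀ i, (P2 i).totalDegree ≤ d := fun i => by
    refine (totalDegree_add _ _).trans (max_le ((totalDegree_rename_le _ _).trans (hq i)) ?_)
    rw [totalDegree_X_pow]; exact hd
  have hd3 : ∀ i, (P3 i).totalDegree ≤ d := fun i => by
    refine (totalDegree_add _ _).trans (max_le ((totalDegree_add _ _).trans
      (max_le ((totalDegree_rename_le _ _).trans (hr i)) ?_)) ?_)
    · rw [totalDegree_C]; omega
    · rw [totalDegree_X_pow]; exact hd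
  have hsq : ∀ Q : MvPolynomial σ ℝ, Q.totalDegree ≤ d → (Q ^ 2).totalDegree ≤ 2 * d :=
    fun Q hQ => (totalDegree_pow _ _).trans (by omega)
  have hPd : P.totalDegree ≤ 2 * d := by
    refine (totalDegree_add _ _).trans (max_le ((totalDegree_add _ _).trans (max_le ?_ ?_)) ?_)
    · exact totalDegree_finsetSum_le fun i _ => hsq _ (hd1 i)
    · exact totalDegree_finsetSum_le fun i _ => hsq _ (hd2 i)
    · exact totalDegree_finsetSum_le fun i _ => hsq _ (hd3 i)
  have hPe : ∀ w, eval w P = ∑ i, eval w (P1 i) ^ 2 + ∑ i, eval w (P2 i) ^ 2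
      + ∑ i, eval w (P3 i) ^ 2 := fun w => by simp only [P, map_add, map_sum, map_pow]
  have hn1 : ∀ w, 0 ≤ ∑ i, eval w (P1 i) ^ 2 := fun w => Finset.sum_nonneg fun i _ => sq_nonneg _
  have hn2 : ∀ w, 0 ≤ ∑ i, eval w (P2 i) ^ 2 := fun w => Finset.sum_nonneg fun i _ => sq_nonneg _
  have hn3 : ∀ w, 0 ≤ ∑ i, eval w (P3 i) ^ 2 := fun w => Finset.sum_nonneg fun i _ => sq_nonneg _
  have hPpos : ∀ w, 0 ≤ eval w P := fun w => by
    rw [hPe]; linarith [hn1 w, hn2 w, hn3 w]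
  have hP0 : ∀ w, eval w P = 0 ↔ (∀ i, eval w (P1 i) = 0) ∧ (∀ i, eval w (P2 i) = 0) ∧
      (∀ i, eval w (P3 i) = 0) := by
    intro w
    rw [hPe]
    constructor
    · intro h
      have e1 : ∑ i, eval w (P1 i) ^ 2 = 0 := by linarith [hn1 w, hn2 w, hn3 w]
      have e2 : ∑ i, eval w (P2 i) ^ 2 = 0 := by linarith [hn1 w, hn2 w, hn3 w]
      have e3 : ∑ i, eval w (P3 i) ^ 2 = 0 := by linarith [hn1 w, hn2 w, hn3 w]
      rw [Finset.sum_eq_zero_iff_of_nonneg fun i _ => sq_nonneg _] at e1 e2 e3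
      exact ⟨fun i => by simpa using e1 i (Finset.mem_univ i),
        fun i => by simpa using e2 i (Finset.mem_univ i),
        fun i => by simpa using e3 i (Finset.mem_univ i)⟩
    · rintro ⟨h1, h2, h3⟩
      simp [h1, h2, h3]
  let π : (σ → ℝ) → EuclideanSpace ℝ (Fin N) := fun w => WithLp.toLp 2 (fun i => w (Sum.inl i))
  have hπ : Continuous π := by
    refine (PiLp.continuous_toLp 2 _).comp ?_
    fun_prop
  have hev : ∀ (w : σ → ℝ) Q, eval w (rename Sum.inl Q) = eval (π w) Q := by
    intro w Q
    rw [eval_rename]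
    rfl
  have hπU : ∀ w, eval w P = 0 → π w ∈ U := by
    intro w hw
    obtain ⟨h1, h2, h3⟩ := (hP0 w).1 hw
    rw [hU]
    refine ⟨fun i => ?_, fun i => ?_, fun i => ?_⟩
    · rw [← hev]; exact h1 i
    · have := h2 i
      simp only [P2, map_add, map_pow, eval_X, hev] at this
      nlinarith [sq_nonneg (w (Sum.inr (Sum.inl i)))]
    · have := h3 i
      simp only [P3, map_add, map_pow, eval_X, eval_C, hev] at this
      nlinarith [sq_nonneg (w (Sum.inr (Sum.inr i)))]
  let w : S → (σ → ℝ) := fun c => Sum.elim (fun i => x c i)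
    (Sum.elim (fun i => √(-eval (x c) (q i))) (fun i => √(-eval (x c) (r i) - ε)))
  have hπw : ∀ c, π (w c) = x c := fun c => by ext i; simp [π, w]
  have hw : ∀ c, eval (w c) P = 0 := by
    intro c
    obtain ⟨h1, h2, h3⟩ := (hU _).1 (hxU c)
    rw [hP0]
    refine ⟨fun i => ?_, fun i => ?_, fun i => ?_⟩
    · simp only [P1]; rw [hev, hπw]; exact h1 i
    · simp only [P2, map_add, map_pow, eval_X, hev, hπw]
      simp only [w, Sum.elim_inr, Sum.elim_inl]
      rw [Real.sq_sqrt (by linarith [h2 i])]; ring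
    · simp only [P3, map_add, map_pow, eval_X, eval_C, hev, hπw]
      simp only [w, Sum.elim_inr]
      rw [Real.sq_sqrt (by linarith [hεr c i])]; ring
  have := sac_main P d (by omega) hPd hPpos w hw (by
    intro i j hij hmem
    have h1 : x j ∈ connectedComponentIn U (x i) := by
      have hA : IsPreconnected (π '' connectedComponentIn {z | eval z P = 0} (w i)) :=
        isPreconnected_connectedComponentIn.image _ hπ.continuousOn
      refine hA.subset_connectedComponentIn
        ⟨w i, mem_connectedComponentIn (hw i), hπw i⟩ ?_ ⟨w j, hmem, hπw j⟩
      rintro _ ⟨z, hz, rfl⟩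
      have hz2 := connectedComponentIn_subset _ _ hz
      exact hπU z hz2
    rw [connectedComponentIn_eq_image (hxU i)] at h1
    obtain ⟨z, hz, hzx⟩ := h1
    have hz' : z = rep j.1 := Subtype.ext hzx
    rw [hz'] at hz
    have h2 := ConnectedComponents.coe_eq_coe'.2 hz
    change ((rep j.1 : U) : ConnectedComponents U) = (rep i.1 : U) at h2
    rw [hrep, hrep] at h2
    exact hij (Subtype.ext h2.symm))
  simpa [σ] using this

theorem sac_affine (N : ℕ) (L : AffineSubspace ℝ (EuclideanSpace ℝ (Fin N)))
    (hL : (L : Set (EuclideanSpace ℝ (Fin N))).Nonempty) :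
    ∃ l : Fin N → MvPolynomial (Fin N) ℝ, (∀ i, (l i).totalDegree ≤ 1) ∧
      ∀ x : EuclideanSpace ℝ (Fin N), x ∈ L ↔ ∀ i, eval x (l i) = 0 := by
  obtain ⟨x0, hx0⟩ := hL
  let A := L.directionᗮ.starProjection
  let e : Fin N → EuclideanSpace ℝ (Fin N) := fun j => EuclideanSpace.single j 1
  refine ⟨fun i => ∑ j, C (A (e j) i) * (X j - C (x0 j)), fun i => ?_, fun x => ?_⟩
  · refine totalDegree_finsetSum_le fun j _ => (totalDegree_mul _ _).trans ?_
    rw [totalDegree_C, zero_add]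
    refine (totalDegree_sub_C_le _ _).trans ?_
    rw [totalDegree_X]
  · have h1 : x ∈ L ↔ A (x - x0) = 0 := by
      rw [Submodule.starProjection_apply_eq_zero_iff, Submodule.orthogonal_orthogonal,
        ← vsub_eq_sub, AffineSubspace.vsub_right_mem_direction_iff_mem hx0]
    have h2 : x - x0 = ∑ j, (x j - x0 j) • e j := by
      ext i
      simp [e, Finset.sum_apply, Pi.single_apply]
    rw [h1, h2, map_sum, PiLp.ext_iff]
    refine forall_congr' fun i => ?_
    have h3 : (∑ j, A ((x j - x0 j) • e j)) i
        = eval x (∑ j, C (A (e j) i) * (X j - C (x0 j))) := by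
      simp [mul_comm]
    rw [h3]; rfl

end Aux

/-- The intersection of a basic semialgebraic set (defined by equalities `pₖ = 0`,
weak inequalities `q_ℓ ≤ 0` and strict inequalities `r_t < 0`, all polynomials of
total degree at most `d`, with `d ≥ 2` and `b = b₁ + b₂` inequality constraints)
with any affine subspace has at most `(2d)^(N+b)` connected components. -/
theorem semialgebraic_inter_affine_components (N d k b₁ b₂ : ℕ)
    (hN : 1 ≤ N) (hd : 2 ≤ d)
    (p : Fin k → MvPolynomial (Fin N) ℝ)
    (q : Fin b₁ → MvPolynomial (Fin N) ℝ)
    (r : Fin b₂ → MvPolynomial (Fin N) ℝ)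
    (hp : ∀ i, (p i).totalDegree ≤ d)
    (hq : ∀ i, (q i).totalDegree ≤ d)
    (hr : ∀ i, (r i).totalDegree ≤ d)
    (L : AffineSubspace ℝ (EuclideanSpace ℝ (Fin N)))
    (hL : (L : Set (EuclideanSpace ℝ (Fin N))).Nonempty) :
    Finite (ConnectedComponents
      ↥({x : EuclideanSpace ℝ (Fin N) |
          (∀ i, MvPolynomial.eval x (p i) = 0) ∧
          (∀ i, MvPolynomial.eval x (q i) ≤ 0) ∧
          (∀ i, MvPolynomial.eval x (r i) < 0)}
        ∩ (L : Set (EuclideanSpace ℝ (Fin N))))) ∧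
    Nat.card (ConnectedComponents
      ↥({x : EuclideanSpace ℝ (Fin N) |
          (∀ i, MvPolynomial.eval x (p i) = 0) ∧
          (∀ i, MvPolynomial.eval x (q i) ≤ 0) ∧
          (∀ i, MvPolynomial.eval x (r i) < 0)}
        ∩ (L : Set (EuclideanSpace ℝ (Fin N)))))
      ≤ (2 * d) ^ (N + (b₁ + b₂)) := by
  obtain ⟨l, hl, hlL⟩ := sac_affine N L hL
  set U := ({x : EuclideanSpace ℝ (Fin N) |
          (∀ i, MvPolynomial.eval x (p i) = 0) ∧
          (∀ i, MvPolynomial.eval x (q i) ≤ 0) ∧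
          (∀ i, MvPolynomial.eval x (r i) < 0)}
        ∩ (L : Set (EuclideanSpace ℝ (Fin N)))) with hUdef
  have key : ∀ S : Finset (ConnectedComponents U), S.card ≤ (2 * d) ^ (N + (b₁ + b₂)) := by
    intro S
    have := sac_core N d hd (Sum.elim p l) q r (by
      rintro (i | i)
      · exact hp i
      · exact (hl i).trans (by omega)) hq hr U (by
      intro x
      rw [Sum.forall]
      simp only [Sum.elim_inl, Sum.elim_inr]
      rw [← hlL x, hUdef]
      simp only [Set.mem_inter_iff, Set.mem_ofPred_eq, SetLike.mem_coe]
      tauto) S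
    simpa using this
  have hfin : Finite (ConnectedComponents U) := by
    by_contra hinf
    rw [not_finite_iff_infinite] at hinf
    obtain ⟨S, hS⟩ := Infinite.exists_subset_card_eq (ConnectedComponents U)
      ((2 * d) ^ (N + (b₁ + b₂)) + 1)
    have := key S
    omega
  refine ⟨hfin, ?_⟩
  have := Fintype.ofFinite (ConnectedComponents U)
  rw [Nat.card_eq_fintype_card]
  exact key Finset.univ
end

section
/- There exists an absolute constant C > 0 with the following property. Let d ≥ 1 and n_1, …, n_d ≥ 2 be integers, let r ≥ 1 be an integer, let t > 0 and 0 < ε ≤ 2t. Let V be the set of tensors T ∈ ℝ^{n_1×⋯×n_d} of CP rank at most r with Frobenius norm ‖T‖_F ≤ t. Then there exists a finite subset F ⊆ V with log |F| ≤ r·(Σ_{i=1}^d n_i)·log(t/ε) + C·r·(Σ_{i=1}^d n_i)·(Σ_{i=1}^d log n_i) such that every T ∈ V lies within Frobenius distance ε of some element of F. -/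
/-- A tensor `T ∈ ℝ^{n₁ × ⋯ × n_d}` has CP rank at most `r` if it is a sum of `r`
rank-one (elementary) tensors. -/
def CPRankLE {d : ℕ} {n : Fin d → ℕ} (r : ℕ)
    (T : EuclideanSpace ℝ ((i : Fin d) → Fin (n i))) : Prop :=
  ∃ a : Fin r → (i : Fin d) → Fin (n i) → ℝ,
    ∀ k : (i : Fin d) → Fin (n i), T k = ∑ j : Fin r, ∏ i : Fin d, a j i (k i)


open Polynomial in
lemma cheb_kernel (m : ℕ) (hm : 1 ≤ m) : ∃ H : ℝ[X], H.natDegree ≤ m ∧ H.eval 0 = 1 ∧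
    ∀ s : ℝ, 0 < s → s ≤ 1 → |H.eval s| ≤ 1 / ((m:ℝ)^2 * s) := by
  set W : ℝ[X] := 1 - (Chebyshev.T ℝ m).comp (1 - C 2 * X) with hW
  have hm0 : (m:ℝ) ≠ 0 := by positivity
  have hW0 : W.eval 0 = 0 := by simp [hW]
  have hWQ : W = W.divX * X := by
    conv_lhs => rw [← divX_mul_X_add W]
    rw [coeff_zero_eq_eval_zero, hW0]; simp
  have hQ0 : W.divX.eval 0 = 2 * (m:ℝ)^2 := by
    have h1 : (derivative W).eval 0 = W.divX.eval 0 := by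
      conv_lhs => rw [hWQ]
      simp [derivative_mul]
    rw [← h1, hW]
    simp [derivative_comp, Chebyshev.T_derivative_eq_U]
    ring
  have hdeg : W.natDegree ≤ m := by
    rw [hW]
    refine (natDegree_sub_le _ _).trans ?_
    have h2 : (1 - C 2 * X : ℝ[X]).natDegree ≤ 1 := by compute_degree
    have := natDegree_comp_le (p := Chebyshev.T ℝ m) (q := (1 - C 2 * X : ℝ[X]))
    rw [Chebyshev.natDegree_T] at this
    simp only [Int.natAbs_natCast] at this
    simp only [natDegree_one]
    refine max_le (by omega) (this.trans ?_)
    nlinarith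
  refine ⟨C (1 / (2 * (m:ℝ)^2)) * W.divX, ?_, ?_, ?_⟩
  · refine (natDegree_C_mul_le _ _).trans ?_
    rw [natDegree_divX_eq_natDegree_tsub_one]; omega
  · rw [eval_mul, eval_C, hQ0]; field_simp
  · intro s hs hs1
    have h1 : W.eval s = W.divX.eval s * s := by
      conv_lhs => rw [hWQ]
      simp
    have h2 : |W.eval s| ≤ 2 := by
      have := Chebyshev.abs_eval_T_real_le_one (m:ℤ) (x := 1 - 2 * s) (by rw [abs_le]; constructor <;> linarith)
      rw [abs_le] at this ⊢
      simp only [hW, eval_sub, eval_one, eval_comp, eval_mul, eval_C, eval_X]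
      constructor <;> linarith [this.1, this.2]
    rw [eval_mul, eval_C, abs_mul, abs_of_pos (by positivity : (0:ℝ) < 1 / (2 * (m:ℝ)^2))]
    rw [h1, abs_mul, abs_of_pos hs] at h2
    rw [div_mul_eq_mul_div, one_mul, div_le_div_iff₀ (by positivity) (by positivity)]
    nlinarith [sq_nonneg (m:ℝ), mul_le_mul_of_nonneg_left h2 (sq_nonneg (m:ℝ))]

lemma finrank_restrictDegree_le (σ : Type) [Fintype σ] (e : ℕ) :
    Module.finrank ℝ (MvPolynomial.restrictDegree σ ℝ e) ≤ (e + 1) ^ Fintype.card σ := by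
  classical
  have b := MvPolynomial.basisRestrictSupport ℝ {n : σ →₀ ℕ | ∀ i, n i ≤ e}
  have h : Module.finrank ℝ (MvPolynomial.restrictDegree σ ℝ e)
    = Nat.card {n : σ →₀ ℕ | ∀ i, n i ≤ e} := Module.finrank_eq_nat_card_basis b
  rw [h]
  have := Nat.card_le_card_of_injective
    (fun n : {n : σ →₀ ℕ | ∀ i, n i ≤ e} => (fun i => (⟨n.1 i, Nat.lt_succ_of_le (n.2 i)⟩ : Fin (e+1)) : σ → Fin (e+1)))
    (by
      intro x y hxy
      apply Subtype.ext
      ext i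
      have := congrFun hxy i
      simpa using this)
  simpa using this

lemma rank_bound {σ ι : Type} [Fintype σ] [Fintype ι] (φ : ι → MvPolynomial σ ℝ)
    (hφ : ∀ k v, (φ k).degreeOf v ≤ 1) (Y : Finset (EuclideanSpace ℝ ι))
    (hY : ∀ y ∈ Y, ∃ a : σ → ℝ, ∀ k, y k = MvPolynomial.eval a (φ k))
    (q : Polynomial ℝ) (e : ℕ) (hq : q.natDegree ≤ e) (hq0 : q.eval 0 = 1)
    (hsum : ∀ y ∈ Y, ∑ z ∈ Y.filter (fun z => z ≠ y), |q.eval (dist y z ^ 2)| < 1) :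
    Y.card ≤ (2 * e + 1) ^ Fintype.card σ := by
  classical
  choose a ha using hY
  let S : Y → MvPolynomial σ ℝ := fun y => ∑ k, (φ k - MvPolynomial.C (y.1 k)) ^ 2
  let P : Y → MvPolynomial σ ℝ := fun y => Polynomial.aeval (S y) q
  have hS : ∀ y v, (S y).degreeOf v ≤ 2 := by
    intro y v
    refine (MvPolynomial.degreeOf_sum_le _ _ _).trans (Finset.sup_le fun k _ => ?_)
    refine (MvPolynomial.degreeOf_pow_le _ _ _).trans ?_
    have := MvPolynomial.degreeOf_sub_le v (φ k) (MvPolynomial.C (y.1 k))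
    rw [MvPolynomial.degreeOf_C] at this
    have := hφ k v
    have : max ((φ k).degreeOf v) 0 ≤ 1 := by simpa using this
    omega
  have hP : ∀ y, P y ∈ MvPolynomial.restrictDegree σ ℝ (2 * e) := by
    intro y
    rw [MvPolynomial.mem_restrictDegree_iff_sup]
    intro v
    rw [← MvPolynomial.degreeOf_def]
    change MvPolynomial.degreeOf v (Polynomial.aeval (S y) q) ≤ _
    rw [Polynomial.aeval_eq_sum_range]
    refine (MvPolynomial.degreeOf_sum_le _ _ _).trans (Finset.sup_le fun k hk => ?_)
    rw [MvPolynomial.smul_eq_C_mul]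
    refine (MvPolynomial.degreeOf_C_mul_le _ _ _).trans ?_
    refine (MvPolynomial.degreeOf_pow_le _ _ _).trans ?_
    have := hS y v
    have : k ≤ e := by have := Finset.mem_range.1 hk; omega
    nlinarith
  have heval : ∀ y z : Y, MvPolynomial.eval (a z.1 z.2) (P y) = q.eval (dist y.1 z.1 ^ 2) := by
    intro y z
    have h1 : MvPolynomial.eval (a z.1 z.2) (S y) = dist y.1 z.1 ^ 2 := by
      rw [EuclideanSpace.dist_eq, Real.sq_sqrt (Finset.sum_nonneg fun _ _ => sq_nonneg _)]
      simp only [S, map_sum, map_pow, map_sub, MvPolynomial.eval_C, ← ha]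
      refine Finset.sum_congr rfl fun k _ => ?_
      rw [Real.dist_eq, sq_abs]; ring
    rw [← h1]
    change MvPolynomial.eval (a z.1 z.2) (Polynomial.aeval (S y) q) = _
    rw [Polynomial.aeval_eq_sum_range, Polynomial.eval_eq_sum_range]
    simp [MvPolynomial.smul_eq_C_mul]
  let A : Matrix Y Y ℝ := Matrix.of fun y z => q.eval (dist y.1 z.1 ^ 2)
  have hdet : A.det ≠ 0 := by
    apply det_ne_zero_of_sum_row_lt_diag
    intro y
    have h1 : ‖A y y‖ = 1 := by simp [A, hq0]
    rw [h1]
    refine lt_of_le_of_lt (le_of_eq ?_) (hsum y.1 y.2)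
    have : ∀ z : Y, ‖A y z‖ = |q.eval (dist y.1 z.1 ^ 2)| := fun z => rfl
    simp_rw [this]
    refine Finset.sum_bij (fun z _ => z.1) ?_ ?_ ?_ ?_
    · intro z hz
      simp only [Finset.mem_erase, Finset.mem_univ, and_true] at hz
      simp [z.2]
      exact hz
    · intro x _ y _ h; exact Subtype.ext h
    · intro z hz
      simp only [Finset.mem_filter] at hz
      exact ⟨⟨z, hz.1⟩, by simp; exact fun h => hz.2 (congrArg Subtype.val h), rfl⟩
    · intros; rfl
  have hli : LinearIndependent ℝ (fun y => (⟨P y, hP y⟩ : MvPolynomial.restrictDegree σ ℝ (2*e))) := by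
    rw [Fintype.linearIndependent_iff]
    intro g hg
    have hg' : ∑ y, g y • P y = 0 := by
      have := congrArg Subtype.val hg
      simpa using this
    have : Matrix.vecMul g A = 0 := by
      ext z
      have := congrArg (MvPolynomial.eval (a z.1 z.2)) hg'
      simp only [map_sum, MvPolynomial.smul_eq_C_mul, map_mul, MvPolynomial.eval_C, heval, map_zero] at this
      simpa [Matrix.vecMul, dotProduct, A] using this
    have := Matrix.eq_zero_of_vecMul_eq_zero hdet this
    exact fun i => congrFun this i
  have := hli.fintype_card_le_finrank
  rw [Fintype.card_coe] at this
  exact this.trans (finrank_restrictDegree_le σ (2*e))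

open Polynomial in
lemma kernel_bound {σ ι : Type} [Fintype σ] [Fintype ι] (φ : ι → MvPolynomial σ ℝ)
    (hφ : ∀ k v, (φ k).degreeOf v ≤ 1) (Y : Finset (EuclideanSpace ℝ ι))
    (hY : ∀ y ∈ Y, ∃ a : σ → ℝ, ∀ k, y k = MvPolynomial.eval a (φ k))
    (D : ℝ) (hD : 0 < D) (hdiam : ∀ y ∈ Y, ∀ z ∈ Y, dist y z ≤ D)
    (m k : ℕ) (hm : 1 ≤ m)
    (hsum : ∀ y ∈ Y, ∑ z ∈ Y.filter (fun z => z ≠ y), (D / (m * dist y z)) ^ (2 * k) < 1) :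
    Y.card ≤ (2 * (k * m) + 1) ^ Fintype.card σ := by
  obtain ⟨H, hHd, hH0, hHb⟩ := cheb_kernel m hm
  refine rank_bound φ hφ Y hY ((H.comp (C (1 / D^2) * X)) ^ k) (k * m) ?_ ?_ ?_
  · refine natDegree_pow_le.trans (Nat.mul_le_mul_left k ?_)
    refine natDegree_comp_le.trans ?_
    have : (C (1 / D^2) * X : ℝ[X]).natDegree ≤ 1 := by compute_degree
    nlinarith
  · simp [hH0]
  · intro y hy
    refine lt_of_le_of_lt (Finset.sum_le_sum fun z hz => ?_) (hsum y hy)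
    simp only [Finset.mem_filter] at hz
    have hpos : 0 < dist y z := dist_pos.2 (Ne.symm hz.2)
    have hle := hdiam y hy z hz.1
    have := hHb (1 / D^2 * dist y z ^ 2) (by positivity) (by
      rw [div_mul_eq_mul_div, one_mul, div_le_one (by positivity)]
      gcongr)
    rw [pow_mul]
    simp only [eval_pow, eval_comp, eval_mul, eval_C, eval_X, abs_pow]
    refine pow_le_pow_left₀ (abs_nonneg _) (this.trans (le_of_eq ?_)) k
    have : (m:ℝ) ≠ 0 := by positivity
    field_simp

lemma packing_crude {σ ι : Type} [Fintype σ] [Fintype ι] (φ : ι → MvPolynomial σ ℝ)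
    (hφ : ∀ k v, (φ k).degreeOf v ≤ 1) (Y : Finset (EuclideanSpace ℝ ι))
    (hY : ∀ y ∈ Y, ∃ a : σ → ℝ, ∀ k, y k = MvPolynomial.eval a (φ k))
    (p : ℕ) (hp : Fintype.card σ = p) (hp1 : 1 ≤ p)
    (D ε : ℝ) (hε : 0 < ε) (hεD : ε ≤ D) (hdiam : ∀ y ∈ Y, ∀ z ∈ Y, dist y z ≤ D)
    (hsep : ∀ y ∈ Y, ∀ z ∈ Y, z ≠ y → ε < dist y z) :
    (Y.card : ℝ) ≤ (5 * p * (D / ε)) ^ (2 * p) := by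
  have hp1' : (1:ℝ) ≤ p := by exact_mod_cast hp1
  have hx : 1 ≤ D / ε := by rwa [one_le_div hε]
  have hDpos : 0 < D := lt_of_lt_of_le hε hεD
  set x := D / ε with hxdef
  rcases Nat.eq_zero_or_pos Y.card with h0 | hM
  · rw [h0]; simp; positivity
  have hM1 : (1:ℝ) ≤ Y.card := by exact_mod_cast hM
  obtain ⟨μ, hμ1, hμ⟩ : ∃ μ : ℝ, 1 ≤ μ ∧ μ ^ (2 * p) = Y.card := by
    refine ⟨(Y.card : ℝ) ^ ((1:ℝ) / ((2 * p : ℕ) : ℝ)), Real.one_le_rpow hM1 (by positivity), ?_⟩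
    rw [← Real.rpow_natCast, ← Real.rpow_mul (by positivity), one_div_mul_cancel, Real.rpow_one]
    have : 0 < 2 * p := by omega
    positivity
  have hxμ : 1 ≤ x * μ := by nlinarith
  set m := ⌈x * μ⌉₊ with hmdef
  have hm_le : x * μ ≤ m := Nat.le_ceil _
  have hm_lt : (m:ℝ) < x * μ + 1 := Nat.ceil_lt_add_one (by linarith)
  have hm1 : 1 ≤ m := by
    have : (1:ℝ) ≤ m := hxμ.trans hm_le
    exact_mod_cast this
  have hm0 : (0:ℝ) < m := by exact_mod_cast hm1
  have hcard := kernel_bound φ hφ Y hY D hDpos hdiam m p hm1 (by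
    intro y hy
    have hterm : ∀ z ∈ Y.filter (fun z => z ≠ y), (D / (m * dist y z)) ^ (2 * p) ≤ 1 / Y.card := by
      intro z hz
      simp only [Finset.mem_filter] at hz
      have h1 := hsep y hy z hz.1 hz.2
      rw [← hμ, one_div, ← inv_pow]
      refine pow_le_pow_left₀ (by positivity) ?_ _
      rw [← one_div, div_le_div_iff₀ (by have := hε.trans h1; positivity) (by linarith)]
      have : D = x * ε := by rw [hxdef]; field_simp
      rw [this, one_mul]
      calc x * ε * μ = (x * μ) * ε := by ring
        _ ≤ m * dist y z := by gcongr
    refine lt_of_le_of_lt (Finset.sum_le_card_nsmul _ _ _ hterm) ?_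
    have hlt : (Y.filter (fun z => z ≠ y)).card < Y.card := by
      apply Finset.card_lt_card
      rw [Finset.filter_ssubset]
      exact ⟨y, hy, by simp⟩
    have hlt' : ((Y.filter (fun z => z ≠ y)).card : ℝ) < Y.card := by exact_mod_cast hlt
    rw [nsmul_eq_mul, mul_one_div, div_lt_one (by linarith)]
    exact hlt')
  rw [hp] at hcard
  have hcard' : (Y.card : ℝ) ≤ (2 * (p * m) + 1) ^ p := by exact_mod_cast hcard
  have h5 : (2 * ((p:ℝ) * m) + 1) ≤ 5 * p * x * μ := by
    have : (m:ℝ) ≤ 2 * (x * μ) := by linarith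
    have h6 : (p:ℝ) * m ≤ p * (2 * (x * μ)) := by gcongr
    have h7 : 1 ≤ (p:ℝ) * (x * μ) := by nlinarith
    nlinarith
  have h8 : (μ ^ 2) ^ p ≤ (5 * p * x * μ) ^ p := by
    rw [← pow_mul, hμ]
    exact hcard'.trans (pow_le_pow_left₀ (by positivity) h5 _)
  have h9 : μ ^ 2 ≤ 5 * p * x * μ :=
    le_of_pow_le_pow_left₀ (by omega) (by positivity) h8
  have h10 : μ ≤ 5 * p * x := by
    have : μ * μ ≤ (5 * p * x) * μ := by nlinarith
    exact le_of_mul_le_mul_right this (by linarith)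
  rw [← hμ]
  exact pow_le_pow_left₀ (by linarith) h10 _

lemma packing_fine {σ ι : Type} [Fintype σ] [Fintype ι] (φ : ι → MvPolynomial σ ℝ)
    (hφ : ∀ k v, (φ k).degreeOf v ≤ 1) (Y : Finset (EuclideanSpace ℝ ι))
    (hY : ∀ y ∈ Y, ∃ a : σ → ℝ, ∀ k, y k = MvPolynomial.eval a (φ k))
    (p : ℕ) (hp : Fintype.card σ = p) (hp1 : 1 ≤ p)
    (D ε : ℝ) (hε : 0 < ε) (hεD : ε ≤ D) (hdiam : ∀ y ∈ Y, ∀ z ∈ Y, dist y z ≤ D)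
    (hsep : ∀ y ∈ Y, ∀ z ∈ Y, z ≠ y → ε < dist y z) :
    (Y.card : ℝ) ≤ (165 * p ^ 2 * (D / ε)) ^ p := by
  classical
  have hp1' : (1:ℝ) ≤ p := by exact_mod_cast hp1
  have hx : 1 ≤ D / ε := by rwa [one_le_div hε]
  have hDpos : 0 < D := lt_of_lt_of_le hε hεD
  set x := D / ε with hxdef
  have hpx : 1 ≤ (p:ℝ) * x := by nlinarith
  -- local counting
  have hloc : ∀ y ∈ Y, ∀ R : ℝ, ε ≤ R →
      ((Y.filter (fun z => dist y z ≤ R)).card : ℝ) ≤ (10 * p * (R / ε)) ^ (2 * p) := by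
    intro y hy R hR
    have := packing_crude φ hφ (Y.filter (fun z => dist y z ≤ R))
      (fun z hz => hY z (Finset.mem_filter.1 hz).1) p hp hp1 (2 * R) ε hε (by linarith)
      (fun u hu v hv => by
        have h1 := (Finset.mem_filter.1 hu).2
        have h2 := (Finset.mem_filter.1 hv).2
        have := dist_triangle_left u v y
        linarith)
      (fun u hu v hv h => hsep u (Finset.mem_filter.1 hu).1 v (Finset.mem_filter.1 hv).1 h)
    convert this using 2
    ring
  set m := ⌈40 * p * x⌉₊ with hmdef
  have hm_le : 40 * p * x ≤ m := Nat.le_ceil _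
  have hm_lt : (m:ℝ) < 40 * p * x + 1 := Nat.ceil_lt_add_one (by positivity)
  have hm0 : (0:ℝ) < m := lt_of_lt_of_le (by nlinarith) hm_le
  have hm1 : 1 ≤ m := by exact_mod_cast hm0
  have hcard := kernel_bound φ hφ Y hY D hDpos hdiam m (2 * p) hm1 (by
    intro y hy
    set S := Y.filter (fun z => z ≠ y) with hS
    let lev : EuclideanSpace ℝ ι → ℕ := fun z => Nat.log 2 ⌊dist y z / ε⌋₊
    have hlev : ∀ z ∈ S, (2:ℝ) ^ lev z * ε ≤ dist y z ∧ dist y z ≤ 2 ^ (lev z + 1) * ε := by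
      intro z hz
      rw [hS, Finset.mem_filter] at hz
      have h1 := hsep y hy z hz.1 hz.2
      have h2 : 1 ≤ dist y z / ε := by rw [one_le_div hε]; exact h1.le
      have h3 : 1 ≤ ⌊dist y z / ε⌋₊ := by rwa [Nat.one_le_floor_iff]
      constructor
      · rw [← le_div_iff₀ hε]
        have : 2 ^ lev z ≤ ⌊dist y z / ε⌋₊ := Nat.pow_log_le_self 2 (by omega)
        have : ((2 ^ lev z : ℕ) : ℝ) ≤ ⌊dist y z / ε⌋₊ := by exact_mod_cast this
        push_cast at this
        exact this.trans (Nat.floor_le (by linarith))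
      · rw [← div_le_iff₀ hε]
        have : ⌊dist y z / ε⌋₊ < 2 ^ (lev z + 1) := Nat.lt_pow_succ_log_self (by norm_num) _
        have : ((⌊dist y z / ε⌋₊ : ℕ) : ℝ) + 1 ≤ ((2 ^ (lev z + 1) : ℕ) : ℝ) := by exact_mod_cast this
        push_cast at this
        exact ((Nat.lt_floor_add_one _).le).trans this
    set L := S.sup lev + 1 with hL
    have hmaps : ∀ z ∈ S, lev z ∈ Finset.range L := by
      intro z hz
      have : lev z ≤ S.sup lev := Finset.le_sup hz
      simp; omega
    rw [← Finset.sum_fiberwise_of_maps_to hmaps]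
    have hshell : ∀ l ∈ Finset.range L, ∑ z ∈ S.filter (fun z => lev z = l),
        (D / (m * dist y z)) ^ (2 * (2 * p)) ≤ (1/2) * (1/2:ℝ) ^ l := by
      intro l _
      have hterm : ∀ z ∈ S.filter (fun z => lev z = l),
          (D / (m * dist y z)) ^ (2 * (2 * p)) ≤ (1 / (40 * p * 2 ^ l)) ^ (2 * (2 * p)) := by
        intro z hz
        rw [Finset.mem_filter] at hz
        have h1 := (hlev z hz.1).1
        rw [hz.2] at h1
        have hd : 0 < dist y z := lt_of_lt_of_le (by positivity) h1
        refine pow_le_pow_left₀ (by positivity) ?_ _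
        rw [div_le_div_iff₀ (by positivity) (by positivity)]
        have : D = x * ε := by rw [hxdef]; field_simp
        rw [this, one_mul]
        calc x * ε * (40 * p * 2 ^ l) = (40 * p * x) * (2 ^ l * ε) := by ring
          _ ≤ m * dist y z := by gcongr
      refine (Finset.sum_le_card_nsmul _ _ _ hterm).trans ?_
      have hcount : ((S.filter (fun z => lev z = l)).card : ℝ) ≤ (10 * p * 2 ^ (l + 1)) ^ (2 * p) := by
        have h1 := hloc y hy (2 ^ (l+1) * ε) (le_mul_of_one_le_left hε.le (one_le_pow₀ (by norm_num)))
        rw [mul_div_cancel_right₀ _ hε.ne'] at h1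
        refine le_trans ?_ h1
        have : (S.filter (fun z => lev z = l)).card ≤ (Y.filter (fun z => dist y z ≤ 2 ^ (l+1) * ε)).card := by
          apply Finset.card_le_card
          intro z hz
          rw [Finset.mem_filter] at hz ⊢
          refine ⟨(Finset.mem_filter.1 hz.1).1, ?_⟩
          rw [← hz.2]; exact (hlev z hz.1).2
        exact_mod_cast this
      rw [nsmul_eq_mul]
      have h2l : (1:ℝ) ≤ 2 ^ l := one_le_pow₀ (by norm_num)
      calc _ ≤ (10 * (p:ℝ) * 2 ^ (l + 1)) ^ (2 * p) * (1 / (40 * p * 2 ^ l)) ^ (2 * (2 * p)) := by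
            gcongr
        _ = (10 * (p:ℝ) * 2 ^ (l + 1) * (1 / (40 * p * 2 ^ l)) ^ 2) ^ (2 * p) := by
            rw [mul_pow _ ((1 / (40 * (p:ℝ) * 2 ^ l)) ^ 2), ← pow_mul]
        _ = ((1 / (80 * p)) * (1/2) ^ l) ^ (2 * p) := by
            congr 1
            rw [pow_succ, one_div_pow, one_div_pow]
            field_simp
            norm_num
        _ ≤ ((1 / (80 * p)) * (1/2) ^ l) ^ 1 := by
            refine pow_le_pow_of_le_one (by positivity) ?_ (by omega)
            apply mul_le_one₀ _ (by positivity) (pow_le_one₀ (by norm_num) (by norm_num))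
            rw [div_le_one (by positivity)]; linarith
        _ ≤ _ := by
            rw [pow_one]
            gcongr
            linarith
    refine lt_of_le_of_lt (Finset.sum_le_sum hshell) ?_
    rw [← Finset.mul_sum, geom_sum_eq (by norm_num)]
    have : (0:ℝ) < (1/2) ^ L := by positivity
    have h2 : (1/2:ℝ) * (((1/2) ^ L - 1) / (1/2 - 1)) = 1 - (1/2) ^ L := by
      rw [show (1/2:ℝ) - 1 = -(1/2) by norm_num, div_neg, div_div_eq_mul_div]
      ring
    rw [h2]
    linarith)
  rw [hp] at hcard
  have hcard' : (Y.card : ℝ) ≤ (2 * (2 * p * m) + 1) ^ p := by exact_mod_cast hcard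
  refine hcard'.trans (pow_le_pow_left₀ (by positivity) ?_ _)
  have h1 : (m:ℝ) ≤ 41 * (p * x) := by linarith
  have h2 : (p:ℝ) * m ≤ p * (41 * (p * x)) := by gcongr
  have h3 : (1:ℝ) ≤ p * (p * x) := by nlinarith
  nlinarith

lemma sum_le_prod_of_two_le {d : ℕ} (hd : 1 ≤ d) (n : Fin d → ℕ) (hn : ∀ i, 2 ≤ n i) :
    ∑ i, n i ≤ ∏ i, n i := by
  induction d with
  | zero => omega
  | succ d ih =>
    rcases Nat.eq_zero_or_pos d with rfl | h
    · simp
    · rw [Fin.sum_univ_succ, Fin.prod_univ_succ]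
      have h1 := ih h (fun i => n i.succ) (fun i => hn _)
      have h2 : 2 ≤ ∑ i : Fin d, n i.succ :=
        (hn (Fin.succ ⟨0, h⟩)).trans
          (Finset.single_le_sum (f := fun i : Fin d => n i.succ) (fun _ _ => Nat.zero_le _)
            (Finset.mem_univ (⟨0, h⟩ : Fin d)))
      have h3 := hn 0
      have h4 : 2 ≤ ∏ i : Fin d, n i.succ := h2.trans h1
      have h5 : n 0 + ∏ i : Fin d, n i.succ ≤ n 0 * ∏ i : Fin d, n i.succ := by nlinarith
      omega

lemma packing_cp {d : ℕ} (hd : 1 ≤ d) (n : Fin d → ℕ) (hn : ∀ i, 2 ≤ n i) (r : ℕ) (hr : 1 ≤ r)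
    (t ε : ℝ) (ht : 0 < t) (hε : 0 < ε) (hεt : ε ≤ 2 * t)
    (Y : Finset (EuclideanSpace ℝ ((i : Fin d) → Fin (n i))))
    (hY : ∀ y ∈ Y, CPRankLE r y ∧ ‖y‖ ≤ t)
    (hsep : ∀ y ∈ Y, ∀ z ∈ Y, z ≠ y → ε < dist y z) :
    (Y.card : ℝ) ≤ (330 * ((∏ i, n i : ℕ) : ℝ) ^ 4 * (t / ε)) ^ (r * ∑ i, n i) := by
  classical
  set N := ∏ i, n i with hN
  set s := ∑ i, n i with hs
  have hsN : s ≤ N := sum_le_prod_of_two_le hd n hn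
  have hs2 : 2 ≤ s := (hn ⟨0, hd⟩).trans
    (Finset.single_le_sum (f := n) (fun _ _ => Nat.zero_le _) (Finset.mem_univ _))
  have hN2 : (2:ℝ) ≤ N := by exact_mod_cast hs2.trans hsN
  have hx : 1 ≤ 2 * t / ε := by rwa [one_le_div hε]
  have hdiam : ∀ y ∈ Y, ∀ z ∈ Y, dist y z ≤ 2 * t := by
    intro y hy z hz
    have := dist_le_norm_add_norm y z
    linarith [(hY y hy).2, (hY z hz).2]
  have key : ∀ p : ℕ, p ≤ N ^ 2 → p ≤ r * s →
      (Y.card : ℝ) ≤ (165 * (p:ℝ) ^ 2 * (2 * t / ε)) ^ p →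
      (Y.card : ℝ) ≤ (330 * (N : ℝ) ^ 4 * (t / ε)) ^ (r * s) := by
    intro p h1 h2 h3
    have h1' : (p:ℝ) ≤ N ^ 2 := by exact_mod_cast h1
    have e : 330 * (N : ℝ) ^ 4 * (t / ε) = 165 * ((N:ℝ) ^ 2) ^ 2 * (2 * t / ε) := by ring
    rw [e]
    refine h3.trans ((pow_le_pow_left₀ (by positivity) (b := 165 * ((N:ℝ) ^ 2) ^ 2 * (2 * t / ε)) ?_ p).trans ?_)
    · gcongr
    · refine pow_le_pow_right₀ ?_ h2
      have : (1:ℝ) ≤ ((N:ℝ) ^ 2) ^ 2 := one_le_pow₀ (one_le_pow₀ (by linarith))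
      nlinarith
  by_cases hrN : r ≤ N
  · let σ := Fin r × (Σ i : Fin d, Fin (n i))
    let φ : ((i : Fin d) → Fin (n i)) → MvPolynomial σ ℝ := fun k =>
      ∑ j : Fin r, ∏ i : Fin d, MvPolynomial.X (j, ⟨i, k i⟩)
    have hcard : Fintype.card σ = r * s := by simp [σ, hs]
    refine key (r * s) (by nlinarith) le_rfl ?_
    refine packing_fine φ ?_ Y ?_ (r * s) hcard (by nlinarith) (2 * t) ε hε hεt hdiam hsep
    · intro k v
      refine (MvPolynomial.degreeOf_sum_le _ _ _).trans (Finset.sup_le fun j _ => ?_)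
      refine (MvPolynomial.degreeOf_prod_le _ _ _).trans ?_
      simp only [MvPolynomial.degreeOf_X]
      obtain ⟨j', i', l⟩ := v
      refine (Finset.sum_le_sum (g := fun i => if i = i' then 1 else 0) fun i _ => ?_).trans (by simp)
      split_ifs with h1 h2
      · exact le_rfl
      · exfalso
        apply h2
        have := congrArg (fun w : σ => w.2.1) h1
        exact this.symm
      · exact Nat.zero_le _
      · exact le_rfl
    · intro y hy
      obtain ⟨a, ha⟩ := (hY y hy).1
      refine ⟨fun w => a w.1 w.2.1 w.2.2, fun k => ?_⟩
      rw [ha k]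
      simp [φ]
  · have hcard : Fintype.card ((i : Fin d) → Fin (n i)) = N := by simp [hN]
    refine key N (by nlinarith) (by nlinarith) ?_
    refine packing_fine (fun k => MvPolynomial.X k) ?_ Y ?_ N hcard (by omega) (2 * t) ε hε hεt hdiam hsep
    · intro k v
      rw [MvPolynomial.degreeOf_X]; split_ifs <;> omega
    · intro y _
      exact ⟨fun k => y k, fun k => by simp⟩

/-- Covering number bound for tensors of CP rank at most `r` and Frobenius norm at
most `t`: there is an `ε`-net `F` with
`log |F| ≤ r(Σᵢ nᵢ)·log(t/ε) + C·r(Σᵢ nᵢ)·(Σᵢ log nᵢ)`. -/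
theorem covering_low_cp_rank : ∃ C : ℝ, 0 < C ∧
    ∀ (d : ℕ), 1 ≤ d → ∀ (n : Fin d → ℕ), (∀ i, 2 ≤ n i) →
    ∀ (r : ℕ), 1 ≤ r → ∀ (t ε : ℝ), 0 < t → 0 < ε → ε ≤ 2 * t →
    ∃ F : Finset (EuclideanSpace ℝ ((i : Fin d) → Fin (n i))),
      (↑F ⊆ {T : EuclideanSpace ℝ ((i : Fin d) → Fin (n i)) | CPRankLE r T ∧ ‖T‖ ≤ t}) ∧
      Real.log F.card
        ≤ r * (∑ i, (n i : ℝ)) * Real.log (t / ε)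
          + C * r * (∑ i, (n i : ℝ)) * (∑ i, Real.log (n i)) ∧
      ∀ T : EuclideanSpace ℝ ((i : Fin d) → Fin (n i)),
        CPRankLE r T → ‖T‖ ≤ t → ∃ y ∈ F, dist T y ≤ ε := by
  classical
  refine ⟨13, by norm_num, ?_⟩
  intro d hd n hn r hr t ε ht hε hεt
  have hpack := packing_cp hd n hn r hr t ε ht hε hεt
  set B : ℝ := (330 * ((∏ i, n i : ℕ) : ℝ) ^ 4 * (t / ε)) ^ (r * ∑ i, n i) with hB
  let Good : Finset (EuclideanSpace ℝ ((i : Fin d) → Fin (n i))) → Prop := fun Y =>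
    (∀ y ∈ Y, CPRankLE r y ∧ ‖y‖ ≤ t) ∧ (∀ y ∈ Y, ∀ z ∈ Y, z ≠ y → ε < dist y z)
  have hne : {c : ℕ | ∃ Y, Good Y ∧ Y.card = c}.Nonempty := ⟨0, ∅, by simp [Good], rfl⟩
  have hbdd : BddAbove {c : ℕ | ∃ Y, Good Y ∧ Y.card = c} := by
    refine ⟨⌊B⌋₊, ?_⟩
    rintro c ⟨Y, hY, rfl⟩
    exact Nat.le_floor (hpack Y hY.1 hY.2)
  obtain ⟨F, hF, hFc⟩ := Nat.sSup_mem hne hbdd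
  have hmax : ∀ Y, Good Y → Y.card ≤ F.card := fun Y hY => by
    rw [hFc]; exact le_csSup hbdd ⟨Y, hY, rfl⟩
  have hcov : ∀ T : EuclideanSpace ℝ ((i : Fin d) → Fin (n i)),
        CPRankLE r T → ‖T‖ ≤ t → ∃ y ∈ F, dist T y ≤ ε := by
    intro T hT hTt
    by_contra! hcon
    have hTF : T ∉ F := fun h => by
      have := hcon T h
      rw [dist_self] at this
      linarith
    have := hmax (insert T F) ⟨by
        intro y hy
        rcases Finset.mem_insert.1 hy with rfl | hy
        · exact ⟨hT, hTt⟩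
        · exact hF.1 y hy, by
        intro y hy z hz hzy
        rcases Finset.mem_insert.1 hy with h1 | hy <;> rcases Finset.mem_insert.1 hz with h2 | hz
        · exact absurd (h2.trans h1.symm) hzy
        · rw [h1]; exact hcon z hz
        · rw [h2, dist_comm]; exact hcon y hy
        · exact hF.2 y hy z hz hzy⟩
    rw [Finset.card_insert_of_notMem hTF] at this
    omega
  refine ⟨F, fun y hy => hF.1 y hy, ?_, hcov⟩
  have hFne : 0 < F.card := by
    obtain ⟨y, hy, -⟩ := hcov 0 ⟨fun _ _ _ => 0, fun k => by
      have : Nonempty (Fin d) := ⟨⟨0, hd⟩⟩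
      simp [Finset.prod_const, show d ≠ 0 by omega]⟩ (by simpa using ht.le)
    exact Finset.card_pos.2 ⟨y, hy⟩
  have hFB := hpack F hF.1 hF.2
  have hlog := Real.log_le_log (by exact_mod_cast hFne) hFB
  refine hlog.trans ?_
  have hNpos : (2:ℝ) ≤ ((∏ i, n i : ℕ) : ℝ) := by
    have h1 := sum_le_prod_of_two_le hd n hn
    have h2 : 2 ≤ ∑ i, n i := (hn ⟨0, hd⟩).trans
      (Finset.single_le_sum (f := n) (fun _ _ => Nat.zero_le _) (Finset.mem_univ _))
    exact_mod_cast h2.trans h1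
  have hlogN : Real.log ((∏ i, n i : ℕ) : ℝ) = ∑ i, Real.log (n i) := by
    push_cast
    rw [Real.log_prod]
    intro i _
    have := hn i
    have : n i ≠ 0 := by omega
    exact_mod_cast this
  have h330 : Real.log 330 ≤ 9 * ∑ i, Real.log (n i) := by
    rw [← hlogN]
    calc Real.log 330 ≤ Real.log (2 ^ 9) := Real.log_le_log (by norm_num) (by norm_num)
      _ = 9 * Real.log 2 := by rw [Real.log_pow]; norm_num
      _ ≤ _ := by gcongr
  have hte : 0 < t / ε := by positivity
  rw [hB, Real.log_pow, Real.log_mul (by positivity) hte.ne', Real.log_mul (by norm_num) (by positivity),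
    Real.log_pow, hlogN]
  push_cast
  have hP : 0 ≤ (r:ℝ) * ∑ i, (n i : ℝ) := by positivity
  have := mul_le_mul_of_nonneg_left h330 hP
  nlinarith
end

section
/- There exist absolute constants c₁, c₂ ≥ 1 with the following property. Let d ≥ 1 and n_1, …, n_d ≥ 2 be integers, let r be an integer with 1 ≤ r ≤ min_i n_i, let t > 0 and 0 < ε ≤ 2t. Let V be the set of tensors T ∈ ℝ^{n_1×⋯×n_d} of CP rank at most r with Frobenius norm ‖T‖_F ≤ t. Then there exists a finite subset F ⊆ V with log |F| ≤ r·(Σ_{i=1}^d n_i)·log(c₁·d·t/ε) + c₂·d²·r²·log r − d·r²·log c₁ such that every T ∈ V lies within Frobenius distance ε of some element of F. -/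
open MeasureTheory Module Metric in
theorem aux_packing_ball {E : Type*} [NormedAddCommGroup E] [NormedSpace ℝ E]
    [FiniteDimensional ℝ E] (R δ : ℝ) (hR : 0 ≤ R) (hδ : 0 < δ) (s : Finset E)
    (hs : ∀ c ∈ s, ‖c‖ ≤ R)
    (h : ∀ c ∈ s, ∀ d ∈ s, c ≠ d → δ < dist c d) :
    (s.card : ℝ) ≤ (1 + 2 * R / δ) ^ finrank ℝ E := by
  borelize E
  let μ : Measure E := Measure.addHaar
  have hδ2 : 0 < δ / 2 := by positivity
  have ρpos : 0 < R + δ / 2 := by positivity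
  have D : Set.Pairwise (s : Set E) (Function.onFun Disjoint fun c => ball (c : E) (δ / 2)) := by
    rintro c hc d hd hcd
    apply ball_disjoint_ball
    have := h c hc d hd hcd
    linarith
  have A_subset : (⋃ c ∈ s, ball (c : E) (δ / 2)) ⊆ ball (0 : E) (R + δ / 2) := by
    refine Set.iUnion₂_subset fun x hx => ?_
    apply ball_subset_ball'
    rw [dist_zero_right]
    linarith [hs x hx]
  have I :
    (s.card : ENNReal) * ENNReal.ofReal ((δ / 2) ^ finrank ℝ E) * μ (ball 0 1) ≤
      ENNReal.ofReal ((R + δ / 2) ^ finrank ℝ E) * μ (ball 0 1) :=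
    calc
      (s.card : ENNReal) * ENNReal.ofReal ((δ / 2) ^ finrank ℝ E) * μ (ball 0 1)
          = μ (⋃ c ∈ s, ball (c : E) (δ / 2)) := by
        rw [measure_biUnion_finset D fun c _ => measurableSet_ball]
        simp only [μ.addHaar_ball_of_pos _ hδ2]
        simp only [Finset.sum_const, nsmul_eq_mul, mul_assoc]
      _ ≤ μ (ball (0 : E) (R + δ / 2)) := measure_mono A_subset
      _ = ENNReal.ofReal ((R + δ / 2) ^ finrank ℝ E) * μ (ball 0 1) := by
        simp only [μ.addHaar_ball_of_pos _ ρpos]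
  have J : (s.card : ENNReal) * ENNReal.ofReal ((δ / 2) ^ finrank ℝ E)
      ≤ ENNReal.ofReal ((R + δ / 2) ^ finrank ℝ E) :=
    (ENNReal.mul_le_mul_iff_left (measure_ball_pos _ _ zero_lt_one).ne' measure_ball_lt_top.ne).1 I
  have K := ENNReal.toReal_le_of_le_ofReal (pow_nonneg ρpos.le _) J
  rw [ENNReal.toReal_mul, ENNReal.toReal_ofReal (by positivity), ENNReal.toReal_natCast] at K
  have e : (1 + 2 * R / δ) = (R + δ / 2) / (δ / 2) := by field_simp; ring
  rw [e, div_pow, le_div_iff₀ (by positivity)]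
  exact K

theorem aux_net_of_packing {α : Type*} [PseudoMetricSpace α] (S : Set α) (δ B : ℝ) (hδ : 0 ≤ δ)
    (h : ∀ s : Finset α, (∀ c ∈ s, c ∈ S) → (∀ c ∈ s, ∀ d ∈ s, c ≠ d → δ < dist c d) →
      (s.card : ℝ) ≤ B) :
    ∃ F : Finset α, (∀ c ∈ F, c ∈ S) ∧ (F.card : ℝ) ≤ B ∧ ∀ x ∈ S, ∃ y ∈ F, dist x y ≤ δ := by
  classical
  let P : ℕ → Prop := fun m => ∃ s : Finset α, (∀ c ∈ s, c ∈ S) ∧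
    (∀ c ∈ s, ∀ d ∈ s, c ≠ d → δ < dist c d) ∧ s.card = m
  have hP0 : P 0 := ⟨∅, by simp, by simp, rfl⟩
  have hb : ∀ m, P m → m ≤ ⌊B⌋₊ := by
    rintro m ⟨s, h1, h2, rfl⟩
    exact Nat.le_floor (h s h1 h2)
  obtain ⟨F, h1, h2, h3⟩ := Nat.findGreatest_spec (P := P) (Nat.zero_le ⌊B⌋₊) hP0
  refine ⟨F, h1, h F h1 h2, fun x hx => ?_⟩
  by_contra! hcon
  have hxF : x ∉ F := fun hxF => by
    have := hcon x hxF
    rw [dist_self] at this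
    linarith
  have : P (F.card + 1) := by
    refine ⟨insert x F, ?_, ?_, Finset.card_insert_of_notMem hxF⟩
    · intro c hc
      rcases Finset.mem_insert.1 hc with rfl | hc
      · exact hx
      · exact h1 c hc
    · intro c hc d hd hcd
      rcases Finset.mem_insert.1 hc with rfl | hc2 <;> rcases Finset.mem_insert.1 hd with rfl | hd2
      · exact absurd rfl hcd
      · exact hcon d hd2
      · rw [dist_comm]; exact hcon c hc2
      · exact h2 c hc2 d hd2 hcd
  have h4 := Nat.le_findGreatest (hb _ this) this
  omega

open Module in
theorem aux_net_ball {E : Type*} [NormedAddCommGroup E] [NormedSpace ℝ E]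
    [FiniteDimensional ℝ E] (R δ : ℝ) (hR : 0 ≤ R) (hδ : 0 < δ) (S : Set E)
    (hS : ∀ x ∈ S, ‖x‖ ≤ R) :
    ∃ F : Finset E, (∀ c ∈ F, c ∈ S) ∧ (F.card : ℝ) ≤ (1 + 2 * R / δ) ^ finrank ℝ E ∧
      ∀ x ∈ S, ∃ y ∈ F, dist x y ≤ δ :=
  aux_net_of_packing S δ _ hδ.le fun s h1 h2 =>
    aux_packing_ball R δ hR hδ s (fun c hc => hS c (h1 c hc)) h2

open Polynomial in
theorem aux_cheb (t ε : ℝ) (ht : 0 < t) (hε : 0 < ε) (m : ℕ) :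
    ∃ p : ℝ[X], p.natDegree ≤ m ∧ (1 + ε / t) ^ m / 2 ≤ p.eval 0 ∧
      ∀ s, ε ^ 2 ≤ s → s ≤ 4 * t ^ 2 → |p.eval s| ≤ 1 := by
  set w : ℝ := 1 + ε / t with hw
  have hw1 : 1 < w := by have : 0 < ε / t := by positivity
                         linarith
  have hw0 : 0 < w := by linarith
  set θ := Real.log w with hθ
  have hz : Real.cosh θ = (w + w⁻¹) / 2 := by rw [hθ, Real.cosh_log hw0]
  have hz1 : 1 ≤ Real.cosh θ := Real.one_le_cosh θ
  have hz2 : Real.cosh θ ≤ 1 + ε ^ 2 / (2 * t ^ 2) := by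
    have e1 : Real.cosh θ - 1 = (ε / t) ^ 2 / (2 * w) := by
      rw [hz]
      have : ε / t = w - 1 := by rw [hw]; ring
      rw [this]; field_simp; ring
    have e2 : (ε / t) ^ 2 / (2 * w) ≤ (ε / t) ^ 2 / 2 := by
      apply div_le_div_of_nonneg_left (by positivity) (by norm_num) (by linarith)
    have e3 : (ε / t) ^ 2 / 2 = ε ^ 2 / (2 * t ^ 2) := by rw [div_pow]; field_simp
    linarith
  refine ⟨(Chebyshev.T ℝ m).comp (C (Real.cosh θ) - C (1 / (2 * t ^ 2)) * X), ?_, ?_, ?_⟩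
  · refine natDegree_comp_le.trans ?_
    rw [Chebyshev.natDegree_T]
    have : (C (Real.cosh θ) - C (1 / (2 * t ^ 2)) * X : ℝ[X]).natDegree ≤ 1 := by
      compute_degree
    simpa using Nat.mul_le_mul_left m this
  · simp only [eval_comp, eval_sub, eval_C, eval_mul, eval_X, mul_zero, sub_zero]
    rw [Chebyshev.T_real_cosh, Real.cosh_eq]
    have : Real.exp (((m : ℤ) : ℝ) * θ) = w ^ m := by
      rw [Int.cast_natCast, Real.exp_nat_mul, hθ, Real.exp_log hw0]
    rw [this]
    have := Real.exp_pos (-(((m : ℤ) : ℝ) * θ))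
    linarith
  · intro s h1 h2
    simp only [eval_comp, eval_sub, eval_C, eval_mul, eval_X]
    have h3 : Real.cosh θ - 1 / (2 * t ^ 2) * s ≤ 1 := by
      have : ε ^ 2 / (2 * t ^ 2) ≤ 1 / (2 * t ^ 2) * s := by
        rw [div_mul_eq_mul_div, one_mul]; gcongr
      linarith
    have h4 : -1 ≤ Real.cosh θ - 1 / (2 * t ^ 2) * s := by
      have : 1 / (2 * t ^ 2) * s ≤ 2 := by
        rw [div_mul_eq_mul_div, one_mul, div_le_iff₀ (by positivity)]; linarith
      linarith
    rw [← Real.cos_arccos h4 h3, Chebyshev.T_real_cos]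
    exact Real.abs_cos_le_one _

open Module in
theorem aux_rank {X ι : Type*} [Fintype ι] (S : Submodule ℝ (X → ℝ)) [FiniteDimensional ℝ S]
    (f : ι → X → ℝ) (x : ι → X) (hf : ∀ i, f i ∈ S) (A : ℝ) (hA : (Fintype.card ι : ℝ) ≤ A)
    (h1 : ∀ i, A ≤ f i (x i)) (h2 : ∀ i j, i ≠ j → |f i (x j)| ≤ 1) :
    Fintype.card ι ≤ finrank ℝ S := by
  classical
  have hdet : (Matrix.of fun i j => f i (x j)).det ≠ 0 := by
    apply det_ne_zero_of_sum_row_lt_diag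
    intro i
    have hs : ∑ j ∈ Finset.univ.erase i, ‖(Matrix.of fun i j => f i (x j)) i j‖
        ≤ ∑ j ∈ Finset.univ.erase i, (1 : ℝ) := by
      apply Finset.sum_le_sum
      intro j hj
      exact h2 i j (Finset.ne_of_mem_erase hj).symm
    have hc : ∑ j ∈ Finset.univ.erase i, (1 : ℝ) = Fintype.card ι - 1 := by
      rw [Finset.sum_const, Finset.card_erase_of_mem (Finset.mem_univ i), nsmul_eq_mul, mul_one,
        Finset.card_univ, Nat.cast_sub, Nat.cast_one]
      exact Fintype.card_pos_iff.2 ⟨i⟩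
    refine (hs.trans_eq hc).trans_lt ?_
    have := h1 i
    have h5 := le_abs_self (f i (x i))
    simp only [Matrix.of_apply, Real.norm_eq_abs]
    linarith
  have hli : LinearIndependent ℝ f := by
    have h := Matrix.linearIndependent_rows_of_det_ne_zero hdet
    let L : (X → ℝ) →ₗ[ℝ] (ι → ℝ) := LinearMap.funLeft ℝ ℝ x
    exact LinearIndependent.of_comp L h
  have hli' : LinearIndependent ℝ (fun i => (⟨f i, hf i⟩ : S)) := by
    apply LinearIndependent.of_comp S.subtype
    exact hli
  exact hli'.fintype_card_le_finrank
def auxMono {d r : ℕ} (e : Fin d → Fin r → Fin r → ℕ) : (Fin d → Fin r → Fin r → ℝ) → ℝ :=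
  fun c => ∏ i, ∏ j, ∏ l, c i j l ^ e i j l

def auxE (d r D : ℕ) : Set (Fin d → Fin r → Fin r → ℕ) :=
  {e | (∀ i i' j, ∑ l, e i j l = ∑ l, e i' j l) ∧ ∀ i j l, e i j l ≤ D}

def auxS (d r D : ℕ) : Submodule ℝ ((Fin d → Fin r → Fin r → ℝ) → ℝ) :=
  Submodule.span ℝ (auxMono '' auxE d r D)

theorem auxE_finite (d r D : ℕ) : (auxE d r D).Finite := by
  apply Set.Finite.subset (Set.finite_Iic (fun _ _ _ => D))
  intro e he i j l
  exact he.2 i j l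

theorem auxE_card (d r D : ℕ) :
    (auxE (d+1) (r+1) D).ncard ≤ (D+1) ^ ((r+1)*(r+1) + d * (r+1) * r) := by
  let f : (Fin (d+1) → Fin (r+1) → Fin (r+1) → ℕ) →
    (Fin (r+1) → Fin (r+1) → Fin (D+1)) × (Fin d → Fin (r+1) → Fin r → Fin (D+1)) :=
    fun e => (fun j l => Fin.ofNat (D+1) (e 0 j l), fun i j l => Fin.ofNat (D+1) (e i.succ j l.succ))
  have hinj : Set.InjOn f (auxE (d+1) (r+1) D) := by
    intro e he e' he' h
    have hlt : ∀ a b : ℕ, a ≤ D → b ≤ D → Fin.ofNat (D+1) a = Fin.ofNat (D+1) b → a = b := by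
      intro a b ha hb hab
      have := congrArg Fin.val hab
      simp only [Fin.val_ofNat] at this
      rwa [Nat.mod_eq_of_lt (by omega), Nat.mod_eq_of_lt (by omega)] at this
    have h0 : ∀ j l, e 0 j l = e' 0 j l := fun j l =>
      hlt _ _ (he.2 _ _ _) (he'.2 _ _ _) (congrFun (congrFun (congrArg Prod.fst h) j) l)
    have h1 : ∀ i j (l : Fin r), e (Fin.succ i) j l.succ = e' (Fin.succ i) j l.succ := fun i j l =>
      hlt _ _ (he.2 _ _ _) (he'.2 _ _ _)
        (congrFun (congrFun (congrFun (congrArg Prod.snd h) i) j) l)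
    funext i j l
    refine Fin.cases (h0 j l) (fun i => ?_) i
    refine Fin.cases ?_ (fun l => h1 i j l) l
    have a1 := he.1 i.succ 0 j
    have a2 := he'.1 i.succ 0 j
    simp only [h0] at a1
    rw [← a2, Fin.sum_univ_succ, Fin.sum_univ_succ] at a1
    simp only [h1] at a1
    omega
  have h := Set.ncard_le_ncard_of_injOn (t := Set.univ) f (fun _ _ => Set.mem_univ _) hinj
  rw [Set.ncard_univ, Nat.card_eq_fintype_card] at h
  refine h.trans_eq ?_
  simp only [Fintype.card_prod, Fintype.card_fun, Fintype.card_fin]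
  rw [← pow_mul, ← pow_mul, ← pow_mul, ← pow_add]
  congr 1
  ring

instance auxS_fd (d r D : ℕ) : FiniteDimensional ℝ (auxS d r D) :=
  FiniteDimensional.span_of_finite ℝ ((auxE_finite d r D).image _)

theorem auxS_finrank (d r D : ℕ) :
    Module.finrank ℝ (auxS (d+1) (r+1) D) ≤ (D+1) ^ ((r+1)*(r+1) + d * (r+1) * r) := by
  classical
  have hfin := (auxE_finite (d+1) (r+1) D).image auxMono
  have := hfin.fintype
  have := finrank_span_le_card (R := ℝ) (auxMono '' auxE (d+1) (r+1) D)
  refine this.trans ?_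
  rw [← Set.ncard_eq_toFinset_card']
  exact (Set.ncard_image_le (auxE_finite _ _ _)).trans (auxE_card d r D)

theorem auxS_mono {d r D D' : ℕ} (h : D ≤ D') : auxS d r D ≤ auxS d r D' := by
  apply Submodule.span_mono
  apply Set.image_mono
  rintro e ⟨h1, h2⟩
  exact ⟨h1, fun i j l => (h2 i j l).trans h⟩

theorem auxS_one {d r : ℕ} (D : ℕ) : (1 : (Fin d → Fin r → Fin r → ℝ) → ℝ) ∈ auxS d r D := by
  apply Submodule.subset_span
  refine ⟨0, ⟨by simp, by simp⟩, ?_⟩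
  funext c
  simp [auxMono]

theorem auxS_mul {d r D D' : ℕ} {f g : (Fin d → Fin r → Fin r → ℝ) → ℝ}
    (hf : f ∈ auxS d r D) (hg : g ∈ auxS d r D') : f * g ∈ auxS d r (D + D') := by
  have h := Submodule.mul_mem_mul hf hg
  rw [auxS, auxS, Submodule.span_mul_span] at h
  refine Submodule.span_mono ?_ h
  rintro _ ⟨_, ⟨e, he, rfl⟩, _, ⟨e', he', rfl⟩, rfl⟩
  refine ⟨e + e', ⟨fun i i' j => ?_, fun i j l => ?_⟩, ?_⟩
  · simp only [Pi.add_apply, Finset.sum_add_distrib]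
    rw [he.1 i i' j, he'.1 i i' j]
  · exact Nat.add_le_add (he.2 i j l) (he'.2 i j l)
  · funext c
    simp only [auxMono, Pi.add_apply, Pi.mul_apply, pow_add, Finset.prod_mul_distrib]

theorem auxS_pow {d r D : ℕ} {f : (Fin d → Fin r → Fin r → ℝ) → ℝ}
    (hf : f ∈ auxS d r D) (m : ℕ) : f ^ m ∈ auxS d r (D * m) := by
  induction m with
  | zero => simpa using auxS_one _
  | succ m ih => rw [pow_succ]; exact auxS_mul ih hf

theorem auxS_poly {d r D m : ℕ} {f : (Fin d → Fin r → Fin r → ℝ) → ℝ}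
    (hf : f ∈ auxS d r D) (p : Polynomial ℝ) (hp : p.natDegree ≤ m) :
    (fun c => p.eval (f c)) ∈ auxS d r (D * m) := by
  have : (fun c => p.eval (f c)) = ∑ i ∈ Finset.range (m+1), p.coeff i • f ^ i := by
    funext c
    rw [Polynomial.eval_eq_sum_range' (Nat.lt_succ_of_le hp)]
    simp
  rw [this]
  apply Submodule.sum_mem
  intro i hi
  apply Submodule.smul_mem
  exact auxS_mono (Nat.mul_le_mul_left _ (Finset.mem_range_succ_iff.1 hi)) (auxS_pow hf i)

theorem auxS_entry {d r : ℕ} (β : Fin d → Fin r → ℝ) :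
    (fun c : Fin d → Fin r → Fin r → ℝ => ∑ j, ∏ i, ∑ l, c i j l * β i l) ∈ auxS d r 1 := by
  classical
  have : (fun c : Fin d → Fin r → Fin r → ℝ => ∑ j, ∏ i, ∑ l, c i j l * β i l) =
      ∑ j, ∑ g : Fin d → Fin r, (∏ i, β i (g i)) •
        auxMono (fun i j' l => if j' = j then (if l = g i then 1 else 0) else 0) := by
    funext c
    simp only [Finset.sum_apply, Pi.smul_apply, smul_eq_mul]
    refine Finset.sum_congr rfl fun j _ => ?_
    rw [Finset.prod_univ_sum]
    simp only [Fintype.piFinset_univ]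
    refine Finset.sum_congr rfl fun g _ => ?_
    rw [Finset.prod_mul_distrib, mul_comm]
    congr 1
    simp only [auxMono]
    refine Finset.prod_congr rfl fun i _ => ?_
    rw [Finset.prod_eq_single j, Finset.prod_eq_single (g i)]
    · simp
    · intro l _ hl; simp [hl]
    · simp
    · intro j' _ hj; simp [hj]
    · simp
  rw [this]
  refine Submodule.sum_mem _ fun j _ => Submodule.sum_mem _ fun g _ => Submodule.smul_mem _ _ ?_
  apply Submodule.subset_span
  refine ⟨_, ⟨fun i i' j' => ?_, fun i j' l => ?_⟩, rfl⟩
  · by_cases h : j' = j <;> simp [h]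
  · split_ifs <;> simp

theorem auxS_dist {d r : ℕ} {n : Fin d → ℕ} (b : (i : Fin d) → Fin r → Fin (n i) → ℝ)
    (y : ((i : Fin d) → Fin (n i)) → ℝ) :
    (fun c : Fin d → Fin r → Fin r → ℝ =>
      ∑ k : (i : Fin d) → Fin (n i), ((∑ j, ∏ i, ∑ l, c i j l * b i l (k i)) - y k) ^ 2)
        ∈ auxS d r 2 := by
  have : (fun c : Fin d → Fin r → Fin r → ℝ =>
      ∑ k : (i : Fin d) → Fin (n i), ((∑ j, ∏ i, ∑ l, c i j l * b i l (k i)) - y k) ^ 2) =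
      ∑ k : (i : Fin d) → Fin (n i), ((fun c : Fin d → Fin r → Fin r → ℝ =>
        ∑ j, ∏ i, ∑ l, c i j l * b i l (k i)) - y k • 1) ^ 2 := by
    funext c
    simp
  rw [this]
  refine Submodule.sum_mem _ fun k _ => ?_
  have h := auxS_pow (Submodule.sub_mem _ (auxS_entry (fun i l => b i l (k i)))
    (Submodule.smul_mem _ (y k) (auxS_one (d := d) (r := r) 1))) 2
  exact h

theorem aux_core_card {d r : ℕ} {n : Fin (d+1) → ℕ} (b : (i : Fin (d+1)) → Fin (r+1) → Fin (n i) → ℝ)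
    (t ε : ℝ) (ht : 0 < t) (hε : 0 < ε)
    (s : Finset (EuclideanSpace ℝ ((i : Fin (d+1)) → Fin (n i))))
    (hs : ∀ T ∈ s, (∃ c : Fin (d+1) → Fin (r+1) → Fin (r+1) → ℝ,
      ∀ k, T k = ∑ j, ∏ i, ∑ l, c i j l * b i l (k i)) ∧ ‖T‖ ≤ t)
    (hsep : ∀ T ∈ s, ∀ T' ∈ s, T ≠ T' → ε < dist T T') (m : ℕ)
    (hm : (s.card : ℝ) ≤ (1 + ε / t) ^ m / 2) :
    s.card ≤ (2 * m + 1) ^ ((r+1)*(r+1) + d * (r+1) * r) := by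
  obtain ⟨p, hp1, hp2, hp3⟩ := aux_cheb t ε ht hε m
  choose c hc using fun T : s => (hs T.1 T.2).1
  have hd : ∀ T T' : s, ∑ k, ((∑ j, ∏ i, ∑ l, c T' i j l * b i l (k i)) - T.1 k) ^ 2
      = dist T'.1 T.1 ^ 2 := by
    intro T T'
    rw [EuclideanSpace.dist_sq_eq]
    refine Finset.sum_congr rfl fun k _ => ?_
    rw [Real.dist_eq, sq_abs, hc T' k]
  have h := aux_rank (auxS (d+1) (r+1) (2 * m))
    (fun (T : s) c => p.eval (∑ k, ((∑ j, ∏ i, ∑ l, c i j l * b i l (k i)) - T.1 k) ^ 2)) c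
    (fun T => auxS_poly (auxS_dist b (fun k => T.1 k)) p hp1) ((1 + ε / t) ^ m / 2)
    (by simpa using hm)
    (fun T => by simpa [hd] using hp2)
    (fun T T' hTT => by
      simp only [hd]
      have hne : T'.1 ≠ T.1 := fun h => hTT (Subtype.ext h.symm)
      have h1 := hsep _ T'.2 _ T.2 hne
      have h2 : dist T'.1 T.1 ≤ 2 * t := by
        have := dist_le_norm_add_norm T'.1 T.1
        linarith [(hs _ T'.2).2, (hs _ T.2).2]
      apply hp3
      · gcongr
      · calc _ ≤ (2 * t) ^ 2 := by gcongr
          _ = _ := by ring)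
  rw [Fintype.card_coe] at h
  exact h.trans (auxS_finrank d r (2 * m))

theorem aux_log_one_add (y : ℝ) (h0 : 0 ≤ y) (h2 : y ≤ 2) : y / 2 ≤ Real.log (1 + y) := by
  refine le_trans ?_ (Real.le_log_one_add_of_nonneg h0)
  rw [div_le_div_iff₀ (by norm_num) (by linarith)]
  nlinarith

theorem aux_core_log {d r : ℕ} {n : Fin (d+2) → ℕ} (b : (i : Fin (d+2)) → Fin (r+1) → Fin (n i) → ℝ)
    (t ε : ℝ) (ht : 0 < t) (hε : 0 < ε) (hεt : ε ≤ 2 * t)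
    (s : Finset (EuclideanSpace ℝ ((i : Fin (d+2)) → Fin (n i))))
    (hs : ∀ T ∈ s, (∃ c : Fin (d+2) → Fin (r+1) → Fin (r+1) → ℝ,
      ∀ k, T k = ∑ j, ∏ i, ∑ l, c i j l * b i l (k i)) ∧ ‖T‖ ≤ t)
    (hsep : ∀ T ∈ s, ∀ T' ∈ s, T ≠ T' → ε < dist T T') :
    Real.log s.card ≤ (d+2) * (r+1)^2 * Real.log (32 * (d+2) * (r+1)^3 * (t / ε)) + 1 := by
  have hx : 1 / 2 ≤ t / ε := by rw [div_le_div_iff₀ (by norm_num) hε]; linarith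
  set x := t / ε with hxdef
  have hd1 : (2:ℝ) ≤ d + 2 := by have : (0:ℝ) ≤ d := Nat.cast_nonneg d
                                 linarith
  have hr1 : (1:ℝ) ≤ r + 1 := by have : (0:ℝ) ≤ r := Nat.cast_nonneg r
                                 linarith
  have hbig : 1 ≤ 32 * ((d:ℝ)+2) * (r+1)^3 * x := by
    have : (1:ℝ) ≤ (r+1)^3 := one_le_pow₀ hr1
    have h1 : 2 * 1 ≤ ((d:ℝ)+2) * (r+1)^3 := by gcongr
    have h2 : (2 * 1) * (1/2) ≤ (((d:ℝ)+2) * (r+1)^3) * x := by gcongr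
    nlinarith
  rcases Nat.eq_zero_or_pos s.card with h0 | hpos
  · rw [h0]
    simp only [Nat.cast_zero, Real.log_zero]
    have := Real.log_nonneg hbig
    positivity
  have hM : (1:ℝ) ≤ s.card := by exact_mod_cast hpos
  set M : ℝ := (s.card : ℝ) with hMdef
  set ℓ := Real.log (2 * M) with hl
  have hl2 : ℓ = Real.log 2 + Real.log M := by rw [hl, Real.log_mul (by norm_num) (by linarith)]
  have hlM : 0 ≤ Real.log M := Real.log_nonneg hM
  have hlog2 := Real.log_two_gt_d9
  have hlog2' := Real.log_two_lt_d9
  have hlpos : 1 / 2 ≤ ℓ := by linarith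
  have hy : 0 < ε / t := by positivity
  have hy2 : ε / t ≤ 2 := by rw [div_le_iff₀ ht]; linarith
  have hxy : x * (ε / t) = 1 := by rw [hxdef]; field_simp
  set m := ⌈2 * x * ℓ⌉₊ with hm
  have hm1 : 2 * x * ℓ ≤ m := Nat.le_ceil _
  have hm2 : (m:ℝ) < 2 * x * ℓ + 1 := Nat.ceil_lt_add_one (by positivity)
  have hcard := aux_core_card b t ε ht hε s hs hsep m (by
    rw [le_div_iff₀ (by norm_num), ← Real.log_le_log_iff (by positivity) (by positivity),
      Real.log_pow, mul_comm (s.card : ℝ) 2]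
    have h1 := aux_log_one_add _ hy.le hy2
    calc ℓ = (2 * x * ℓ) * ((ε / t) / 2) := by linear_combination (-ℓ) * hxy
      _ ≤ m * Real.log (1 + ε / t) := by gcongr)
  have hcard' : M ≤ (2 * (m:ℝ) + 1) ^ ((r+1)*(r+1) + (d+1) * (r+1) * r) := by
    rw [hMdef]; exact_mod_cast hcard
  set K : ℕ := (r+1)*(r+1) + (d+1) * (r+1) * r with hK
  have hKr : (K:ℝ) = (r+1)*(r+1) + (d+1) * (r+1) * r := by rw [hK]; push_cast; ring
  have hK1 : (1:ℝ) ≤ K := by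
    have : 0 < K := by rw [hK]; positivity
    exact_mod_cast this
  have hx0 : 0 < x := by linarith
  have hL : Real.log M ≤ K * Real.log (16 * x * ℓ) := by
    rw [← Real.log_pow]
    apply Real.log_le_log (by linarith)
    refine hcard'.trans ?_
    gcongr
    nlinarith
  set a : ℝ := 2 * (r+1) with ha
  have ha0 : 0 < a := by positivity
  have hlog : Real.log (16 * x * ℓ) ≤ Real.log (16 * x * (a * K)) + ℓ / (a * K) := by
    have e : 16 * x * ℓ = (16 * x * (a * K)) * (ℓ / (a * K)) := by field_simp
    rw [e, Real.log_mul (by positivity) (by positivity)]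
    have := Real.log_le_sub_one_of_pos (show 0 < ℓ / (a * K) by positivity)
    linarith
  have hL2 : Real.log M ≤ K * Real.log (16 * x * (a * K)) + ℓ / a := by
    refine hL.trans ((mul_le_mul_of_nonneg_left hlog (by positivity)).trans_eq ?_)
    field_simp
  have hKle : K * a ≤ ((d:ℝ)+2) * (r+1)^2 * (a - 1) := by
    rw [hKr, ha]
    have h0 : (0:ℝ) ≤ d := Nat.cast_nonneg d
    have h0' : (0:ℝ) ≤ r := Nat.cast_nonneg r
    have : ((d:ℝ)+2) * (r+1)^2 * (2 * (r+1) - 1)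
      - ((r+1)*(r+1) + (d+1) * (r+1) * r) * (2 * (r+1)) = d * (r+1)^2 := by ring
    have : 0 ≤ d * ((r:ℝ)+1)^2 := by positivity
    linarith
  have hKle2 : (K:ℝ) ≤ (d+2) * (r+1)^2 := by
    rw [hKr]
    have h0 : (0:ℝ) ≤ d := Nat.cast_nonneg d
    have h0' : (0:ℝ) ≤ r := Nat.cast_nonneg r
    have : ((d:ℝ)+2) * (r+1)^2 - ((r+1)*(r+1) + (d+1) * (r+1) * r) = (d+1)*(r+1) := by ring
    have : 0 ≤ ((d:ℝ)+1) * (r+1) := by positivity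
    linarith
  have hlog3 : Real.log (16 * x * (a * K)) ≤ Real.log (32 * (d+2) * (r+1)^3 * x) := by
    apply Real.log_le_log (by positivity)
    calc 16 * x * (a * K) ≤ 16 * x * (a * ((d+2) * (r+1)^2)) := by gcongr
      _ = _ := by rw [ha]; ring
  set Q := Real.log (32 * (d+2) * (r+1)^3 * x) with hQ
  have hQ0 : 0 ≤ Q := Real.log_nonneg hbig
  have hL3 : Real.log M ≤ K * Q + ℓ / a := hL2.trans (by gcongr)
  have hL4 : a * Real.log M ≤ a * K * Q + ℓ := by
    have := mul_le_mul_of_nonneg_left hL3 ha0.le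
    have e : a * (K * Q + ℓ / a) = a * K * Q + ℓ := by field_simp
    linarith
  have ha2 : 2 ≤ a := by rw [ha]; linarith
  have hL5 : (a - 1) * Real.log M ≤ (a - 1) * (((d:ℝ)+2) * (r+1)^2 * Q + 1) := by
    have := mul_le_mul_of_nonneg_right hKle hQ0
    nlinarith
  exact le_of_mul_le_mul_left hL5 (by linarith)

theorem aux_finrank_clm {E H : Type*} [NormedAddCommGroup E] [NormedSpace ℝ E]
    [FiniteDimensional ℝ E] [NormedAddCommGroup H] [NormedSpace ℝ H] [FiniteDimensional ℝ H] :
    Module.finrank ℝ (E →L[ℝ] H) = Module.finrank ℝ E * Module.finrank ℝ H := by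
  rw [← Module.finrank_linearMap ℝ ℝ E H]
  exact (LinearMap.toContinuousLinearMap (𝕜 := ℝ) (E := E) (F' := H)).finrank_eq.symm

theorem aux_grass_local {E H : Type*} [NormedAddCommGroup E] [InnerProductSpace ℝ E]
    [FiniteDimensional ℝ E] [NormedAddCommGroup H] [InnerProductSpace ℝ H] [FiniteDimensional ℝ H]
    (δ : ℝ) (hδ : 0 < δ) (hδ1 : δ ≤ 1) (Q₀ : E →L[ℝ] H) (hQ₀ : ∀ x, ‖Q₀ x‖ = ‖x‖) :
    ∃ G : Finset (Submodule ℝ H), (∀ U ∈ G, Module.finrank ℝ U = Module.finrank ℝ E) ∧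
      (G.card : ℝ) ≤ (7 / δ) ^ (Module.finrank ℝ E * (Module.finrank ℝ H - Module.finrank ℝ E)) ∧
      ∀ Q : E →L[ℝ] H, (∀ x, ‖Q x‖ = ‖x‖) → dist Q Q₀ ≤ 1 / 2 →
        ∃ U' ∈ G, ∀ v, ∃ y ∈ U', ‖Q v - y‖ ≤ δ * ‖Q v‖ := by
  classical
  have hinj : Function.Injective Q₀ := by
    rw [injective_iff_map_eq_zero]
    intro x hx
    rw [← norm_eq_zero, ← hQ₀, hx, norm_zero]
  set R : Submodule ℝ H := LinearMap.range (Q₀ : E →ₗ[ℝ] H) with hR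
  have hRd : Module.finrank ℝ R = Module.finrank ℝ E := LinearMap.finrank_range_of_inj hinj
  have hWd : Module.finrank ℝ Rᗮ = Module.finrank ℝ H - Module.finrank ℝ E := by
    have := Submodule.finrank_add_finrank_orthogonal R
    omega
  obtain ⟨B, hB1, hB2, hB3⟩ := aux_net_ball (E := E →L[ℝ] Rᗮ) 3 δ (by norm_num) hδ
    {Z | ‖Z‖ ≤ 3} (fun x hx => hx)
  rw [aux_finrank_clm, hWd] at hB2
  let g : (E →L[ℝ] Rᗮ) → Submodule ℝ H := fun Z =>
    LinearMap.range ((Q₀ + (Rᗮ).subtypeL.comp Z : E →L[ℝ] H) : E →ₗ[ℝ] H)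
  have hQ₀n : ‖Q₀‖ ≤ 1 := Q₀.opNorm_le_bound (by norm_num) fun x => by rw [hQ₀, one_mul]
  have horth : ∀ x y (Z : E →L[ℝ] Rᗮ), inner ℝ (Q₀ y) (Z x : H) = 0 := fun x y Z =>
    (Z x).2 (Q₀ y) ⟨y, rfl⟩
  refine ⟨B.image g, ?_, ?_, ?_⟩
  · intro U hU
    obtain ⟨Z, hZ, rfl⟩ := Finset.mem_image.1 hU
    apply LinearMap.finrank_range_of_inj
    rw [injective_iff_map_eq_zero]
    intro x hx
    have hx' : Q₀ x + (Z x : H) = 0 := hx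
    have h1 : inner ℝ (Q₀ x) (Q₀ x + (Z x : H)) = 0 := by rw [hx', inner_zero_right]
    rw [inner_add_right, horth, add_zero, inner_self_eq_zero] at h1
    exact hinj (by rw [h1, map_zero])
  · refine le_trans (by exact_mod_cast Finset.card_image_le) (hB2.trans ?_)
    have h7 : 1 + 2 * 3 / δ ≤ 7 / δ := by
      have : 1 ≤ 1 / δ := by rw [le_div_iff₀ hδ]; linarith
      have e : 7 / δ = 1 / δ + 2 * 3 / δ := by field_simp; norm_num
      linarith
    gcongr
  · intro Q hQ hd
    set M : E →L[ℝ] E := (ContinuousLinearMap.adjoint Q₀).comp Q with hM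
    have hadj : ∀ x, ‖ContinuousLinearMap.adjoint Q₀ x‖ ≤ ‖x‖ := fun x => by
      have := (ContinuousLinearMap.adjoint Q₀).le_opNorm x
      rw [LinearIsometryEquiv.norm_map] at this
      exact this.trans (by nlinarith [norm_nonneg x])
    have hadj0 : ∀ x, ContinuousLinearMap.adjoint Q₀ (Q₀ x) = x := fun x => by
      have := (ContinuousLinearMap.norm_map_iff_adjoint_comp_self Q₀).1 hQ₀
      exact DFunLike.congr_fun this x
    have hMx : ∀ x, ‖M x - x‖ ≤ 1 / 2 * ‖x‖ := fun x => by
      have e : M x - x = ContinuousLinearMap.adjoint Q₀ ((Q - Q₀) x) := by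
        rw [sub_apply, map_sub, hadj0]; rfl
      rw [e]
      refine (hadj _).trans (((Q - Q₀).le_opNorm x).trans ?_)
      rw [← dist_eq_norm]
      gcongr
    have hMx2 : ∀ x, ‖x‖ ≤ 2 * ‖M x‖ := fun x => by
      have h1 := hMx x
      have h2 : ‖x‖ ≤ ‖M x‖ + ‖M x - x‖ := by
        have := norm_sub_le (M x) (M x - x)
        simpa using this
      linarith
    have hMinj : Function.Injective (M : E →ₗ[ℝ] E) := by
      rw [injective_iff_map_eq_zero]
      intro x hx
      have := hMx2 x
      have hx' : M x = 0 := hx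
      rw [hx', norm_zero, mul_zero] at this
      exact norm_le_zero_iff.1 this
    let e := LinearEquiv.ofInjectiveEndo (M : E →ₗ[ℝ] E) hMinj
    have he : ∀ x, e x = M x := fun x => rfl
    have heN : ∀ x, M (e.symm x) = x := fun x => by rw [← he, e.apply_symm_apply]
    let Zl : E →ₗ[ℝ] H := (Q : E →ₗ[ℝ] H).comp (e.symm : E →ₗ[ℝ] E) - (Q₀ : E →ₗ[ℝ] H)
    have hZl : ∀ x, Zl x = Q (e.symm x) - Q₀ x := fun x => rfl
    have hZmem : ∀ x, Zl x ∈ Rᗮ := by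
      intro x
      rw [Submodule.mem_orthogonal]
      rintro _ ⟨y, rfl⟩
      change inner ℝ (Q₀ y) (Zl x) = 0
      rw [← ContinuousLinearMap.adjoint_inner_right, hZl, map_sub, hadj0]
      have : ContinuousLinearMap.adjoint Q₀ (Q (e.symm x)) = x := heN x
      rw [this, sub_self, inner_zero_right]
    let Z : E →L[ℝ] Rᗮ := LinearMap.toContinuousLinearMap (Zl.codRestrict Rᗮ hZmem)
    have hZ : ∀ x, (Z x : H) = Q (e.symm x) - Q₀ x := fun x => rfl
    have hZn : ‖Z‖ ≤ 3 := by
      apply Z.opNorm_le_bound (by norm_num)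
      intro x
      rw [Submodule.coe_norm, hZ]
      refine (norm_sub_le _ _).trans ?_
      rw [hQ, hQ₀]
      have := hMx2 (e.symm x)
      rw [heN] at this
      linarith
    obtain ⟨Z', hZ'B, hZ'⟩ := hB3 Z hZn
    refine ⟨g Z', Finset.mem_image_of_mem _ hZ'B, fun v => ?_⟩
    refine ⟨Q₀ (M v) + (Z' (M v) : H), ⟨M v, rfl⟩, ?_⟩
    have e1 : Q v - (Q₀ (M v) + (Z' (M v) : H)) = (((Z - Z') (M v) : Rᗮ) : H) := by
      have : e.symm (M v) = v := by rw [← he, e.symm_apply_apply]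
      rw [sub_apply, Submodule.coe_sub, hZ, this]
      abel
    rw [e1, ← Submodule.coe_norm]
    refine ((Z - Z').le_opNorm _).trans ?_
    rw [← dist_eq_norm]
    have : ‖M v‖ ≤ ‖Q v‖ := hadj _
    gcongr

theorem aux_grass (n r : ℕ) (δ : ℝ) (hδ : 0 < δ) (hδ1 : δ ≤ 1) :
    ∃ G : Finset (Submodule ℝ (EuclideanSpace ℝ (Fin n))), (∀ U ∈ G, Module.finrank ℝ U = r) ∧
      (G.card : ℝ) ≤ 5 ^ (r * n) * (7 / δ) ^ (r * (n - r)) ∧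
      ∀ U : Submodule ℝ (EuclideanSpace ℝ (Fin n)), Module.finrank ℝ U = r →
        ∃ U' ∈ G, ∀ x ∈ U, ∃ y ∈ U', ‖x - y‖ ≤ δ * ‖x‖ := by
  classical
  obtain ⟨A, hA1, hA2, hA3⟩ := aux_net_ball
    (E := EuclideanSpace ℝ (Fin r) →L[ℝ] EuclideanSpace ℝ (Fin n)) 1 (1/2) (by norm_num)
    (by norm_num) {Q | ∀ x, ‖Q x‖ = ‖x‖}
    (fun Q hQ => Q.opNorm_le_bound (by norm_num) fun x => by rw [hQ, one_mul])
  rw [aux_finrank_clm, finrank_euclideanSpace_fin, finrank_euclideanSpace_fin] at hA2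
  have hloc := aux_grass_local (E := EuclideanSpace ℝ (Fin r)) (H := EuclideanSpace ℝ (Fin n))
    δ hδ hδ1
  simp only [finrank_euclideanSpace_fin] at hloc
  choose! G hG1 hG2 hG3 using hloc
  refine ⟨A.biUnion G, ?_, ?_, ?_⟩
  · intro U hU
    obtain ⟨Q, hQ, hU⟩ := Finset.mem_biUnion.1 hU
    exact hG1 Q (hA1 Q hQ) U hU
  · calc ((A.biUnion G).card : ℝ) ≤ ((∑ Q ∈ A, (G Q).card : ℕ) : ℝ) := by
          exact_mod_cast Finset.card_biUnion_le
      _ = ∑ Q ∈ A, ((G Q).card : ℝ) := by push_cast; rfl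
      _ ≤ ∑ Q ∈ A, (7 / δ) ^ (r * (n - r)) := Finset.sum_le_sum fun Q hQ => hG2 Q (hA1 Q hQ)
      _ = A.card * (7 / δ) ^ (r * (n - r)) := by rw [Finset.sum_const, nsmul_eq_mul]
      _ ≤ _ := by
        have e : (1 + 2 * 1 / (1 / 2) : ℝ) = 5 := by norm_num
        rw [e] at hA2
        gcongr
  · intro U hU
    let b := (stdOrthonormalBasis ℝ U).reindex (finCongr hU)
    let q : EuclideanSpace ℝ (Fin r) →ₗᵢ[ℝ] EuclideanSpace ℝ (Fin n) :=
      U.subtypeₗᵢ.comp b.repr.symm.toLinearIsometry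
    obtain ⟨Q₀, hQ₀A, hQ₀⟩ := hA3 q.toContinuousLinearMap (fun x => q.norm_map x)
    obtain ⟨U', hU', h⟩ := hG3 Q₀ (hA1 _ hQ₀A) q.toContinuousLinearMap (fun x => q.norm_map x) hQ₀
    refine ⟨U', Finset.mem_biUnion.2 ⟨Q₀, hQ₀A, hU'⟩, fun x hx => ?_⟩
    have := h (b.repr ⟨x, hx⟩)
    have e : q.toContinuousLinearMap (b.repr ⟨x, hx⟩) = x := by
      simp [q]
    rwa [e] at this

noncomputable def auxTen {d r : ℕ} {n : Fin d → ℕ}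
    (a : Fin r → (i : Fin d) → EuclideanSpace ℝ (Fin (n i))) :
    EuclideanSpace ℝ ((i : Fin d) → Fin (n i)) :=
  WithLp.toLp 2 fun k => ∑ j, ∏ i, a j i (k i)

theorem auxTen_apply {d r : ℕ} {n : Fin d → ℕ}
    (a : Fin r → (i : Fin d) → EuclideanSpace ℝ (Fin (n i))) (k) :
    auxTen a k = ∑ j, ∏ i, a j i (k i) := rfl

theorem aux_sum_update {d : ℕ} {n : Fin d → ℕ} (i : Fin d) (f : ((i : Fin d) → Fin (n i)) → ℝ) :
    ∑ k, ∑ l, f (Function.update k i l) = n i * ∑ k, f k := by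
  classical
  rw [← Fintype.sum_prod_type']
  let e : (((i : Fin d) → Fin (n i)) × Fin (n i)) ≃ (((i : Fin d) → Fin (n i)) × Fin (n i)) :=
    { toFun := fun p => (Function.update p.1 i p.2, p.1 i)
      invFun := fun p => (Function.update p.1 i p.2, p.1 i)
      left_inv := fun p => by simp
      right_inv := fun p => by simp }
  have := Equiv.sum_comp e (fun p => f p.1)
  rw [show (∑ p : ((i : Fin d) → Fin (n i)) × Fin (n i), f (Function.update p.1 i p.2))
    = ∑ p, f (e p).1 from rfl, this, Fintype.sum_prod_type]
  simp [Finset.mul_sum]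

theorem aux_fibre {d : ℕ} {n : Fin d → ℕ} (i : Fin d)
    (S T : EuclideanSpace ℝ ((i : Fin d) → Fin (n i))) (c : ℝ) (hc : 0 ≤ c)
    (h : ∀ k, ∑ l, S (Function.update k i l) ^ 2 ≤ c ^ 2 * ∑ l, T (Function.update k i l) ^ 2) :
    ‖S‖ ≤ c * ‖T‖ := by
  have hsum : (n i : ℝ) * ∑ k, S k ^ 2 ≤ n i * (c ^ 2 * ∑ k, T k ^ 2) := by
    rw [← aux_sum_update i (fun k => S k ^ 2), mul_left_comm,
      ← aux_sum_update i (fun k => T k ^ 2), Finset.mul_sum]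
    exact Finset.sum_le_sum fun k _ => h k
  have h2 : ‖S‖ ^ 2 ≤ (c * ‖T‖) ^ 2 := by
    rw [mul_pow, EuclideanSpace.real_norm_sq_eq, EuclideanSpace.real_norm_sq_eq]
    rcases Nat.eq_zero_or_pos (n i) with h0 | hpos
    · have : IsEmpty ((i : Fin d) → Fin (n i)) := ⟨fun k => by
        have := (k i).2
        omega⟩
      simp
    · exact le_of_mul_le_mul_left hsum (by exact_mod_cast hpos)
  exact le_of_sq_le_sq h2 (by positivity)

theorem aux_step {d r : ℕ} {n : Fin d → ℕ}
    (a : Fin r → (i : Fin d) → EuclideanSpace ℝ (Fin (n i))) (i : Fin d)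
    (U : Submodule ℝ (EuclideanSpace ℝ (Fin (n i)))) (ha : ∀ j, a j i ∈ U)
    (P : EuclideanSpace ℝ (Fin (n i)) →ₗ[ℝ] EuclideanSpace ℝ (Fin (n i))) (δ : ℝ) (hδ : 0 ≤ δ)
    (h1 : ∀ v, ‖P v‖ ≤ ‖v‖) (h2 : ∀ v ∈ U, ‖v - P v‖ ≤ δ * ‖v‖)
    (a' : Fin r → (i : Fin d) → EuclideanSpace ℝ (Fin (n i)))
    (ha' : ∀ j, a' j i = P (a j i)) (ha'' : ∀ j i', i' ≠ i → a' j i' = a j i') :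
    ‖auxTen a'‖ ≤ ‖auxTen a‖ ∧ ‖auxTen a - auxTen a'‖ ≤ δ * ‖auxTen a‖ := by
  classical
  let w : ((i : Fin d) → Fin (n i)) → Fin r → ℝ := fun k j =>
    ∏ i' ∈ Finset.univ.erase i, a j i' (k i')
  let v : ((i : Fin d) → Fin (n i)) → EuclideanSpace ℝ (Fin (n i)) := fun k => ∑ j, w k j • a j i
  have hv : ∀ k l, auxTen a (Function.update k i l) = v k l := by
    intro k l
    rw [auxTen_apply]
    simp only [v, WithLp.ofLp_sum, Finset.sum_apply, PiLp.smul_apply, smul_eq_mul]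
    refine Finset.sum_congr rfl fun j _ => ?_
    rw [← Finset.mul_prod_erase _ _ (Finset.mem_univ i), mul_comm]
    congr 1
    · refine Finset.prod_congr rfl fun i' hi' => ?_
      rw [Function.update_of_ne (Finset.ne_of_mem_erase hi')]
    · rw [Function.update_self]
  have hv' : ∀ k l, auxTen a' (Function.update k i l) = P (v k) l := by
    intro k l
    rw [auxTen_apply]
    simp only [v, map_sum, map_smul, WithLp.ofLp_sum, Finset.sum_apply, PiLp.smul_apply,
      smul_eq_mul]
    refine Finset.sum_congr rfl fun j _ => ?_
    rw [← Finset.mul_prod_erase _ _ (Finset.mem_univ i), mul_comm]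
    congr 1
    · refine Finset.prod_congr rfl fun i' hi' => ?_
      rw [Function.update_of_ne (Finset.ne_of_mem_erase hi'),
        ha'' j i' (Finset.ne_of_mem_erase hi')]
    · rw [Function.update_self, ha']
  have hvU : ∀ k, v k ∈ U := fun k => Submodule.sum_mem _ fun j _ => Submodule.smul_mem _ _ (ha j)
  constructor
  · have := aux_fibre i (auxTen a') (auxTen a) 1 zero_le_one fun k => by
      simp only [hv, hv']
      rw [← EuclideanSpace.real_norm_sq_eq, ← EuclideanSpace.real_norm_sq_eq, one_pow, one_mul]
      have := h1 (v k)
      gcongr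
    simpa using this
  · apply aux_fibre i _ _ δ hδ fun k => ?_
    simp only [PiLp.sub_apply, hv, hv']
    have e : ∑ l, (v k l - P (v k) l) ^ 2 = ‖v k - P (v k)‖ ^ 2 := by
      rw [EuclideanSpace.real_norm_sq_eq]; rfl
    rw [e, ← EuclideanSpace.real_norm_sq_eq, ← mul_pow]
    have := h2 _ (hvU k)
    gcongr

theorem aux_proj {d r : ℕ} {n : Fin d → ℕ}
    (a : Fin r → (i : Fin d) → EuclideanSpace ℝ (Fin (n i)))
    (U : (i : Fin d) → Submodule ℝ (EuclideanSpace ℝ (Fin (n i)))) (ha : ∀ j i, a j i ∈ U i)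
    (P : (i : Fin d) → EuclideanSpace ℝ (Fin (n i)) →ₗ[ℝ] EuclideanSpace ℝ (Fin (n i)))
    (δ : ℝ) (hδ : 0 ≤ δ)
    (h1 : ∀ i v, ‖P i v‖ ≤ ‖v‖) (h2 : ∀ i, ∀ v ∈ U i, ‖v - P i v‖ ≤ δ * ‖v‖) :
    ‖auxTen fun j i => P i (a j i)‖ ≤ ‖auxTen a‖ ∧
      ‖auxTen a - auxTen fun j i => P i (a j i)‖ ≤ d * δ * ‖auxTen a‖ := by
  classical
  have key : ∀ s : Finset (Fin d),
      ‖auxTen fun j i => if i ∈ s then P i (a j i) else a j i‖ ≤ ‖auxTen a‖ ∧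
      ‖auxTen a - auxTen fun j i => if i ∈ s then P i (a j i) else a j i‖
        ≤ s.card * δ * ‖auxTen a‖ := by
    intro s
    induction s using Finset.induction_on with
    | empty => simp
    | insert i s his ih =>
      have hst := aux_step (fun j i => if i ∈ s then P i (a j i) else a j i) i (U i)
        (fun j => by simp [his, ha]) (P i) δ hδ (h1 i) (h2 i)
        (fun j i' => if i' ∈ insert i s then P i' (a j i') else a j i')
        (fun j => by simp [his]) (fun j i' hi' => by simp [hi'])
      refine ⟨hst.1.trans ih.1, ?_⟩
      refine (norm_sub_le_norm_sub_add_norm_sub _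
        (auxTen fun j i => if i ∈ s then P i (a j i) else a j i) _).trans ?_
      have h3 := hst.2.trans (mul_le_mul_of_nonneg_left ih.1 hδ)
      rw [Finset.card_insert_of_notMem his]
      push_cast
      linarith [ih.2]
  simpa using key Finset.univ

theorem aux_exists_sub (n r : ℕ) (hr : r ≤ n) (a : Fin r → EuclideanSpace ℝ (Fin n)) :
    ∃ U : Submodule ℝ (EuclideanSpace ℝ (Fin n)), Module.finrank ℝ U = r ∧ ∀ j, a j ∈ U := by
  have h0 : Module.finrank ℝ (Submodule.span ℝ (Set.range a)) ≤ r := by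
    simpa [Set.finrank] using finrank_range_le_card (R := ℝ) a
  have : ∀ m, m ≤ r → Module.finrank ℝ (Submodule.span ℝ (Set.range a)) ≤ m →
      ∃ U : Submodule ℝ (EuclideanSpace ℝ (Fin n)), Module.finrank ℝ U = m ∧ ∀ j, a j ∈ U := by
    intro m
    induction m with
    | zero =>
      intro _ h
      exact ⟨_, Nat.le_zero.1 h, fun j => Submodule.subset_span ⟨j, rfl⟩⟩
    | succ m ih =>
      intro hm h
      rcases Nat.lt_or_ge m (Module.finrank ℝ (Submodule.span ℝ (Set.range a))) with h3 | h3
      · exact ⟨Submodule.span ℝ (Set.range a), by omega, fun j => Submodule.subset_span ⟨j, rfl⟩⟩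
      · obtain ⟨U, hU, hU2⟩ := ih (by omega) h3
        have hne : U ≠ ⊤ := by
          rintro rfl
          rw [finrank_top, finrank_euclideanSpace_fin] at hU
          omega
        obtain ⟨x, hx⟩ : ∃ x, x ∉ U := by
          by_contra! hh
          exact hne (Submodule.eq_top_iff'.2 hh)
        refine ⟨U ⊔ Submodule.span ℝ {x}, ?_, fun j => Submodule.mem_sup_left (hU2 j)⟩
        have hx0 : x ≠ 0 := fun h => hx (h ▸ U.zero_mem)
        have e := Submodule.finrank_sup_add_finrank_inf_eq U (Submodule.span ℝ {x})
        have hdis : U ⊓ Submodule.span ℝ {x} = ⊥ :=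
          (disjoint_iff.1 ((Submodule.disjoint_span_singleton' hx0).2 hx))
        rw [hdis, finrank_bot, finrank_span_singleton hx0, hU] at e
        omega
  exact this r le_rfl h0

theorem aux_coord {d r : ℕ} {n : Fin d → ℕ}
    (U : (i : Fin d) → Submodule ℝ (EuclideanSpace ℝ (Fin (n i))))
    (hU : ∀ i, Module.finrank ℝ (U i) = r) :
    ∃ b : (i : Fin d) → Fin r → Fin (n i) → ℝ,
      ∀ a : Fin r → (i : Fin d) → EuclideanSpace ℝ (Fin (n i)), (∀ j i, a j i ∈ U i) →
        ∃ c : Fin d → Fin r → Fin r → ℝ,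
          ∀ k, auxTen a k = ∑ j, ∏ i, ∑ l, c i j l * b i l (k i) := by
  let B := fun i => Module.finBasisOfFinrankEq ℝ (U i) (hU i)
  refine ⟨fun i l => (B i l : EuclideanSpace ℝ (Fin (n i))).ofLp, fun a ha => ?_⟩
  refine ⟨fun i j l => (B i).repr ⟨a j i, ha j i⟩ l, fun k => ?_⟩
  rw [auxTen_apply]
  refine Finset.sum_congr rfl fun j _ => Finset.prod_congr rfl fun i _ => ?_
  have h := congrArg (fun x : U i => (x : EuclideanSpace ℝ (Fin (n i))) (k i))
    ((B i).sum_repr ⟨a j i, ha j i⟩)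
  simp only [AddSubmonoidClass.coe_finsetSum, WithLp.ofLp_sum, Finset.sum_apply,
    Submodule.coe_smul, PiLp.smul_apply, smul_eq_mul] at h
  exact h.symm

theorem aux_small {d r : ℕ} {n : Fin d → ℕ} (b : (i : Fin d) → Fin r → Fin (n i) → ℝ)
    (t ε : ℝ) (ht : 0 < t) (hε : 0 < ε)
    (s : Finset (EuclideanSpace ℝ ((i : Fin d) → Fin (n i))))
    (hs : ∀ T ∈ s, (∃ c : Fin d → Fin r → Fin r → ℝ,
      ∀ k, T k = ∑ j, ∏ i, ∑ l, c i j l * b i l (k i)) ∧ ‖T‖ ≤ t)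
    (hsep : ∀ T ∈ s, ∀ T' ∈ s, T ≠ T' → ε < dist T T') :
    (s.card : ℝ) ≤ (1 + 2 * t / ε) ^ (r ^ d) := by
  classical
  let B : (Fin d → Fin r) → EuclideanSpace ℝ ((i : Fin d) → Fin (n i)) := fun g =>
    WithLp.toLp 2 fun k => ∏ i, b i (g i) (k i)
  set W := Submodule.span ℝ (Set.range B) with hW
  have hWd : Module.finrank ℝ W ≤ r ^ d := by
    simpa [Set.finrank] using finrank_range_le_card (R := ℝ) B
  have hmem : ∀ T ∈ s, T ∈ W := by
    intro T hT
    obtain ⟨⟨c, hc⟩, -⟩ := hs T hT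
    have : T = ∑ g, (∑ j, ∏ i, c i j (g i)) • B g := by
      ext k
      rw [hc]
      simp only [WithLp.ofLp_sum, Finset.sum_apply, PiLp.smul_apply, smul_eq_mul, Finset.sum_mul]
      rw [Finset.sum_comm]
      refine Finset.sum_congr rfl fun j _ => ?_
      rw [Finset.prod_univ_sum]
      simp only [Fintype.piFinset_univ]
      refine Finset.sum_congr rfl fun g _ => ?_
      rw [Finset.prod_mul_distrib]
    rw [this]
    exact Submodule.sum_mem _ fun g _ => Submodule.smul_mem _ _ (Submodule.subset_span ⟨g, rfl⟩)
  have h := aux_packing_ball (E := W) t ε ht.le hε (s.subtype (· ∈ W))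
    (fun c hc => (hs c (Finset.mem_subtype.1 hc)).2)
    (fun c hc c' hc' hne => hsep c (Finset.mem_subtype.1 hc) c' (Finset.mem_subtype.1 hc')
      (fun h => hne (Subtype.ext h)))
  rw [Finset.card_subtype, Finset.filter_true_of_mem hmem] at h
  refine h.trans (pow_le_pow_right₀ ?_ hWd)
  have : 0 ≤ 2 * t / ε := by positivity
  linarith

theorem aux_assemble {d r : ℕ} (hd : 1 ≤ d) {n : Fin d → ℕ} (hr : ∀ i, r ≤ n i)
    (t ε L : ℝ) (ht : 0 < t) (hε : 0 < ε) (hεt : ε ≤ 2 * t)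
    (hL : ∀ (b : (i : Fin d) → Fin r → Fin (n i) → ℝ)
      (s : Finset (EuclideanSpace ℝ ((i : Fin d) → Fin (n i)))),
      (∀ T ∈ s, (∃ c : Fin d → Fin r → Fin r → ℝ,
        ∀ k, T k = ∑ j, ∏ i, ∑ l, c i j l * b i l (k i)) ∧ ‖T‖ ≤ t) →
      (∀ T ∈ s, ∀ T' ∈ s, T ≠ T' → ε / 2 < dist T T') → (s.card : ℝ) ≤ Real.exp L) :
    ∃ F : Finset (EuclideanSpace ℝ ((i : Fin d) → Fin (n i))),
      (∀ T ∈ F, CPRankLE r T ∧ ‖T‖ ≤ t) ∧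
      Real.log F.card ≤ r * (∑ i, (n i : ℝ)) * Real.log 5
        + (r * (∑ i, (n i : ℝ)) - d * r ^ 2) * Real.log (14 * d * t / ε) + L ∧
      ∀ T : EuclideanSpace ℝ ((i : Fin d) → Fin (n i)),
        CPRankLE r T → ‖T‖ ≤ t → ∃ y ∈ F, dist T y ≤ ε := by
  classical
  have hd' : (1:ℝ) ≤ d := by exact_mod_cast hd
  set δ : ℝ := ε / (2 * d * t) with hδ
  have hδ0 : 0 < δ := by positivity
  have hδ1 : δ ≤ 1 := by
    rw [hδ, div_le_one (by positivity)]
    nlinarith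
  choose G hG1 hG2 hG3 using fun i => aux_grass (n i) r δ hδ0 hδ1
  let V : ((i : Fin d) → Submodule ℝ (EuclideanSpace ℝ (Fin (n i)))) →
      Set (EuclideanSpace ℝ ((i : Fin d) → Fin (n i))) := fun U =>
    {T | ∃ a : Fin r → (i : Fin d) → EuclideanSpace ℝ (Fin (n i)),
      (∀ j i, a j i ∈ U i) ∧ T = auxTen a ∧ ‖T‖ ≤ t}
  have hnet : ∀ U : (i : Fin d) → Submodule ℝ (EuclideanSpace ℝ (Fin (n i))),
      (∀ i, Module.finrank ℝ (U i) = r) →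
      ∃ F : Finset (EuclideanSpace ℝ ((i : Fin d) → Fin (n i))), (∀ c ∈ F, c ∈ V U) ∧
        (F.card : ℝ) ≤ Real.exp L ∧ ∀ x ∈ V U, ∃ y ∈ F, dist x y ≤ ε / 2 := by
    intro U hU
    obtain ⟨b, hb⟩ := aux_coord U hU
    apply aux_net_of_packing _ _ _ (by positivity)
    intro s hs hsep
    refine hL b s (fun T hT => ?_) hsep
    obtain ⟨a, ha, rfl, hn⟩ := hs T hT
    exact ⟨hb a ha, hn⟩
  choose! N hN1 hN2 hN3 using hnet
  have hpi : ∀ U ∈ Fintype.piFinset G, ∀ i, Module.finrank ℝ (U i) = r := fun U hU i =>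
    hG1 i _ (Fintype.mem_piFinset.1 hU i)
  set F := (Fintype.piFinset G).biUnion N with hF
  have hcov : ∀ T : EuclideanSpace ℝ ((i : Fin d) → Fin (n i)),
        CPRankLE r T → ‖T‖ ≤ t → ∃ y ∈ F, dist T y ≤ ε := by
    rintro T ⟨a₀, ha₀⟩ hT
    let a : Fin r → (i : Fin d) → EuclideanSpace ℝ (Fin (n i)) := fun j i => WithLp.toLp 2 (a₀ j i)
    have hTa : T = auxTen a := by
      ext k
      rw [ha₀, auxTen_apply]
    choose U hU1 hU2 using fun i => aux_exists_sub (n i) r (hr i) (fun j => a j i)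
    choose U' hU'1 hU'2 using fun i => hG3 i (U i) (hU1 i)
    let P : (i : Fin d) → EuclideanSpace ℝ (Fin (n i)) →ₗ[ℝ] EuclideanSpace ℝ (Fin (n i)) :=
      fun i => ((U' i).starProjection : _ →L[ℝ] _)
    have hP : ∀ i v, P i v = (U' i).starProjection v := fun i v => rfl
    have hpr := aux_proj a U (fun j i => hU2 i j) P δ hδ0.le
      (fun i v => by
        rw [hP]; exact Submodule.norm_starProjection_apply_le _ _)
      (fun i v hv => by
        obtain ⟨y, hy, hvy⟩ := hU'2 i v hv
        refine le_trans ?_ hvy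
        rw [hP, Submodule.starProjection_minimal]
        exact ciInf_le ⟨0, by rintro _ ⟨z, rfl⟩; exact norm_nonneg _⟩ (⟨y, hy⟩ : U' i))
    have hU'm : U' ∈ Fintype.piFinset G := Fintype.mem_piFinset.2 hU'1
    have hmem : (auxTen fun j i => P i (a j i)) ∈ V U' := by
      refine ⟨_, fun j i => ?_, rfl, hpr.1.trans (hTa ▸ hT)⟩
      rw [hP]
      exact Submodule.starProjection_apply_mem _ _
    obtain ⟨y, hy, hdy⟩ := hN3 U' (hpi _ hU'm) _ hmem
    refine ⟨y, Finset.mem_biUnion.2 ⟨U', hU'm, hy⟩, ?_⟩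
    refine (dist_triangle _ (auxTen fun j i => P i (a j i)) _).trans ?_
    have h1 : dist T (auxTen fun j i => P i (a j i)) ≤ ε / 2 := by
      rw [dist_eq_norm, hTa]
      refine hpr.2.trans ?_
      rw [← hTa]
      calc d * δ * ‖T‖ ≤ d * δ * t := by gcongr
        _ = ε / 2 := by rw [hδ]; field_simp
    linarith
  refine ⟨F, ?_, ?_, hcov⟩
  · intro T hT
    obtain ⟨U, hU, hTU⟩ := Finset.mem_biUnion.1 hT
    obtain ⟨a, -, h2, h3⟩ := hN1 U (hpi U hU) T hTU
    exact ⟨⟨fun j i => (a j i).ofLp, fun k => by rw [h2, auxTen_apply]⟩, h3⟩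
  · have hFpos : 0 < F.card := by
      rcases Nat.eq_zero_or_pos r with h0 | h0
      · obtain ⟨y, hy, -⟩ := hcov 0 ⟨fun _ _ _ => 0, fun k => by subst h0; simp⟩ (by simpa using ht.le)
        exact Finset.card_pos.2 ⟨y, hy⟩
      · obtain ⟨y, hy, -⟩ := hcov 0 ⟨fun _ _ _ => 0, fun k => by
          have : d ≠ 0 := by omega
          simp [this]⟩ (by simpa using ht.le)
        exact Finset.card_pos.2 ⟨y, hy⟩
    have hFc : (F.card : ℝ) ≤ (∏ i, (5 ^ (r * n i) * (7 / δ) ^ (r * (n i - r)))) * Real.exp L := by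
      calc (F.card : ℝ) ≤ ((∑ U ∈ Fintype.piFinset G, (N U).card : ℕ) : ℝ) := by
            exact_mod_cast Finset.card_biUnion_le
        _ = ∑ U ∈ Fintype.piFinset G, ((N U).card : ℝ) := by push_cast; rfl
        _ ≤ ∑ U ∈ Fintype.piFinset G, Real.exp L :=
            Finset.sum_le_sum fun U hU => hN2 U (hpi U hU)
        _ = (∏ i, ((G i).card : ℝ)) * Real.exp L := by
            rw [Finset.sum_const, nsmul_eq_mul, Fintype.card_piFinset]; push_cast; rfl
        _ ≤ _ := by
            gcongr with i
            exact hG2 i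
    have hlog := Real.log_le_log (by exact_mod_cast hFpos) hFc
    have h7 : 7 / δ = 14 * d * t / ε := by rw [hδ]; field_simp; norm_num
    rw [Real.log_mul (by positivity) (by positivity), Real.log_exp, Real.log_prod
      (fun i _ => by positivity)] at hlog
    refine hlog.trans_eq ?_
    congr 1
    have e : ∀ i, Real.log (5 ^ (r * n i) * (7 / δ) ^ (r * (n i - r)))
        = r * Real.log 5 * n i + (r * Real.log (14 * d * t / ε) * n i
          - r ^ 2 * Real.log (14 * d * t / ε)) := by
      intro i
      rw [Real.log_mul (by positivity) (by positivity), Real.log_pow, Real.log_pow, h7]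
      push_cast [Nat.cast_sub (hr i)]
      ring
    simp only [e, Finset.sum_add_distrib, Finset.sum_sub_distrib, ← Finset.mul_sum]
    simp
    ring

theorem aux_arith_small {d r : ℕ} (hd : 1 ≤ d) (hr : 1 ≤ r) (hdr : r = 1 ∨ d = 1)
    (N t ε : ℝ) (hN2 : 2 * d ≤ N) (hNr : d * r ≤ N) (ht : 0 < t) (hε : 0 < ε) (hεt : ε ≤ 2 * t) :
    r * N * Real.log 5 + (r * N - d * r ^ 2) * Real.log (14 * d * t / ε)
      + r * Real.log (6 * (t / ε))
    ≤ r * N * Real.log (4900 * d * t / ε) + 100 * d ^ 2 * r ^ 2 * Real.log r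
      - d * r ^ 2 * Real.log 4900 := by
  have hd' : (1:ℝ) ≤ d := by exact_mod_cast hd
  have hr' : (1:ℝ) ≤ r := by exact_mod_cast hr
  have hx : 1 / 2 ≤ t / ε := by rw [div_le_div_iff₀ (by norm_num) hε]; linarith
  have hx0 : 0 < t / ε := by positivity
  have e1 : Real.log (14 * d * t / ε) = Real.log 14 + (Real.log d + Real.log (t / ε)) := by
    rw [← Real.log_mul (by positivity) (by positivity), ← Real.log_mul (by positivity) (by positivity)]
    congr 1; ring
  have e3 : Real.log 4900 = 2 * (Real.log 5 + Real.log 14) := by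
    rw [← Real.log_mul (by norm_num) (by norm_num)]
    have := Real.log_pow (70:ℝ) 2
    norm_num at this ⊢
    exact this
  have e2 : Real.log (4900 * d * t / ε)
      = Real.log 4900 + (Real.log d + Real.log (t / ε)) := by
    rw [← Real.log_mul (by positivity) (by positivity), ← Real.log_mul (by positivity) (by positivity)]
    congr 1; ring
  have e4 : Real.log (6 * (t / ε)) = Real.log 6 + Real.log (t / ε) :=
    Real.log_mul (by norm_num) (by positivity)
  have h614 : Real.log 6 ≤ Real.log 14 := Real.log_le_log (by norm_num) (by norm_num)
  have h6x : 0 ≤ Real.log 6 + Real.log (t / ε) := by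
    rw [← e4]; apply Real.log_nonneg; linarith
  have hdl : 0 ≤ Real.log d := Real.log_nonneg hd'
  have h5 : 0 ≤ Real.log 5 := Real.log_nonneg (by norm_num)
  rw [e1, e2, e4, e3]
  have h50 : 0 ≤ Real.log 5 + Real.log 14 :=
    add_nonneg h5 (Real.log_nonneg (by norm_num))
  set X := Real.log (t / ε)
  set a := Real.log 5
  set b := Real.log 14
  rcases hdr with h | h
  · subst h
    simp only [Nat.cast_one, Real.log_one]
    have h1 := mul_le_mul_of_nonneg_right hN2 h50
    have h2 : Real.log 6 + X ≤ d * (b + (Real.log d + X)) := by nlinarith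
    nlinarith
  · subst h
    have hl : a + b ≤ 100 * Real.log r ∨ r = 1 := by
      rcases Nat.lt_or_ge r 2 with h | h
      · right; omega
      · left
        have h2 : Real.log 2 ≤ Real.log r := Real.log_le_log (by norm_num) (by exact_mod_cast h)
        have h3 := Real.log_two_gt_d9
        have h4 : a + b ≤ Real.log (2 ^ 7) := by
          rw [← Real.log_mul (by norm_num) (by norm_num)]
          exact Real.log_le_log (by norm_num) (by norm_num)
        rw [Real.log_pow] at h4
        push_cast at h4
        linarith
    simp only [Nat.cast_one, Real.log_one] at *
    rcases hl with hl | hl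
    · have h1 := mul_le_mul_of_nonneg_right hNr (mul_nonneg (by linarith : (0:ℝ) ≤ r) h50)
      have h2 := mul_le_mul_of_nonneg_left hl (sq_nonneg (r:ℝ))
      have h3 : r * (Real.log 6 + X) ≤ r ^ 2 * (b + X) := by
        have : (r:ℝ) ≤ r ^ 2 := by nlinarith
        exact mul_le_mul this (by linarith) h6x (by positivity)
      nlinarith
    · subst hl
      simp only [Nat.cast_one, Real.log_one]
      have h1 := mul_le_mul_of_nonneg_right hN2 h50
      nlinarith

theorem aux_arith_big {d r : ℕ} (hd : 1 ≤ d) (hr : 2 ≤ r)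
    (N t ε : ℝ) (hNr : d * r ≤ N) (ht : 0 < t) (hε : 0 < ε) :
    r * N * Real.log 5 + (r * N - d * r ^ 2) * Real.log (14 * d * t / ε)
      + (d * r ^ 2 * Real.log (32 * d * r ^ 3 * (t / (ε / 2))) + 1)
    ≤ r * N * Real.log (4900 * d * t / ε) + 100 * d ^ 2 * r ^ 2 * Real.log r
      - d * r ^ 2 * Real.log 4900 := by
  have hd' : (1:ℝ) ≤ d := by exact_mod_cast hd
  have hr' : (2:ℝ) ≤ r := by exact_mod_cast hr
  have hr0 : (0:ℝ) < r := by linarith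
  have e1 : Real.log (14 * d * t / ε) = Real.log 14 + (Real.log d + Real.log (t / ε)) := by
    rw [← Real.log_mul (by positivity) (by positivity), ← Real.log_mul (by positivity) (by positivity)]
    congr 1; ring
  have e3 : Real.log 4900 = 2 * (Real.log 5 + Real.log 14) := by
    rw [← Real.log_mul (by norm_num) (by norm_num)]
    have := Real.log_pow (70:ℝ) 2
    norm_num at this ⊢
    exact this
  have e2 : Real.log (4900 * d * t / ε)
      = Real.log 4900 + (Real.log d + Real.log (t / ε)) := by
    rw [← Real.log_mul (by positivity) (by positivity), ← Real.log_mul (by positivity) (by positivity)]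
    congr 1; ring
  have e4 : Real.log (32 * d * r ^ 3 * (t / (ε / 2)))
      = 6 * Real.log 2 + 3 * Real.log r + (Real.log d + Real.log (t / ε)) := by
    have h1 : 6 * Real.log 2 = Real.log (2 ^ 6) := by rw [Real.log_pow]; norm_num
    have h2 : 3 * Real.log r = Real.log ((r:ℝ) ^ 3) := by rw [Real.log_pow]; norm_num
    rw [h1, h2, ← Real.log_mul (by positivity) (by positivity),
      ← Real.log_mul (by positivity) (by positivity), ← Real.log_mul (by positivity) (by positivity)]
    congr 1; field_simp; norm_num
  have h5 : 0 ≤ Real.log 5 := Real.log_nonneg (by norm_num)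
  have h14 : 0 ≤ Real.log 14 := Real.log_nonneg (by norm_num)
  have h53 : Real.log 5 ≤ 3 * Real.log 2 := by
    have h1 : 3 * Real.log 2 = Real.log (2 ^ 3) := by rw [Real.log_pow]; norm_num
    rw [h1]; exact Real.log_le_log (by norm_num) (by norm_num)
  have h2r : Real.log 2 ≤ Real.log r := Real.log_le_log (by norm_num) hr'
  have h2 := Real.log_two_gt_d9
  rw [e1, e2, e4, e3]
  set X := Real.log d + Real.log (t / ε)
  set a := Real.log 5
  set b := Real.log 14
  have h1 := mul_le_mul_of_nonneg_right hNr (mul_nonneg hr0.le (by linarith : 0 ≤ a + b))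
  have hD : (1:ℝ) ≤ d * r ^ 2 := by nlinarith
  have h3 : (d * r ^ 2 : ℝ) * (6 * Real.log 2 + 3 * Real.log r + a + 1)
      ≤ d * r ^ 2 * (100 * Real.log r) :=
    mul_le_mul_of_nonneg_left (by linarith) (by linarith)
  have h4 : (d * r ^ 2 : ℝ) * (100 * Real.log r) ≤ 100 * d ^ 2 * r ^ 2 * Real.log r := by
    have hl : 0 ≤ Real.log r := by linarith
    have : (d:ℝ) ≤ d ^ 2 := by nlinarith
    calc (d * r ^ 2 : ℝ) * (100 * Real.log r) ≤ (d ^ 2 * r ^ 2 : ℝ) * (100 * Real.log r) := by gcongr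
      _ = _ := by ring
  nlinarith

/-- Covering number bound for tensors of small CP rank (`r ≤ minᵢ nᵢ`) and Frobenius
norm at most `t`: there is an `ε`-net `F` with
`log |F| ≤ r(Σᵢ nᵢ)·log(c₁dt/ε) + c₂d²r²·log r − dr²·log c₁`. -/
theorem covering_low_cp_rank_small_rank : ∃ c₁ c₂ : ℝ, 1 ≤ c₁ ∧ 1 ≤ c₂ ∧
    ∀ (d : ℕ), 1 ≤ d → ∀ (n : Fin d → ℕ), (∀ i, 2 ≤ n i) →
    ∀ (r : ℕ), 1 ≤ r → (∀ i, r ≤ n i) → ∀ (t ε : ℝ), 0 < t → 0 < ε → ε ≤ 2 * t →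
    ∃ F : Finset (EuclideanSpace ℝ ((i : Fin d) → Fin (n i))),
      (↑F ⊆ {T : EuclideanSpace ℝ ((i : Fin d) → Fin (n i)) | CPRankLE r T ∧ ‖T‖ ≤ t}) ∧
      Real.log F.card
        ≤ r * (∑ i, (n i : ℝ)) * Real.log (c₁ * d * t / ε)
          + c₂ * d ^ 2 * r ^ 2 * Real.log r - d * r ^ 2 * Real.log c₁ ∧
      ∀ T : EuclideanSpace ℝ ((i : Fin d) → Fin (n i)),
        CPRankLE r T → ‖T‖ ≤ t → ∃ y ∈ F, dist T y ≤ ε := by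


  classical
  refine ⟨4900, 100, by norm_num, by norm_num, ?_⟩
  intro d hd n hn r hr hrn t ε ht hε hεt
  have hN2 : 2 * (d:ℝ) ≤ ∑ i, (n i : ℝ) := by
    calc 2 * (d:ℝ) = ∑ i : Fin d, (2:ℝ) := by simp [mul_comm]
      _ ≤ _ := Finset.sum_le_sum fun i _ => by exact_mod_cast hn i
  have hNr : (d:ℝ) * r ≤ ∑ i, (n i : ℝ) := by
    calc (d:ℝ) * r = ∑ i : Fin d, (r:ℝ) := by simp
      _ ≤ _ := Finset.sum_le_sum fun i _ => by exact_mod_cast hrn i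
  by_cases hdr : r = 1 ∨ d = 1
  · obtain ⟨F, h1, h2, h3⟩ := aux_assemble hd hrn t ε (r * Real.log (6 * (t / ε))) ht hε hεt
      (fun b s hs hsep => by
        have h := aux_small b t (ε / 2) ht (by positivity) s hs hsep
        have hpow : r ^ d = r := by rcases hdr with h | h <;> simp [h]
        rw [hpow] at h
        refine h.trans ?_
        have hx : 1 / 2 ≤ t / ε := by rw [div_le_div_iff₀ (by norm_num) hε]; linarith
        have hx0 : 0 < t / ε := by positivity
        rw [← Real.log_pow, Real.exp_log (by positivity)]
        have e : 2 * t / (ε / 2) = 4 * (t / ε) := by field_simp; norm_num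
        rw [e]
        exact pow_le_pow_left₀ (by positivity) (by linarith) _)
    exact ⟨F, fun T hT => h1 T hT,
      h2.trans (aux_arith_small hd hr hdr _ t ε hN2 hNr ht hε hεt), h3⟩
  · have hr2 : 2 ≤ r := by omega
    have hd2 : 2 ≤ d := by omega
    obtain ⟨F, h1, h2, h3⟩ := aux_assemble hd hrn t ε
      (d * r ^ 2 * Real.log (32 * d * r ^ 3 * (t / (ε / 2))) + 1) ht hε hεt
      (fun b s hs hsep => by
        obtain ⟨d, rfl⟩ := Nat.exists_eq_add_of_le' hd2
        obtain ⟨r, rfl⟩ := Nat.exists_eq_add_of_le' hr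
        have h := aux_core_log b t (ε / 2) ht (by positivity) (by linarith) s hs hsep
        rcases Nat.eq_zero_or_pos s.card with h0 | h0
        · rw [h0, Nat.cast_zero]; positivity
        · rw [← Real.log_le_iff_le_exp (by exact_mod_cast h0)]
          push_cast
          exact h)
    exact ⟨F, fun T hT => h1 T hT,
      h2.trans (aux_arith_big hd hr2 _ t ε hNr ht hε), h3⟩
end

section
/- For all real numbers a, b, c with 0 < a ≤ b ≤ c, the inequality ∫_a^b √(log(c/ε)) dε ≤ b·√π + b·√(log(c/b)) − a·√(log(c/a)) holds. -/
/-- Bound on the Dudley-type integral `∫_a^b √(log(c/ε)) dε`: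
it is at most `b·√π + b·√(log(c/b)) − a·√(log(c/a))`. -/
theorem integral_sqrt_log_le (a b c : ℝ) (ha : 0 < a) (hab : a ≤ b) (hbc : b ≤ c) :
    ∫ x in a..b, Real.sqrt (Real.log (c / x))
      ≤ b * Real.sqrt Real.pi
        + (b * Real.sqrt (Real.log (c / b)) - a * Real.sqrt (Real.log (c / a))) := by
  have hb : 0 < b := by linarith
  have hc : 0 < c := by linarith
  have hcont : ContinuousOn (fun x => Real.sqrt (Real.log (c / x))) (Set.Icc a b) := by
    apply ContinuousOn.sqrt
    apply ContinuousOn.log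
    · exact continuousOn_const.div continuousOn_id (fun x hx => (lt_of_lt_of_le ha hx.1).ne')
    · intro x hx
      exact (div_pos hc (lt_of_lt_of_le ha hx.1)).ne'
  have hpos : ∀ x : ℝ, 0 < Real.sqrt (Real.log (c / x)) + 1 := fun x => by positivity
  have key := intervalIntegral.integral_le_sub_of_hasDeriv_right_of_le
    (g := fun x => x * Real.sqrt (Real.log (c / x))
      + x * (3 / 2 / (Real.sqrt (Real.log (c / x)) + 1)))
    (g' := fun x => (1 * Real.sqrt (Real.log (c / x))
        + x * (-(1 / (2 * x * Real.sqrt (Real.log (c / x))))))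
      + (1 * (3 / 2 / (Real.sqrt (Real.log (c / x)) + 1))
        + x * ((0 * (Real.sqrt (Real.log (c / x)) + 1)
          - 3 / 2 * (-(1 / (2 * x * Real.sqrt (Real.log (c / x))))))
            / (Real.sqrt (Real.log (c / x)) + 1) ^ 2)))
    (φ := fun x => Real.sqrt (Real.log (c / x))) hab ?_ ?_ ?_ ?_
  · refine key.trans ?_
    have h1 : 3 / 2 / (Real.sqrt (Real.log (c / b)) + 1) ≤ Real.sqrt Real.pi := by
      have h2 : (3 / 2 : ℝ) ≤ Real.sqrt Real.pi := by
        apply Real.le_sqrt_of_sq_le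
        linarith [Real.pi_gt_three]
      refine le_trans (div_le_self (by norm_num) ?_) h2
      linarith [Real.sqrt_nonneg (Real.log (c / b))]
    have h3 : 0 ≤ a * (3 / 2 / (Real.sqrt (Real.log (c / a)) + 1)) := by positivity
    have h4 := mul_le_mul_of_nonneg_left h1 hb.le
    linarith
  · exact (continuousOn_id.mul hcont).add (continuousOn_id.mul
      (continuousOn_const.div (hcont.add continuousOn_const) (fun x _ => (hpos x).ne')))
  · intro x hx
    have hx0 : 0 < x := ha.trans hx.1
    have hL : 0 < Real.log (c / x) := Real.log_pos ((one_lt_div hx0).2 (hx.2.trans_le hbc))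
    have hs : HasDerivAt (fun x => Real.sqrt (Real.log (c / x)))
        (-(1 / (2 * x * Real.sqrt (Real.log (c / x))))) x := by
      have h1 : HasDerivAt (fun x => c / x) ((0 * x - c * 1) / x ^ 2) x :=
        (hasDerivAt_const x c).div (hasDerivAt_id x) hx0.ne'
      have h2 := (h1.log (div_pos hc hx0).ne').sqrt hL.ne'
      convert h2 using 1
      have := (Real.sqrt_pos.2 hL).ne'
      field_simp
      ring
    exact (((hasDerivAt_id x).mul hs).add ((hasDerivAt_id x).mul
      ((hasDerivAt_const x (3 / 2 : ℝ)).div (hs.add_const 1) (hpos x).ne'))).hasDerivWithinAt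
  · exact hcont.integrableOn_Icc
  · intro x hx
    have hx0 : 0 < x := ha.trans hx.1
    have hL : 0 < Real.log (c / x) := Real.log_pos ((one_lt_div hx0).2 (hx.2.trans_le hbc))
    have hs := Real.sqrt_pos.2 hL
    generalize Real.sqrt (Real.log (c / x)) = s at hs
    rw [← sub_nonneg]
    have : (1 * s + x * (-(1 / (2 * x * s)))) + (1 * (3 / 2 / (s + 1))
        + x * ((0 * (s + 1) - 3 / 2 * (-(1 / (2 * x * s)))) / (s + 1) ^ 2)) - s
        = (2 * s ^ 2 + s + 1 / 2) / (2 * s * (s + 1) ^ 2) := by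
      field_simp
      ring
    rw [this]
    positivity
end
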